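/- arXiv:2412.08105 — 3 statements merged into one kernel-verified Lean document; each statement's English description precedes it below -/
import Mathlib

section
/- Let X be a connected, infinite, locally finite simple graph and let G be a group of automorphisms of X acting faithfully and transitively on the vertices of X. If the commutator subgroup G' of G is cyclic of prime order p, then X has a two-way hamiltonian path. -/
/-!
Let `H` be a vertex stabiliser of `G`. The commutator subgroup `G'` has prime order `p` and acts
freely on the vertices, so the graph covers, with deck group `G'`, a translation-invariant graph on
the abelian group `A = G / G'H`. A cycle of the quotient is called good if its lift closes up only
up to a non-trivial deck transformation. As `p` is prime, that transformation generates `G'`, so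
the vertices above a good cycle form a single cycle, which can be traversed by a path from the fibre
of any element of the good cycle to the fibre of the next one.

A good cycle therefore serves as a brick: its translates tile a subgroup of `A`, or a few cosets of
one, and linking these bricks along a path that traverses a transversal in `A` gives a two-way
hamiltonian path. Such transversals exist since `A` is finitely generated and abelian.

It remains to find good cycles. An edge inside a fibre is one, and two edges from a vertex to the
same fibre (a digon) allow one to correct the lift of any cycle that uses this step. In the absence
of both, vertex stabilisers are trivial and the graph is a Cayley graph of `G`. As `G` is not
abelian, two generators `s` and `t` do not commute. According to the orders of their images in `A`:

* both finite: a hamiltonian cycle of a prism over `⟨s, t⟩`, in a direction of infinite order,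
  closes up with the commutator of `s` and `t`;
* one finite, one infinite: a ladder is good;
* both infinite and independent: a square is good;
* both infinite with `t ^ k = s ^ j` in `A`: if this relation fails in `G`, it is a good cycle
  itself. Otherwise a ladder along the powers of `t` is good and yields a hamiltonian path in the
  subgroup generated by the generators commensurable with `s`; the other generators centralise that
  subgroup, and the path extends to the box product.
-/

namespace TwoWayHamiltonian

/-! ### Two-way hamiltonian paths -/

section Paths

theorem exists_nat_seq {α : Type*} {P : ℕ → α → Prop} {R : ℕ → α → α → Prop} {x₀ : α}
    (h₀ : P 0 x₀) (hsucc : ∀ n x, P n x → ∃ y, P (n + 1) y ∧ R n x y) :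
    ∃ f : ℕ → α, f 0 = x₀ ∧ ∀ n, P n (f n) ∧ R n (f n) (f (n + 1)) := by
  choose next hnext hR using hsucc
  let u : (n : ℕ) → {x // P n x} :=
    fun n => Nat.rec ⟨x₀, h₀⟩ (fun n x => ⟨next n x.1 x.2, hnext n x.1 x.2⟩) n
  exact ⟨fun n => (u n).1, rfl, fun n => ⟨(u n).2, hR n (u n).1 (u n).2⟩⟩

theorem exists_int_seq {α : Type*} {P : ℤ → α → Prop} {R : ℤ → α → α → Prop}
    (h₀ : ∃ x, P 0 x) (hright : ∀ i x, P i x → ∃ y, P (i + 1) y ∧ R i x y)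
    (hleft : ∀ i y, P (i + 1) y → ∃ x, P i x ∧ R i x y) :
    ∃ f : ℤ → α, ∀ i, P i (f i) ∧ R i (f i) (f (i + 1)) := by
  obtain ⟨x₀, hx₀⟩ := h₀
  obtain ⟨u, hu₀, hu⟩ := exists_nat_seq (P := fun n => P n) (R := fun n => R n) hx₀
    fun n x hx => hright n x hx
  obtain ⟨d, hd₀, hd⟩ := exists_nat_seq (P := fun n => P (-n))
    (R := fun n x y => R (Int.negSucc n) y x) (x₀ := x₀) (by simpa only [Nat.cast_zero, neg_zero])
    fun n x hx => hleft (Int.negSucc n) x (by convert hx using 1; omega)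
  let f : ℤ → α
    | Int.ofNat n => u n
    | Int.negSucc n => d (n + 1)
  refine ⟨f, fun i => ?_⟩
  match i with
  | Int.ofNat n => exact hu n
  | Int.negSucc 0 =>
    have hf₀ : f 0 = d 0 := hu₀.trans hd₀.symm
    exact ⟨(hd 1).1, hf₀ ▸ (hd 0).2⟩
  | Int.negSucc (n + 1) => exact ⟨(hd (n + 2)).1, (hd (n + 1)).2⟩

theorem exists_offsets (len : ℤ → ℕ) (hpos : ∀ n, 0 < len n) :
    ∃ o : ℤ → ℤ, StrictMono o ∧ (∀ n, o (n + 1) = o n + len n) ∧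
      ∀ i, ∃ n, ∃ k < len n, i = o n + k := by
  obtain ⟨o, ho⟩ := exists_int_seq (P := fun _ _ => True)
    (R := fun n (x y : ℤ) => y = x + len n)
    ⟨0, trivial⟩ (fun n x _ => ⟨x + len n, trivial, rfl⟩)
    (fun n y _ => ⟨y - len n, trivial, (sub_add_cancel y _).symm⟩)
  have hstep : ∀ n, o (n + 1) = o n + len n := fun n => (ho n).2
  have hmono : StrictMono o := strictMono_int_of_lt_succ fun n => by
    have := hpos n
    have := hstep n
    omega
  refine ⟨o, hmono, hstep, fun i => ?_⟩
  obtain ⟨_, ⟨a, rfl⟩, ha⟩ := not_bddAbove_iff.1 hmono.not_bddAbove_range_of_isSuccArchimedean i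
  obtain ⟨_, ⟨b, rfl⟩, hb⟩ := not_bddBelow_iff.1 hmono.not_bddBelow_range_of_isPredArchimedean i
  obtain ⟨n, hn, hmax⟩ := Int.exists_greatest_of_bdd (P := fun n => o n ≤ i)
    ⟨a, fun z hz => (hmono.lt_iff_lt.1 (hz.trans_lt ha)).le⟩ ⟨b, hb.le⟩
  have hlt : i < o (n + 1) := not_le.1 fun h => by
    have := hmax _ h
    omega
  have := hstep n
  exact ⟨n, (i - o n).toNat, by omega, by omega⟩

/-- A two-way hamiltonian path in the graph `X`. -/
def HasTwoWayPath {V : Type*} (X : SimpleGraph V) : Prop :=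
  ∃ f : ℤ → V, Function.Bijective f ∧ ∀ i, X.Adj (f i) (f (i + 1))

variable {V W : Type*} {X : SimpleGraph V} {Y : SimpleGraph W}

theorem HasTwoWayPath.map (h : HasTwoWayPath X) (e : X →g Y) (he : Function.Bijective e) :
    HasTwoWayPath Y := by
  obtain ⟨f, hf, hadj⟩ := h
  exact ⟨e ∘ f, he.comp hf, fun i => e.map_adj (hadj i)⟩

theorem hasTwoWayPath_hasse_int : HasTwoWayPath (SimpleGraph.hasse ℤ) :=
  ⟨id, Function.bijective_id, fun i => Or.inl (Order.covBy_add_one i)⟩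

theorem adj_concat {L : ℤ → List V} (hne : ∀ n, L n ≠ [])
    (hchain : ∀ n, (L n).IsChain X.Adj)
    (hlink : ∀ n, X.Adj ((L n).getLast (hne n)) ((L (n + 1)).head (hne _)))
    {n : ℤ} {k : ℕ} (hk : k < (L n).length) {n' : ℤ} {k' : ℕ} (hk' : k' < (L n').length)
    (hnext : n' = n ∧ k' = k + 1 ∨ k + 1 = (L n).length ∧ n' = n + 1 ∧ k' = 0) :
    X.Adj (L n)[k] (L n')[k'] := by
  obtain ⟨rfl, rfl⟩ | ⟨hend, rfl, rfl⟩ := hnext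
  · exact List.isChain_iff_getElem.1 (hchain _) k hk'
  · have := hlink n
    rw [List.getLast_eq_getElem, List.head_eq_getElem] at this
    simpa only [← hend, Nat.add_sub_cancel] using this

theorem hasTwoWayPath_of_concat {L : ℤ → List V} (hne : ∀ n, L n ≠ [])
    (hchain : ∀ n, (L n).IsChain X.Adj) (hnodup : ∀ n, (L n).Nodup)
    (hpart : ∀ x, ∃! n, x ∈ L n)
    (hlink : ∀ n, X.Adj ((L n).getLast (hne n)) ((L (n + 1)).head (hne _))) :
    HasTwoWayPath X := by
  have hpos : ∀ n, 0 < (L n).length := fun n => List.length_pos_of_ne_nil (hne n)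
  obtain ⟨o, hmono, hstep, hdecomp⟩ := exists_offsets (fun n => (L n).length) hpos
  choose N k hk hNk using hdecomp
  have huniq : ∀ n j, j < (L n).length → N (o n + j) = n ∧ k (o n + j) = j := by
    intro n j hj
    have h₁ := hk (o n + j)
    have h₂ := hNk (o n + j)
    have h₃ := hstep n
    have h₄ := hstep (N (o n + j))
    have h₅ : n < N (o n + j) + 1 := hmono.lt_iff_lt.1 (by omega)
    have h₆ : N (o n + j) < n + 1 := hmono.lt_iff_lt.1 (by omega)
    have hN : N (o n + j) = n := by omega
    exact ⟨hN, by rw [hN] at h₂; omega⟩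
  refine ⟨fun i => (L (N i))[k i]'(hk i), ⟨fun i j hij => ?_, fun x => ?_⟩, fun i => ?_⟩
  · replace hij : (L (N i))[k i]'(hk i) = (L (N j))[k j]'(hk j) := hij
    have hN : N i = N j := (hpart _).unique (List.getElem_mem (hk i))
      (hij ▸ List.getElem_mem (hk j))
    have hk' : k i = k j := by
      refine ((hnodup (N j)).getElem_inj_iff (hi := hN ▸ hk i) (hj := hk j)).1 ?_
      simpa only [hN] using hij
    rw [hNk i, hNk j, hN, hk']
  · obtain ⟨n, hx, -⟩ := hpart x
    obtain ⟨j, hj, rfl⟩ := List.mem_iff_getElem.1 hx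
    exact ⟨o n + j, by simp only [huniq n j hj]⟩
  · refine adj_concat hne hchain hlink (hk i) (hk _) ?_
    have hi := hk i
    by_cases hlast : k i + 1 < (L (N i)).length
    · have := huniq _ _ hlast
      rw [show o (N i) + (k i + 1 : ℕ) = i + 1 by have := hNk i; omega] at this
      exact Or.inl this
    · have := huniq (N i + 1) 0 (hpos _)
      rw [show o (N i + 1) + (0 : ℕ) = i + 1 by have := hNk i; have := hstep (N i); omega] at this
      exact Or.inr ⟨by omega, this⟩

theorem hasTwoWayPath_of_zigzag {L : ℤ → List V} (hne : ∀ n, L n ≠ [])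
    (hchain : ∀ n, (L n).IsChain X.Adj) (hnodup : ∀ n, (L n).Nodup)
    (hpart : ∀ x, ∃! n, x ∈ L n)
    (hlast : ∀ n, X.Adj ((L n).getLast (hne n)) ((L (n + 1)).getLast (hne _)))
    (hhead : ∀ n, X.Adj ((L n).head (hne n)) ((L (n + 1)).head (hne _))) :
    HasTwoWayPath X := by
  have hreverse : ∀ {l : List V}, l.IsChain X.Adj → l.reverse.IsChain X.Adj := fun h =>
    List.isChain_reverse.2 (h.imp fun _ _ => X.adj_symm)
  refine hasTwoWayPath_of_concat (L := fun n => if Even n then L n else (L n).reverse)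
    (fun n => ?_) (fun n => ?_) (fun n => ?_) (fun x => ?_) (fun n => ?_)
  · split_ifs
    exacts [hne n, List.reverse_ne_nil_iff.2 (hne n)]
  · split_ifs
    exacts [hchain n, hreverse (hchain n)]
  · split_ifs
    exacts [hnodup n, List.nodup_reverse.2 (hnodup n)]
  · have hmem : ∀ n, (x ∈ if Even n then L n else (L n).reverse) ↔ x ∈ L n := fun n => by
      split_ifs
      exacts [Iff.rfl, List.mem_reverse]
    simpa only [hmem] using hpart x
  · by_cases hn : Even n
    · have : ¬Even (n + 1) := by simpa [Int.even_add_one] using hn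
      simpa only [hn, this, if_true, if_false, List.head_reverse] using hlast n
    · have : Even (n + 1) := by simpa [Int.even_add_one] using hn
      simpa only [hn, this, if_true, if_false, List.getLast_reverse] using hhead n

/-- A graph is traceable if it has a hamiltonian path, which is either finite or two-way
infinite. -/
def Traceable (X : SimpleGraph V) : Prop :=
  (∃ l : List V, l ≠ [] ∧ l.Nodup ∧ (∀ x, x ∈ l) ∧ l.IsChain X.Adj) ∨ HasTwoWayPath X

theorem Traceable.map (h : Traceable X) (e : X →g Y) (he : Function.Bijective e) :
    Traceable Y := by
  rcases h with ⟨l, hne, hnodup, hcover, hchain⟩ | h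
  · refine Or.inl ⟨l.map e, by simpa only [ne_eq, List.map_eq_nil_iff], hnodup.map he.1,
      fun y => ?_, (List.isChain_map e).2 (hchain.imp fun _ _ => e.map_adj)⟩
    obtain ⟨x, rfl⟩ := he.2 y
    exact List.mem_map_of_mem (hcover x)
  · exact Or.inr (h.map e he)

theorem Traceable.hasTwoWayPath [Infinite V] (h : Traceable X) : HasTwoWayPath X := by
  rcases h with ⟨l, -, -, hcover, -⟩ | h
  · exact absurd (l.finite_toSet.subset fun x _ => hcover x) Set.infinite_univ
  · exact h

theorem exists_boustrophedon (rows : List V) (hrows : rows.Nodup) (hX : rows.IsChain X.Adj)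
    (cols : List W) (hne : cols ≠ []) (hcols : cols.Nodup) (hY : cols.IsChain Y.Adj) :
    ∃ l : List (V × W), l.Nodup ∧ (∀ x, x ∈ l ↔ x.1 ∈ rows ∧ x.2 ∈ cols) ∧
      l.IsChain (X □ Y).Adj ∧ ∀ x ∈ l.head?, x.1 ∈ rows.head? ∧ x.2 ∈ cols.head? := by
  induction rows generalizing cols with
  | nil => exact ⟨[], by simp⟩
  | cons r rows ih =>
    obtain ⟨hr, hrows⟩ := List.nodup_cons.1 hrows
    obtain ⟨l, hnodup, hmem, hchain, hhead⟩ := ih hrows hX.tail cols.reverse (by simpa) (by simpa)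
      (List.isChain_reverse.2 (hY.imp fun _ _ => Y.adj_symm))
    refine ⟨cols.map (Prod.mk r) ++ l, ?_, ?_, ?_, ?_⟩
    · refine (hcols.map fun _ _ h => (Prod.mk.inj h).2).append hnodup fun x hx hx' => ?_
      obtain ⟨c, -, rfl⟩ := List.mem_map.1 hx
      exact hr ((hmem _).1 hx').1
    · rintro ⟨a, b⟩
      simp only [List.mem_append, List.mem_map, hmem, List.mem_cons, List.mem_reverse,
        Prod.mk.injEq]
      grind
    · refine List.isChain_append.2 ⟨(List.isChain_map _).2 (hY.imp fun _ _ h =>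
        SimpleGraph.boxProd_adj.2 (Or.inr ⟨h, rfl⟩)), hchain, fun x hx y hy => ?_⟩
      obtain ⟨hrow, hcol⟩ := hhead y hy
      rw [List.head?_reverse] at hcol
      rw [List.getLast?_map] at hx
      obtain ⟨c, hc, rfl⟩ := Option.mem_map.1 hx
      exact SimpleGraph.boxProd_adj.2
        (Or.inl ⟨(List.isChain_cons.1 hX).1 _ hrow, Option.mem_unique hc hcol⟩)
    · intro x hx
      obtain ⟨c, cs, rfl⟩ := List.exists_cons_of_ne_nil hne
      obtain rfl : (r, c) = x := by simpa using hx
      exact ⟨rfl, rfl⟩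

theorem HasTwoWayPath.list_boxProd {l : List V} (hne : l ≠ []) (hnodup : l.Nodup)
    (hcover : ∀ x, x ∈ l) (hchain : l.IsChain X.Adj) (h : HasTwoWayPath Y) :
    HasTwoWayPath (X □ Y) := by
  obtain ⟨f, ⟨hinj, hsurj⟩, hadj⟩ := h
  refine hasTwoWayPath_of_zigzag (L := fun n => l.map fun x => (x, f n))
    (fun n => by simpa only [ne_eq, List.map_eq_nil_iff])
    (fun n => (List.isChain_map _).2 (hchain.imp fun _ _ h =>
      SimpleGraph.boxProd_adj.2 (Or.inl ⟨h, rfl⟩)))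
    (fun n => hnodup.map fun _ _ h => (Prod.mk.inj h).1) (fun ⟨x, y⟩ => ?_) (fun n => ?_)
    (fun n => ?_)
  · obtain ⟨n, rfl⟩ := hsurj y
    refine ⟨n, List.mem_map_of_mem (hcover x), fun m hm => ?_⟩
    obtain ⟨_, -, heq⟩ := List.mem_map.1 hm
    exact hinj (Prod.mk.inj heq).2
  · simp only [List.getLast_map, SimpleGraph.boxProd_adj, hadj n, and_self, or_true]
  · simp only [List.head_map, SimpleGraph.boxProd_adj, hadj n, and_self, or_true]

section Plane

/-- The radius of the half-square arc of index `m` in `ℤ × ℤ`. -/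
def arcRadius (m : ℤ) : ℕ := (max m (-1 - m)).toNat

/-- The `k`-th point of the half-square arc of index `m` in `ℤ × ℤ`: for `m ≥ 0` the arc consists
of the points with `x ≥ 0` and `max x |y| = m`, traversed from `(0, -m)` to `(0, m)`; for `m < 0`
it is the mirror image of the arc of index `-1 - m` under `x ↦ -1 - x`. -/
def arcPoint (m : ℤ) (k : ℕ) : ℤ × ℤ :=
  let n : ℤ := arcRadius m
  let x := min (min (k : ℤ) n) (4 * n - k)
  (if 0 ≤ m then x else -1 - x, max (-n) (min n (k - 2 * n)))

/-- The half-square arc of index `m`, see `arcPoint`. -/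
def arc (m : ℤ) : List (ℤ × ℤ) := (List.range (4 * arcRadius m + 1)).map (arcPoint m)

theorem mem_arc {m : ℤ} {x : ℤ × ℤ} : x ∈ arc m ↔ ∃ k ≤ 4 * arcRadius m, arcPoint m k = x := by
  simp only [arc, List.mem_map, List.mem_range, Nat.lt_succ_iff]

theorem hasse_int_adj {i j : ℤ} : (SimpleGraph.hasse ℤ).Adj i j ↔ j = i + 1 ∨ i = j + 1 := by
  simp only [SimpleGraph.hasse_adj, Order.covBy_iff_add_one_eq, eq_comm]

theorem adj_of_hasse_int_adj {f : ℤ → V} (hf : ∀ i, X.Adj (f i) (f (i + 1))) {i j : ℤ}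
    (hij : (SimpleGraph.hasse ℤ).Adj i j) : X.Adj (f i) (f j) := by
  rcases hasse_int_adj.1 hij with rfl | rfl
  exacts [hf _, (hf _).symm]

theorem arcPoint_inj {m n : ℤ} {k j : ℕ} (hk : k ≤ 4 * arcRadius m) (hj : j ≤ 4 * arcRadius n)
    (h : arcPoint m k = arcPoint n j) : m = n ∧ k = j := by
  simp only [arcPoint, Prod.mk.injEq, arcRadius] at *
  split_ifs at h <;> omega

theorem exists_arcPoint_eq (x y : ℤ) : ∃ m, ∃ k ≤ 4 * arcRadius m, arcPoint m k = (x, y) := by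
  let x' : ℤ := if 0 ≤ x then x else -1 - x
  let n : ℤ := max x' (max y (-y))
  let k : ℤ := if x' = n then y + 2 * n else if y < 0 then x' else 4 * n - x'
  refine ⟨if 0 ≤ x then n else -1 - n, k.toNat, ?_, ?_⟩
  · simp only [k, n, x', arcRadius]
    split_ifs <;> omega
  · simp only [k, n, x', arcPoint, arcRadius, Prod.mk.injEq]
    split_ifs <;> omega

theorem hasTwoWayPath_int_prod_int :
    HasTwoWayPath (SimpleGraph.hasse ℤ □ SimpleGraph.hasse ℤ) := by
  refine hasTwoWayPath_of_zigzag (L := arc) (fun m => by simp [arc])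
    (fun m => ?_) (fun m => ?_) (fun ⟨x, y⟩ => ?_) (fun m => ?_) (fun m => ?_)
  · refine (List.isChain_map _).2 (List.isChain_iff_getElem.2 fun k hk => ?_)
    rw [List.length_range] at hk
    simp only [List.getElem_range, SimpleGraph.boxProd_adj, hasse_int_adj, arcPoint, arcRadius] at *
    split_ifs <;> omega
  · refine List.Nodup.map_on (fun k hk j hj h => ?_) List.nodup_range
    rw [List.mem_range, Nat.lt_succ_iff] at hk hj
    exact (arcPoint_inj hk hj h).2
  · obtain ⟨m, k, hk, hxy⟩ := exists_arcPoint_eq x y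
    refine ⟨m, mem_arc.2 ⟨k, hk, hxy⟩, fun n hn => ?_⟩
    obtain ⟨j, hj, hxy'⟩ := mem_arc.1 hn
    exact (arcPoint_inj hj hk (hxy'.trans hxy.symm)).1
  · simp only [arc, List.getLast_map, List.getLast_range, SimpleGraph.boxProd_adj, hasse_int_adj,
      arcPoint, arcRadius, Nat.add_sub_cancel]
    split_ifs <;> omega
  · simp only [arc, List.head_map, List.head_range, SimpleGraph.boxProd_adj, hasse_int_adj,
      arcPoint, arcRadius]
    split_ifs <;> omega

end Plane

theorem HasTwoWayPath.boxProd (hX : HasTwoWayPath X) (hY : HasTwoWayPath Y) :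
    HasTwoWayPath (X □ Y) := by
  obtain ⟨f, hf, hfadj⟩ := hX
  obtain ⟨g, hg, hgadj⟩ := hY
  refine hasTwoWayPath_int_prod_int.map ⟨Prod.map f g, fun {x y} hxy => ?_⟩ (hf.prodMap hg)
  rcases SimpleGraph.boxProd_adj.1 hxy with ⟨h, heq⟩ | ⟨h, heq⟩
  · exact SimpleGraph.boxProd_adj.2 (Or.inl ⟨adj_of_hasse_int_adj hfadj h, congrArg g heq⟩)
  · exact SimpleGraph.boxProd_adj.2 (Or.inr ⟨adj_of_hasse_int_adj hgadj h, congrArg f heq⟩)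

theorem Traceable.boxProd (hX : Traceable X) (hY : Traceable Y) : Traceable (X □ Y) := by
  rcases hX with ⟨l, hl, hnodup, hcover, hchain⟩ | hX
  · rcases hY with ⟨l', hl', hnodup', hcover', hchain'⟩ | hY
    · obtain ⟨w, hw, hmem, hwchain, -⟩ :=
        exists_boustrophedon l hnodup hchain l' hl' hnodup' hchain'
      have hwcover : ∀ x, x ∈ w := fun x => (hmem x).2 ⟨hcover _, hcover' _⟩
      exact Or.inl ⟨w, List.ne_nil_of_mem (hwcover (l.head hl, l'.head hl')), hw, hwcover,
        hwchain⟩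
    · exact Or.inr (hY.list_boxProd hl hnodup hcover hchain)
  · rcases hY with ⟨l', hl', hnodup', hcover', hchain'⟩ | hY
    · exact Or.inr ((hX.list_boxProd hl' hnodup' hcover' hchain').map
        (SimpleGraph.boxProdComm Y X).toHom (SimpleGraph.boxProdComm Y X).bijective)
    · exact Or.inr (hX.boxProd hY)

end Paths

/-! ### Tilings of abelian groups along paths -/

section Tilings

variable {A : Type*} [CommGroup A]

/-- The translates of `B` by suitable elements, indexed by the vertices of a traceable graph,
partition `C`, and the translations to adjacent tiles differ by an element of `S`. -/
def PathTiling (S C B : Set A) : Prop :=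
  ∃ (J : Type) (I : SimpleGraph J) (r : J → A), Traceable I ∧
    (∀ i j, I.Adj i j → (r i)⁻¹ * r j ∈ S) ∧ (∀ x, x ∈ C ↔ ∃ j, (r j)⁻¹ * x ∈ B) ∧
    ∀ x i j, (r i)⁻¹ * x ∈ B → (r j)⁻¹ * x ∈ B → i = j

variable {S S' C B D : Set A}

theorem PathTiling.refl (S B : Set A) : PathTiling S B B :=
  ⟨Unit, ⊥, fun _ => 1, Or.inl ⟨[()], by simp⟩, by simp, by simp, by simp⟩

theorem PathTiling.mono (h : PathTiling S C B) (hS : S ⊆ S') : PathTiling S' C B := by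
  obtain ⟨J, I, r, hI, hr, hmem, huniq⟩ := h
  exact ⟨J, I, r, hI, fun i j hij => hS (hr i j hij), hmem, huniq⟩

theorem PathTiling.trans (h : PathTiling S C B) (h' : PathTiling S B D) : PathTiling S C D := by
  obtain ⟨J, I, r, hI, hr, hmem, huniq⟩ := h
  obtain ⟨J', I', r', hI', hr', hmem', huniq'⟩ := h'
  refine ⟨J × J', I □ I', fun j => r j.1 * r' j.2, hI.boxProd hI', ?_, fun x => ?_, ?_⟩
  · rintro ⟨i, i'⟩ ⟨j, j'⟩ hij
    rcases SimpleGraph.boxProd_adj.1 hij with ⟨hij, rfl : i' = j'⟩ | ⟨hij, rfl : i = j⟩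
    · simpa only [← div_eq_inv_mul, mul_div_mul_right_eq_div] using hr _ _ hij
    · simpa only [← div_eq_inv_mul, mul_div_mul_left_eq_div] using hr' _ _ hij
  · simp only [hmem, hmem', Prod.exists, mul_inv_rev, mul_assoc]
  · rintro x ⟨i, i'⟩ ⟨j, j'⟩ hi hj
    simp only [mul_inv_rev, mul_assoc] at hi hj
    obtain rfl := huniq x i j ((hmem' _).2 ⟨i', hi⟩) ((hmem' _).2 ⟨j', hj⟩)
    rw [huniq' _ i' j' hi hj]

theorem pathTiling_of_zpow {t : A} (hC : ∀ x, x ∈ C ↔ ∃ n : ℤ, (t ^ n)⁻¹ * x ∈ B)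
    (huniq : ∀ x (m n : ℤ), (t ^ m)⁻¹ * x ∈ B → (t ^ n)⁻¹ * x ∈ B → m = n) :
    PathTiling {t, t⁻¹} C B := by
  refine ⟨ℤ, SimpleGraph.hasse ℤ, fun n => t ^ n, Or.inr hasTwoWayPath_hasse_int, ?_, hC, huniq⟩
  rintro i j hij
  rw [← zpow_neg, ← zpow_add]
  rcases hasse_int_adj.1 hij with rfl | rfl
  · left
    rw [neg_add_cancel_left, zpow_one]
  · right
    rw [neg_add_rev, neg_add_cancel_right, zpow_neg_one, Set.mem_singleton_iff]

theorem traceable_pathGraph {n : ℕ} (hn : 0 < n) : Traceable (SimpleGraph.pathGraph n) := by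
  refine Or.inl ⟨List.finRange n, fun h => ?_, List.nodup_finRange n, List.mem_finRange,
    List.isChain_iff_getElem.2 fun k hk => ?_⟩
  · simp only [List.finRange_eq_nil_iff] at h
    omega
  · simp [SimpleGraph.pathGraph_adj]

theorem mem_sup_zpowers {K : Subgroup A} {t x : A} :
    x ∈ K ⊔ Subgroup.zpowers t ↔ ∃ n : ℤ, (t ^ n)⁻¹ * x ∈ K := by
  simp only [Subgroup.mem_sup, Subgroup.exists_mem_zpowers]
  constructor
  · rintro ⟨y, hy, n, rfl⟩
    exact ⟨n, by rwa [mul_comm y, inv_mul_cancel_left]⟩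
  · rintro ⟨n, hn⟩
    exact ⟨_, hn, n, by rw [mul_comm, mul_inv_cancel_left]⟩

theorem pathTiling_sup_zpowers (K : Subgroup A) (t : A) :
    PathTiling {t, t⁻¹} (K ⊔ Subgroup.zpowers t : Subgroup A) K := by
  have hcoset : ∀ {x y : A}, y⁻¹ * x ∈ K ↔ (y : A ⧸ K) = x := QuotientGroup.eq.symm
  by_cases ht : IsOfFinOrder (t : A ⧸ K)
  · refine ⟨Fin (orderOf (t : A ⧸ K)), SimpleGraph.pathGraph _, fun i => t ^ (i : ℕ),
      traceable_pathGraph ht.orderOf_pos, ?_, fun x => ?_, ?_⟩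
    · intro i j hij
      rcases SimpleGraph.pathGraph_adj.1 hij with h | h
      · exact Or.inl (by simp only [← h, pow_succ, inv_mul_cancel_left])
      · exact Or.inr (by simp only [Set.mem_singleton_iff, ← h, pow_succ', mul_inv_rev,
          inv_mul_cancel_comm])
    · simp only [SetLike.mem_coe, mem_sup_zpowers, hcoset, QuotientGroup.mk_zpow,
        QuotientGroup.mk_pow]
      constructor
      · rintro ⟨n, hn⟩
        obtain ⟨k, hk : (t : A ⧸ K) ^ k = x⟩ := ht.mem_powers_iff_mem_zpowers.2 ⟨n, hn⟩
        exact ⟨⟨k % _, Nat.mod_lt k ht.orderOf_pos⟩, by rw [pow_mod_orderOf, hk]⟩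
      · rintro ⟨j, hj⟩
        exact ⟨j, by rwa [zpow_natCast]⟩
    · intro x i j hi hj
      simp only [SetLike.mem_coe, hcoset, QuotientGroup.mk_pow] at hi hj
      exact Fin.ext (pow_injOn_Iio_orderOf i.2 j.2 (hi.trans hj.symm))
  · refine pathTiling_of_zpow (fun _ => mem_sup_zpowers) fun x m n hm hn => ?_
    simp only [SetLike.mem_coe, hcoset, QuotientGroup.mk_zpow] at hm hn
    exact injective_zpow_iff_not_isOfFinOrder.2 ht (hm.trans hn.symm)

theorem pathTiling_sup_closure (K : Subgroup A) (hS : S.Finite) :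
    PathTiling (S ∪ S⁻¹) (K ⊔ Subgroup.closure S : Subgroup A) K := by
  induction S, hS using Set.Finite.induction_on with
  | empty => simpa only [Subgroup.closure_empty, sup_bot_eq] using PathTiling.refl _ _
  | @insert t S _ _ ih =>
    have hsup : K ⊔ Subgroup.closure (insert t S) =
        K ⊔ Subgroup.closure S ⊔ Subgroup.zpowers t := by
      rw [← Set.union_singleton, Subgroup.closure_union, Subgroup.zpowers_eq_closure, sup_assoc]
    rw [hsup]
    refine ((pathTiling_sup_zpowers _ t).mono ?_).trans (ih.mono ?_)
    · rintro x (rfl | rfl) <;> simp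
    · rintro x (hx | hx)
      exacts [Or.inl (Or.inr hx), Or.inr (Or.inr hx)]

theorem pathTiling_univ {K : Subgroup A} (hS : S.Finite) (hinv : ∀ s ∈ S, s⁻¹ ∈ S)
    (hK : K ⊔ Subgroup.closure S = ⊤) : PathTiling S Set.univ K := by
  have := pathTiling_sup_closure K hS
  rw [hK, Subgroup.coe_top] at this
  refine this.mono (Set.union_subset subset_rfl fun s hs => ?_)
  simpa only [inv_inv] using hinv _ hs

theorem pathTiling_two_cosets {K : Subgroup A} {t : A} (ht : ∀ n : ℤ, t ^ n ∈ K → n = 0) :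
    PathTiling {t ^ 2, (t ^ 2)⁻¹} (K ⊔ Subgroup.zpowers t : Subgroup A)
      {x | x ∈ K ∨ t⁻¹ * x ∈ K} := by
  have hmem : ∀ x (n : ℤ), ((t ^ 2) ^ n)⁻¹ * x ∈ {x | x ∈ K ∨ t⁻¹ * x ∈ K} ↔
      (t ^ (2 * n))⁻¹ * x ∈ K ∨ (t ^ (2 * n + 1))⁻¹ * x ∈ K := fun x n => by
    rw [Set.mem_ofPred_eq, ← mul_assoc, ← mul_inv, ← zpow_natCast, ← zpow_mul, zpow_add_one,
      mul_comm _ t, Nat.cast_ofNat]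
  have huniq : ∀ x (m n : ℤ), (t ^ m)⁻¹ * x ∈ K → (t ^ n)⁻¹ * x ∈ K → m = n := by
    intro x m n hm hn
    refine sub_eq_zero.1 (ht (m - n) ?_)
    have hmn : t ^ (m - n) = (t ^ n)⁻¹ * x * ((t ^ m)⁻¹ * x)⁻¹ := by
      rw [← div_eq_mul_inv, mul_div_mul_right_eq_div, zpow_sub, div_inv_eq_mul, mul_comm]
    exact hmn ▸ K.mul_mem hn (K.inv_mem hm)
  refine pathTiling_of_zpow (fun x => ?_) fun x m n hm hn => ?_
  · simp only [hmem, SetLike.mem_coe, mem_sup_zpowers]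
    constructor
    · rintro ⟨n, hn⟩
      obtain ⟨m, rfl | rfl⟩ := n.even_or_odd'
      exacts [⟨m, Or.inl hn⟩, ⟨m, Or.inr hn⟩]
    · rintro ⟨n, hn | hn⟩
      exacts [⟨_, hn⟩, ⟨_, hn⟩]
  · rw [hmem] at hm hn
    rcases hm with hm | hm <;> rcases hn with hn | hn <;> have := huniq x _ _ hm hn <;> omega

theorem PathTiling.union_translate {t : A} (h : PathTiling S C B) (ht : ∀ x ∈ C, t⁻¹ * x ∉ C) :
    PathTiling S {x | x ∈ C ∨ t⁻¹ * x ∈ C} {x | x ∈ B ∨ t⁻¹ * x ∈ B} := by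
  obtain ⟨J, I, r, hI, hr, hmem, huniq⟩ := h
  refine ⟨J, I, r, hI, hr, fun x => ?_, fun x i j hi hj => ?_⟩
  · simp only [Set.mem_ofPred_eq, hmem, ← exists_or, mul_left_comm]
  · have hC : ∀ {k y}, (r k)⁻¹ * y ∈ B → y ∈ C := fun hk => (hmem _).2 ⟨_, hk⟩
    simp only [Set.mem_ofPred_eq, mul_left_comm t⁻¹] at hi hj
    rcases hi with hi | hi <;> rcases hj with hj | hj
    exacts [huniq _ _ _ hi hj, (ht x (hC hi) (hC hj)).elim, (ht x (hC hj) (hC hi)).elim,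
      huniq _ _ _ hi hj]

theorem pathTiling_square {a b : A} (hab : ∀ m n : ℤ, a ^ m * b ^ n = 1 → m = 0 ∧ n = 0) :
    PathTiling {a ^ 2, (a ^ 2)⁻¹, b ^ 2, (b ^ 2)⁻¹}
      (Subgroup.zpowers b ⊔ Subgroup.zpowers a : Subgroup A) {x | x ∈ [1, a, a * b, b]} := by
  have hb : ∀ n : ℤ, b ^ n ∈ (⊥ : Subgroup A) → n = 0 := fun n hn =>
    (hab 0 n (by rwa [zpow_zero, one_mul])).2
  have ha : ∀ n : ℤ, a ^ n ∈ Subgroup.zpowers b → n = 0 := fun n ⟨m, hm⟩ =>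
    (hab n (-m) (by rw [zpow_neg, ← hm]; exact mul_inv_cancel _)).1
  have hdisj : ∀ x ∈ Subgroup.zpowers b, a⁻¹ * x ∉ Subgroup.zpowers b := fun x hx hax => by
    have := ha (-1) (by rwa [zpow_neg_one, ← Subgroup.mul_mem_cancel_right _ hx])
    omega
  have htiling := pathTiling_two_cosets hb
  rw [bot_sup_eq] at htiling
  refine ((pathTiling_two_cosets ha).mono ?_).trans
    (((htiling.union_translate hdisj).mono ?_).trans ?_)
  · rintro x (rfl | rfl) <;> simp
  · rintro x (rfl | rfl) <;> simp
  · convert PathTiling.refl _ _ using 1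
    ext x
    simp only [Subgroup.mem_bot, Set.mem_ofPred_eq, inv_mul_eq_iff_eq_mul, mul_one, List.mem_cons,
      List.not_mem_nil]
    tauto

theorem PathTiling.exists_transversal {D : Subgroup A} [Finite (A ⧸ D)]
    (h : PathTiling S Set.univ D) : ∃ T : List A, T ≠ [] ∧ T.IsChain (fun s t => s⁻¹ * t ∈ S) ∧
      T.Nodup ∧ ∀ x, ∃! t, t ∈ T ∧ t⁻¹ * x ∈ D := by
  obtain ⟨J, I, r, hI, hr, hmem, huniq⟩ := h
  have hinj : ∀ {i j}, (r i)⁻¹ * r j ∈ D → i = j := fun {i j} hij =>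
    huniq (r j) i j hij (by rw [inv_mul_cancel]; exact D.one_mem)
  have : Finite J := Finite.of_injective (fun j => (r j : A ⧸ D)) fun i j hij =>
    hinj (QuotientGroup.eq.1 hij)
  rcases hI with ⟨l, hl, hnodup, hall, hchain⟩ | ⟨f, hf, -⟩
  · refine ⟨l.map r, by simpa only [ne_eq, List.map_eq_nil_iff],
      (List.isChain_map r).2 (hchain.imp fun _ _ => hr _ _), hnodup.map fun i j hij => ?_,
      fun x => ?_⟩
    · exact hinj (by rw [hij, inv_mul_cancel]; exact D.one_mem)
    · obtain ⟨j, hj⟩ := (hmem x).1 trivial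
      refine ⟨r j, ⟨List.mem_map_of_mem (hall j), hj⟩, ?_⟩
      rintro _ ⟨ht, htx⟩
      obtain ⟨i, -, rfl⟩ := List.mem_map.1 ht
      rw [huniq x i j htx hj]
  · exact (not_injective_infinite_finite f hf.1).elim

theorem existsUnique_zpow_of_transversal {D : Subgroup A} {T : Set A}
    (hT : ∀ x, ∃! t, t ∈ T ∧ t⁻¹ * x ∈ D) (hBD : B ⊆ D) {g : A} (hg : g ∈ D)
    (hB : ∀ x ∈ D, ∃! n : ℤ, (g ^ n)⁻¹ * x ∈ B) (x : A) :
    ∃! n : ℤ, (g ^ n)⁻¹ * x ∈ {u | ∃ t ∈ T, t⁻¹ * u ∈ B} := by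
  obtain ⟨t, ⟨ht, htD⟩, htuniq⟩ := hT x
  obtain ⟨n, hn, hnuniq⟩ := hB _ htD
  refine ⟨n, ⟨t, ht, by rwa [mul_left_comm]⟩, ?_⟩
  rintro m ⟨s, hs, hsm⟩
  rw [mul_left_comm] at hsm
  obtain rfl : s = t := htuniq s ⟨hs, (D.mul_mem_cancel_left
    (D.inv_mem (D.zpow_mem hg m))).1 (hBD hsm)⟩
  exact hnuniq m hsm

theorem existsUnique_zpow_sq {g : A} (h : ∀ x, ∃! n : ℤ, (g ^ n)⁻¹ * x ∈ B) (x : A) :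
    ∃! n : ℤ, ((g ^ 2) ^ n)⁻¹ * x ∈ B ∪ {u | g⁻¹ * u ∈ B} := by
  have hmem : ∀ n : ℤ, ((g ^ 2) ^ n)⁻¹ * x ∈ B ∪ {u | g⁻¹ * u ∈ B} ↔
      (g ^ (2 * n))⁻¹ * x ∈ B ∨ (g ^ (2 * n + 1))⁻¹ * x ∈ B := fun n => by
    rw [Set.mem_union, Set.mem_ofPred_eq, ← mul_assoc g⁻¹, ← mul_inv, ← zpow_natCast, ← zpow_mul,
      zpow_add_one, mul_comm _ g, Nat.cast_ofNat]
  obtain ⟨n, hn, huniq⟩ := h x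
  simp only [hmem]
  obtain ⟨m, hm⟩ := n.even_or_odd'
  refine ⟨m, ?_, ?_⟩
  · rcases hm with rfl | rfl
    exacts [Or.inl hn, Or.inr hn]
  · rintro m' (hm' | hm') <;> have := huniq _ hm' <;> lia

end Tilings

/-! ### Covers of abelian groups with deck group of prime order -/

/-- A graph on `V` with an action of `G`, fibred by `π` over the abelian group `A` equivariantly
with respect to the surjection `φ : G →* A`. The fibres are the orbits of the deck group `C`, which
has prime order, lies in the kernel of `φ` and acts freely. -/
structure PrimeCover (V G A : Type*) [Group G] [MulAction G V] [CommGroup A] where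
  /-- the graph upstairs -/
  graph : SimpleGraph V
  smul_adj : ∀ (g : G) {v w : V}, graph.Adj v w → graph.Adj (g • v) (g • w)
  /-- the projection of groups -/
  φ : G →* A
  φ_surjective : Function.Surjective φ
  /-- the projection of vertices -/
  π : V → A
  π_surjective : Function.Surjective π
  π_smul : ∀ (g : G) (v : V), π (g • v) = φ g * π v
  /-- the deck group -/
  C : Subgroup G
  prime_card : (Nat.card C).Prime
  φ_eq_one : ∀ c ∈ C, φ c = 1
  exists_smul_eq : ∀ v w, π v = π w → ∃ c ∈ C, c • v = w
  eq_one_of_smul_eq : ∀ c ∈ C, ∀ v : V, c • v = v → c = 1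

namespace PrimeCover

variable {V G A : Type*} [Group G] [MulAction G V] [CommGroup A] {K : PrimeCover V G A}

section Traversals

theorem π_smul_of_mem {c : G} (hc : c ∈ K.C) (v : V) : K.π (c • v) = K.π v := by
  rw [K.π_smul, K.φ_eq_one c hc, one_mul]

theorem isChain_smul {L : List V} (h : L.IsChain K.graph.Adj) (g : G) :
    (L.map (g • ·)).IsChain K.graph.Adj :=
  (List.isChain_map _).2 (h.imp fun _ _ => K.smul_adj g)

variable (K) in
/-- Two elements of `A` are a step apart if some vertices above them are adjacent. -/
def Step (α β : A) : Prop := ∃ v w, K.π v = α ∧ K.π w = β ∧ K.graph.Adj v w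

theorem Step.symm {α β : A} (h : K.Step α β) : K.Step β α := by
  obtain ⟨v, w, hv, hw, hadj⟩ := h
  exact ⟨w, v, hw, hv, hadj.symm⟩

theorem Step.mul_left {α β : A} (h : K.Step α β) (x : A) : K.Step (x * α) (x * β) := by
  obtain ⟨v, w, rfl, rfl, hadj⟩ := h
  obtain ⟨g, rfl⟩ := K.φ_surjective x
  exact ⟨g • v, g • w, K.π_smul _ _, K.π_smul _ _, K.smul_adj g hadj⟩

theorem step_mul_right {s : A} (hs : K.Step 1 s) (α : A) : K.Step α (α * s) := by
  simpa only [mul_one] using hs.mul_left α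

theorem Step.inv {s : A} (hs : K.Step 1 s) : K.Step 1 s⁻¹ := by
  simpa only [inv_mul_cancel] using (step_mul_right hs s⁻¹).symm

theorem Step.exists_adj {α β : A} (h : K.Step α β) {v : V} (hv : K.π v = α) :
    ∃ w, K.π w = β ∧ K.graph.Adj v w := by
  obtain ⟨v', w, hv', hw, hadj⟩ := h
  obtain ⟨c, hc, rfl⟩ := K.exists_smul_eq v' v (hv'.trans hv.symm)
  exact ⟨c • w, by rw [π_smul_of_mem hc, hw], K.smul_adj c hadj⟩

variable (K) in
/-- `L` is a path which visits exactly the vertices above `B`, once each. -/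
def IsTraversal (B : Set A) (L : List V) : Prop :=
  L.IsChain K.graph.Adj ∧ L.Nodup ∧ ∀ x, x ∈ L ↔ K.π x ∈ B

theorem IsTraversal.smul {B B' : Set A} {L : List V} (h : K.IsTraversal B L) (g : G)
    (hB : ∀ y, K.φ g * y ∈ B' ↔ y ∈ B) : K.IsTraversal B' (L.map (g • ·)) := by
  refine ⟨isChain_smul h.1 g, h.2.1.map (MulAction.injective g), fun x => ?_⟩
  rw [show x = g • g⁻¹ • x from (smul_inv_smul g x).symm, K.π_smul, hB,
    List.mem_map_of_injective (MulAction.injective g), h.2.2]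

theorem IsTraversal.reverse {B : Set A} {L : List V} (h : K.IsTraversal B L) :
    K.IsTraversal B L.reverse :=
  ⟨List.isChain_reverse.2 (h.1.imp fun _ _ => K.graph.adj_symm), List.nodup_reverse.2 h.2.1,
    fun x => by rw [List.mem_reverse, h.2.2]⟩

variable (K) in
/-- From every vertex above `α` starts a traversal of `B` that ends above `β`. -/
def Tr (B : Set A) (α β : A) : Prop :=
  ∀ v, K.π v = α → ∃ L, ∃ hL : L ≠ [], K.IsTraversal B L ∧ L.head hL = v ∧
    K.π (L.getLast hL) = β

variable {B B' : Set A} {α β γ δ : A}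

theorem Tr.of_exists {L : List V} (hL : L ≠ []) (h : K.IsTraversal B L)
    (hα : K.π (L.head hL) = α) (hβ : K.π (L.getLast hL) = β) : K.Tr B α β := by
  intro v hv
  obtain ⟨c, hc, rfl⟩ := K.exists_smul_eq _ v (hα.trans hv.symm)
  refine ⟨L.map (c • ·), by simpa only [ne_eq, List.map_eq_nil_iff], h.smul c fun y => ?_, ?_, ?_⟩
  · rw [K.φ_eq_one c hc, one_mul]
  · rw [List.head_map]
  · rw [List.getLast_map, π_smul_of_mem hc, hβ]

theorem Tr.symm (h : K.Tr B α β) : K.Tr B β α := by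
  obtain ⟨v, hv⟩ := K.π_surjective α
  obtain ⟨L, hL, htrav, hhead, hlast⟩ := h v hv
  refine Tr.of_exists (List.reverse_ne_nil_iff.2 hL) htrav.reverse ?_ ?_
  · rw [List.head_reverse, hlast]
  · rw [List.getLast_reverse, hhead, hv]

theorem Tr.exists_to (h : K.Tr B α β) {w : V} (hw : K.π w = β) :
    ∃ L, ∃ hL : L ≠ [], K.IsTraversal B L ∧ K.π (L.head hL) = α ∧ L.getLast hL = w := by
  obtain ⟨L, hL, htrav, rfl, rfl⟩ := h.symm w hw
  exact ⟨L.reverse, List.reverse_ne_nil_iff.2 hL, htrav.reverse, by rw [List.head_reverse],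
    by rw [List.getLast_reverse]⟩

theorem Tr.mem_left (h : K.Tr B α β) : α ∈ B := by
  obtain ⟨v, rfl⟩ := K.π_surjective α
  obtain ⟨L, hL, htrav, rfl, -⟩ := h v rfl
  exact (htrav.2.2 _).1 (List.head_mem hL)

theorem Tr.mem_right (h : K.Tr B α β) : β ∈ B := h.symm.mem_left

theorem Tr.mul_left (h : K.Tr B α β) (x : A) (hB : ∀ y, x * y ∈ B' ↔ y ∈ B) :
    K.Tr B' (x * α) (x * β) := by
  obtain ⟨g, rfl⟩ := K.φ_surjective x
  obtain ⟨v, rfl⟩ := K.π_surjective α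
  obtain ⟨L, hL, htrav, rfl, rfl⟩ := h v rfl
  refine Tr.of_exists (L := L.map (g • ·)) (by simpa only [ne_eq, List.map_eq_nil_iff])
    (htrav.smul g hB) ?_ ?_
  · rw [List.head_map, K.π_smul]
  · rw [List.getLast_map, K.π_smul]

theorem Tr.trans (h : K.Tr B α β) (h' : K.Tr B' γ δ) (hs : K.Step β γ) (hd : Disjoint B B') :
    K.Tr (B ∪ B') α δ := by
  intro v hv
  obtain ⟨L, hL, ⟨hchain, hnodup, hmem⟩, hhead, hlast⟩ := h v hv
  obtain ⟨v', hv', hadj⟩ := hs.exists_adj hlast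
  obtain ⟨L', hL', ⟨hchain', hnodup', hmem'⟩, hhead', hlast'⟩ := h' v' hv'
  refine ⟨L ++ L', List.append_ne_nil_of_left_ne_nil hL _, ⟨?_, ?_, fun x => ?_⟩, ?_, ?_⟩
  · refine List.isChain_append.2 ⟨hchain, hchain', fun x hx y hy => ?_⟩
    rw [List.getLast?_eq_some_getLast hL, Option.mem_some_iff] at hx
    rw [List.head?_eq_some_head hL', Option.mem_some_iff] at hy
    rwa [← hx, ← hy, hhead']
  · exact hnodup.append hnodup' fun x hx hx' =>
      Set.disjoint_left.1 hd ((hmem x).1 hx) ((hmem' x).1 hx')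
  · rw [List.mem_append, hmem, hmem', Set.mem_union]
  · rw [List.head_append_of_ne_nil hL, hhead]
  · rw [List.getLast_append_of_ne_nil _ hL', hlast']

end Traversals

section Blocks

theorem hasTwoWayPath_of_blocks {B : ℤ → Set A} {α β : ℤ → A} (hB : ∀ x, ∃! i, x ∈ B i)
    (htr : ∀ i, K.Tr (B i) (α i) (β i)) (hstep : ∀ i, K.Step (β i) (α (i + 1))) :
    HasTwoWayPath K.graph := by
  obtain ⟨L, hL⟩ := exists_int_seq
    (P := fun i L => ∃ hL : L ≠ [], K.IsTraversal (B i) L ∧ K.π (L.head hL) = α i ∧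
      K.π (L.getLast hL) = β i)
    (R := fun _ L L' => ∀ (hL : L ≠ []) (hL' : L' ≠ []), K.graph.Adj (L.getLast hL) (L'.head hL'))
    (by
      obtain ⟨v, hv⟩ := K.π_surjective (α 0)
      obtain ⟨L, hL, htrav, rfl, hlast⟩ := htr 0 v hv
      exact ⟨L, hL, htrav, hv, hlast⟩)
    (by
      rintro i L ⟨hL, -, -, hlast⟩
      obtain ⟨v, hv, hadj⟩ := (hstep i).exists_adj hlast
      obtain ⟨L', hL', htrav, rfl, hlast'⟩ := htr (i + 1) v hv
      exact ⟨L', ⟨hL', htrav, hv, hlast'⟩, fun _ _ => hadj⟩)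
    (by
      rintro i L' ⟨hL', -, hhead, -⟩
      obtain ⟨w, hw, hadj⟩ := (hstep i).symm.exists_adj hhead
      obtain ⟨L, hL, htrav, hhead', rfl⟩ := (htr i).exists_to hw
      exact ⟨L, ⟨hL, htrav, hhead', hw⟩, fun _ _ => hadj.symm⟩)
  choose hP hR using hL
  choose hne htrav _ using hP
  refine hasTwoWayPath_of_concat hne (fun i => (htrav i).1) (fun i => (htrav i).2.1) (fun v => ?_)
    fun i => hR i _ _
  simpa only [(htrav _).2.2] using hB (K.π v)

theorem hasTwoWayPath_of_exits {B : ℤ → Set A} (hB : ∀ x, ∃! i, x ∈ B i) (hne : (B 0).Nonempty)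
    (hright : ∀ i, ∀ α ∈ B i, ∃ β, K.Tr (B i) α β ∧ ∃ γ ∈ B (i + 1), K.Step β γ)
    (hleft : ∀ i, ∀ α ∈ B (i + 1), ∃ β, K.Tr (B (i + 1)) α β ∧ ∃ γ ∈ B i, K.Step β γ) :
    HasTwoWayPath K.graph := by
  obtain ⟨f, hf⟩ := exists_int_seq
    (P := fun i (x : A × A) => K.Tr (B i) x.1 x.2 ∧ (∃ γ ∈ B (i + 1), K.Step x.2 γ) ∧
      ∀ j, j + 1 = i → ∃ γ ∈ B j, K.Step x.1 γ)
    (R := fun _ x y => K.Step x.2 y.1)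
    (by
      obtain ⟨α, hα⟩ := hne
      obtain ⟨β, htr, hexit⟩ := hleft (-1) α (by rwa [neg_add_cancel])
      rw [neg_add_cancel] at htr
      obtain ⟨γ, htr', hexit'⟩ := hright 0 β htr.mem_right
      refine ⟨(β, γ), htr', hexit', fun j hj => ?_⟩
      obtain rfl : j = -1 := eq_neg_of_add_eq_zero_left hj
      exact hexit)
    (by
      rintro i ⟨α, β⟩ ⟨htr, ⟨γ, hγ, hstep⟩, -⟩
      obtain ⟨δ, htr', hexit⟩ := hright (i + 1) γ hγ
      refine ⟨(γ, δ), ⟨htr', hexit, fun j hj => ?_⟩, hstep⟩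
      obtain rfl : j = i := add_right_cancel hj
      exact ⟨β, htr.mem_right, hstep.symm⟩)
    (by
      rintro i ⟨α, β⟩ ⟨htr, -, hexit⟩
      obtain ⟨γ, hγ, hstep⟩ := hexit i rfl
      obtain ⟨δ, htr', ε, hε, hstep'⟩ := hleft (i - 1) γ (by rwa [sub_add_cancel])
      rw [sub_add_cancel] at htr'
      refine ⟨(δ, γ), ⟨htr'.symm, ⟨α, htr.mem_left, hstep.symm⟩, fun j hj => ?_⟩, hstep.symm⟩
      obtain rfl : j = i - 1 := eq_sub_of_add_eq hj
      exact ⟨ε, hε, hstep'⟩)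
  exact hasTwoWayPath_of_blocks (α := fun i => (f i).1) (β := fun i => (f i).2) hB
    (fun i => (hf i).1.1) (fun i => (hf i).2)

variable (K) in
/-- From every element of `B` the block `B` can be traversed and left towards its translate by
`g`. -/
def Exit (B : Set A) (g : A) : Prop :=
  ∀ α ∈ B, ∃ β, K.Tr B α β ∧ ∃ γ ∈ B, K.Step β (g * γ)

theorem Exit.translate {B : Set A} {g x y : A} (h : K.Exit B g) (hg : x⁻¹ * y = g) :
    ∀ α, x⁻¹ * α ∈ B → ∃ β, K.Tr {z | x⁻¹ * z ∈ B} α β ∧ ∃ γ, y⁻¹ * γ ∈ B ∧ K.Step β γ := by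
  intro α hα
  obtain ⟨β, htr, γ, hγ, hstep⟩ := h _ hα
  refine ⟨x * β, ?_, y * γ, by rwa [inv_mul_cancel_left], ?_⟩
  · simpa only [mul_inv_cancel_left] using htr.mul_left x (B' := {z | x⁻¹ * z ∈ B}) fun z => by
      rw [Set.mem_ofPred_eq, inv_mul_cancel_left]
  · rw [← hg] at hstep
    simpa only [mul_assoc, mul_inv_cancel_left] using hstep.mul_left x

theorem hasTwoWayPath_of_pathTiling [Infinite A] {B : Set A} (hB : B.Finite)
    (h : PathTiling {g | K.Exit B g} Set.univ B) : HasTwoWayPath K.graph := by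
  obtain ⟨J, I, r, hI, hexit, hmem, huniq⟩ := h
  have hcover : ∀ x, ∃ j, (r j)⁻¹ * x ∈ B := fun x => (hmem x).1 trivial
  have : Infinite J := by
    by_contra hfin
    rw [not_infinite_iff_finite] at hfin
    refine Set.infinite_univ.not_finite <| (Set.finite_iUnion fun j => hB.image (r j * ·)).subset
      fun x _ => ?_
    obtain ⟨j, hj⟩ := hcover x
    exact Set.mem_iUnion.2 ⟨j, _, hj, mul_inv_cancel_left _ _⟩
  obtain ⟨f, hf, hadj⟩ := hI.hasTwoWayPath
  refine hasTwoWayPath_of_exits (B := fun i => {x | (r (f i))⁻¹ * x ∈ B}) (fun x => ?_) ?_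
    (fun i => (hexit _ _ (hadj i)).translate rfl) (fun i => (hexit _ _ (hadj i).symm).translate rfl)
  · obtain ⟨j, hj⟩ := hcover x
    obtain ⟨i, rfl⟩ := hf.2 j
    exact ⟨i, hj, fun k hk => hf.1 (huniq x _ _ hk hj)⟩
  · obtain ⟨j, hj⟩ := hcover 1
    exact ⟨r (f 0) * ((r j)⁻¹ * 1), by rwa [Set.mem_ofPred_eq, inv_mul_cancel_left]⟩

end Blocks

section Good

/-- A list of elements of `A` is good if it lifts to a path which closes up, along one more edge,
with a non-trivial deck transformation. -/
def Good (K : PrimeCover V G A) (l : List A) : Prop :=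
  l.Nodup ∧ ∃ L, ∃ hL : L ≠ [], L.map K.π = l ∧ L.IsChain K.graph.Adj ∧
    ∃ c ∈ K.C, c ≠ 1 ∧ K.graph.Adj (L.getLast hL) (c • L.head hL)

variable {l l₁ l₂ : List A} {α β : A}

theorem Good.ne_nil (h : K.Good l) : l ≠ [] := by
  obtain ⟨-, L, hL, rfl, -⟩ := h
  simpa only [ne_eq, List.map_eq_nil_iff]

theorem Good.append_comm (h : K.Good (l₁ ++ l₂)) : K.Good (l₂ ++ l₁) := by
  rcases eq_or_ne l₁ [] with rfl | hl₁
  · simpa only [List.nil_append, List.append_nil] using h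
  rcases eq_or_ne l₂ [] with rfl | hl₂
  · simpa only [List.nil_append, List.append_nil] using h
  obtain ⟨hnodup, L, hL, hLl, hchain, c, hc, hc₁, hclose⟩ := h
  obtain ⟨L₁, L₂, rfl, rfl, rfl⟩ := List.map_eq_append_iff.1 hLl
  have hL₁ : L₁ ≠ [] := by simpa only [ne_eq, List.map_eq_nil_iff] using hl₁
  have hL₂ : L₂ ≠ [] := by simpa only [ne_eq, List.map_eq_nil_iff] using hl₂
  have hcL₁ : L₁.map (c • ·) ≠ [] := by simpa only [ne_eq, List.map_eq_nil_iff]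
  rw [List.getLast_append_of_ne_nil _ hL₂, List.head_append_of_ne_nil hL₁] at hclose
  obtain ⟨hchain₁, hchain₂, hlink⟩ := List.isChain_append.1 hchain
  refine ⟨List.nodup_append_comm.1 hnodup, L₂ ++ L₁.map (c • ·),
    List.append_ne_nil_of_left_ne_nil hL₂ _, ?_, ?_, c, hc, hc₁, ?_⟩
  · simp only [List.map_append, List.map_map, Function.comp_def, π_smul_of_mem hc]
  · refine List.isChain_append.2 ⟨hchain₂, isChain_smul hchain₁ c, fun x hx y hy => ?_⟩
    rw [List.getLast?_eq_some_getLast hL₂, Option.mem_some_iff] at hx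
    rw [List.head?_eq_some_head hcL₁, Option.mem_some_iff, List.head_map] at hy
    rwa [← hx, ← hy]
  · rw [List.getLast_append_of_ne_nil _ hcL₁, List.getLast_map, List.head_append_of_ne_nil hL₂]
    exact K.smul_adj c (hlink _ (List.getLast?_eq_some_getLast hL₁) _
      (List.head?_eq_some_head hL₂))

theorem orderOf_eq_card {c : G} (hc : c ∈ K.C) (hc₁ : c ≠ 1) : orderOf c = Nat.card K.C := by
  have : Fact (Nat.card K.C).Prime := ⟨K.prime_card⟩
  have hc₁' : (⟨c, hc⟩ : K.C) ≠ 1 := fun h => hc₁ (congrArg Subtype.val h)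
  rw [← orderOf_eq_card_of_forall_mem_zpowers fun d => mem_zpowers_of_prime_card rfl hc₁',
    Subgroup.orderOf_mk]

theorem exists_pow_eq {c d : G} (hc : c ∈ K.C) (hc₁ : c ≠ 1) (hd : d ∈ K.C) :
    ∃ r < Nat.card K.C, c ^ r = d := by
  have : Fact (Nat.card K.C).Prime := ⟨K.prime_card⟩
  have hc₁' : (⟨c, hc⟩ : K.C) ≠ 1 := fun h => hc₁ (congrArg Subtype.val h)
  obtain ⟨n, hn⟩ := mem_powers_of_prime_card (g' := (⟨d, hd⟩ : K.C)) rfl hc₁'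
  refine ⟨n % Nat.card K.C, Nat.mod_lt _ K.prime_card.pos, ?_⟩
  rw [← orderOf_eq_card hc hc₁, pow_mod_orderOf]
  exact congrArg Subtype.val hn

theorem isChain_flatMap_smul {L : List V} (hL : L ≠ []) (hchain : L.IsChain K.graph.Adj) {c : G}
    (hclose : K.graph.Adj (L.getLast hL) (c • L.head hL)) (n : ℕ) :
    ((List.range n).flatMap fun r => L.map (c ^ r • ·)).IsChain K.graph.Adj := by
  have hne : ∀ r, L.map (c ^ r • ·) ≠ [] := fun r => by simpa only [ne_eq, List.map_eq_nil_iff]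
  rw [List.flatMap, List.isChain_flatten fun h => ?_]
  · refine ⟨fun L' hL' => ?_, (List.isChain_map _).2 ((List.isChain_range _ _).2 fun r _ => ?_)⟩
    · obtain ⟨r, -, rfl⟩ := List.mem_map.1 hL'
      exact isChain_smul hchain (c ^ r)
    · intro x hx y hy
      rw [List.getLast?_eq_some_getLast (hne r), Option.mem_some_iff, List.getLast_map] at hx
      rw [List.head?_eq_some_head (hne _), Option.mem_some_iff, List.head_map] at hy
      have hadj := K.smul_adj (c ^ r) hclose
      rwa [smul_smul, ← pow_succ, hx, ← Nat.succ_eq_add_one, hy] at hadj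
  · obtain ⟨r, -, hr⟩ := List.mem_map.1 h
    exact hne r hr

theorem isTraversal_flatMap {L : List V} (hL : L ≠ []) (hnodup : (L.map K.π).Nodup)
    (hchain : L.IsChain K.graph.Adj) {c : G} (hc : c ∈ K.C) (hc₁ : c ≠ 1)
    (hclose : K.graph.Adj (L.getLast hL) (c • L.head hL)) :
    K.IsTraversal {x | x ∈ L.map K.π}
      ((List.range (Nat.card K.C)).flatMap fun r => L.map (c ^ r • ·)) := by
  have hpow : ∀ r v, K.π (c ^ r • v) = K.π v := fun r => π_smul_of_mem (pow_mem hc r)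
  refine ⟨isChain_flatMap_smul hL hchain hclose _, ?_, fun x => ?_⟩
  · refine List.nodup_flatMap.2 ⟨fun r _ => hnodup.of_map.map (MulAction.injective _), ?_⟩
    refine List.pairwise_lt_range.imp_of_mem fun {r s} hr hs hrs => ?_
    rw [List.mem_range, ← orderOf_eq_card hc hc₁] at hr hs
    intro x hx hx'
    obtain ⟨v, hv, rfl⟩ := List.mem_map.1 hx
    obtain ⟨w, hw, hwv⟩ := List.mem_map.1 hx'
    obtain rfl : w = v := List.inj_on_of_nodup_map hnodup hw hv (by
      rw [← hpow s w, ← hpow r v]; exact congrArg K.π hwv)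
    have hfix := K.eq_one_of_smul_eq _ (mul_mem (inv_mem (pow_mem hc r)) (pow_mem hc s)) w
      (by rw [mul_smul, inv_smul_eq_iff]; exact hwv)
    exact hrs.ne (pow_injOn_Iio_orderOf hr hs (inv_mul_eq_one.1 hfix))
  · simp only [List.mem_flatMap, List.mem_range, List.mem_map, Set.mem_ofPred_eq]
    constructor
    · rintro ⟨r, -, v, hv, rfl⟩
      exact ⟨v, hv, (hpow r v).symm⟩
    · rintro ⟨v, hv, hvx⟩
      obtain ⟨d, hd, rfl⟩ := K.exists_smul_eq v x hvx
      obtain ⟨r, hr, rfl⟩ := exists_pow_eq hc hc₁ hd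
      exact ⟨r, hr, v, hv, rfl⟩

theorem Good.tr_ends (h : K.Good l) : K.Tr {x | x ∈ l} (l.head h.ne_nil) (l.getLast h.ne_nil) := by
  obtain ⟨hnodup, L, hL, rfl, hchain, c, hc, hc₁, hclose⟩ := h
  obtain ⟨p, hp⟩ := Nat.exists_eq_add_one.2 K.prime_card.pos
  have htrav := isTraversal_flatMap hL hnodup hchain hc hc₁ hclose
  have hne : ∀ r, L.map (c ^ r • ·) ≠ [] := fun r => by simpa only [ne_eq, List.map_eq_nil_iff]
  have hfirst : ∀ h, ((List.range (p + 1)).flatMap fun r => L.map (c ^ r • ·)).head h =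
      L.head hL := by
    simp only [List.range_succ_eq_map, List.flatMap_cons, pow_zero, one_smul, List.map_id']
    exact fun _ => List.head_append_of_ne_nil hL
  have hlast : ∀ h, ((List.range (p + 1)).flatMap fun r => L.map (c ^ r • ·)).getLast h =
      c ^ p • L.getLast hL := by
    simp only [List.range_succ, List.flatMap_append, List.flatMap_singleton]
    exact fun _ => (List.getLast_append_of_ne_nil _ (hne p)).trans (List.getLast_map _)
  rw [hp] at htrav
  refine Tr.of_exists (fun hnil => ?_) htrav ?_ ?_
  · exact hne 0 (List.flatMap_eq_nil_iff.1 hnil 0 (List.mem_range.2 p.succ_pos))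
  · rw [hfirst, List.head_map]
  · rw [hlast, π_smul_of_mem (pow_mem hc p), List.getLast_map]

theorem Good.tr_of_consecutive (h : K.Good l) (hαβ : [α, β] <:+: l) : K.Tr {x | x ∈ l} α β := by
  obtain ⟨l₁, l₂, rfl⟩ := hαβ
  have hrot : K.Good ((β :: l₂) ++ (l₁ ++ [α])) := by
    refine Good.append_comm ?_
    simpa only [List.append_assoc, List.singleton_append, List.cons_append, List.nil_append] using h
  have htr := hrot.tr_ends
  rw [List.head_append_of_ne_nil (List.cons_ne_nil _ _), List.head_cons,
    List.getLast_append_of_ne_nil _ (by simp), List.getLast_append_singleton] at htr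
  have hset : {x | x ∈ l₁ ++ [α, β] ++ l₂} = {x | x ∈ β :: l₂ ++ (l₁ ++ [α])} := by
    ext x
    simp only [Set.mem_ofPred_eq, List.mem_append, List.mem_cons, List.not_mem_nil, or_false]
    tauto
  exact hset ▸ htr.symm

theorem Good.exists_rotate (h : K.Good l) (hα : α ∈ l) :
    ∃ m, K.Good (α :: m) ∧ {x | x ∈ α :: m} = {x | x ∈ l} := by
  obtain ⟨l₁, l₂, rfl⟩ := List.append_of_mem hα
  refine ⟨l₂ ++ l₁, h.append_comm, Set.ext fun x => ?_⟩
  simp only [← List.cons_append, Set.mem_ofPred_eq, List.mem_append, or_comm]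

theorem Good.exists_tr (h : K.Good l) (hα : α ∈ l) : ∃ β, K.Tr {x | x ∈ l} α β := by
  obtain ⟨m, hm, hset⟩ := h.exists_rotate hα
  exact ⟨_, hset ▸ hm.tr_ends⟩

theorem Good.exists_tr_ne (h : K.Good l) (hl : 3 ≤ l.length) (hα : α ∈ l) (γ : A) :
    ∃ β, β ≠ γ ∧ K.Tr {x | x ∈ l} α β := by
  obtain ⟨m, hm, hset⟩ := h.exists_rotate hα
  have hlen : 3 ≤ (α :: m).length := by
    have hperm := (List.perm_ext_iff_of_nodup hm.1 h.1).2 (Set.ext_iff.1 hset)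
    exact hl.trans_eq hperm.length_eq.symm
  match m, hlen with
  | β :: β' :: m, _ =>
    have hβ : K.Tr {x | x ∈ l} α β := hset ▸ hm.tr_of_consecutive ⟨[], β' :: m, rfl⟩
    rcases eq_or_ne β γ with rfl | hne
    · refine ⟨_, fun heq => ?_, hset ▸ hm.tr_ends⟩
      refine (List.nodup_cons.1 (List.nodup_cons.1 hm.1).2).1 ?_
      nth_rw 1 [← heq]
      simp only [List.getLast_cons_cons]
      exact List.getLast_mem _
    · exact ⟨β, hne, hβ⟩

end Good

section Digons

theorem exists_lift {l : List A} (hl : l ≠ []) (h : l.IsChain K.Step) {v : V}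
    (hv : K.π v = l.head hl) : ∃ L, ∃ hL : L ≠ [], L.map K.π = l ∧ L.IsChain K.graph.Adj ∧
      L.head hL = v := by
  induction l generalizing v with
  | nil => exact absurd rfl hl
  | cons α l ih =>
    rcases eq_or_ne l [] with rfl | hne
    · exact ⟨[v], List.cons_ne_nil _ _, congrArg ([·]) hv, List.isChain_singleton v, rfl⟩
    · rw [List.isChain_cons] at h
      obtain ⟨w, hw, hadj⟩ := (h.1 (l.head hne) (List.head_mem_head? hne)).exists_adj hv
      obtain ⟨L, hL, rfl, hchain, rfl⟩ := ih hne h.2 hw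
      refine ⟨v :: L, List.cons_ne_nil _ _, congrArg (· :: L.map K.π) hv, ?_, rfl⟩
      refine List.isChain_cons.2 ⟨fun y hy => ?_, hchain⟩
      rw [List.head?_eq_some_head hL, Option.mem_some_iff] at hy
      exact hy ▸ hadj

variable (K) in
/-- `x` is a digon if every vertex `v` has, for each vertex `u` in the fibre above `π v * x`, a
neighbour in that fibre other than `u`. So a closed walk in `A` with a step `x` can be lifted to a
path that closes up with a non-trivial deck transformation. -/
def Digon (x : A) : Prop :=
  ∀ v u, K.π u = K.π v * x → ∃ c ∈ K.C, c ≠ 1 ∧ K.graph.Adj v (c • u)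

theorem exists_smul_eq_vertex (K : PrimeCover V G A) (v w : V) : ∃ g : G, g • v = w := by
  obtain ⟨g, hg⟩ := K.φ_surjective (K.π w * (K.π v)⁻¹)
  obtain ⟨c, -, hc⟩ := K.exists_smul_eq (g • v) w (by rw [K.π_smul, hg, inv_mul_cancel_right])
  exact ⟨c * g, by rw [mul_smul, hc]⟩

theorem digon_of_adj {v w : V} {c : G} (hc : c ∈ K.C) (hc₁ : c ≠ 1) (h : K.graph.Adj v w)
    (h' : K.graph.Adj v (c • w)) : K.Digon ((K.π v)⁻¹ * K.π w) := by
  intro v' u hu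
  obtain ⟨g, rfl⟩ := exists_smul_eq_vertex K v v'
  have hπ : K.π u = K.π (g • w) := by rw [hu, K.π_smul, K.π_smul, mul_assoc, mul_inv_cancel_left]
  rcases eq_or_ne u (g • w) with rfl | hne
  · obtain ⟨d, hd, hdw⟩ := K.exists_smul_eq (g • w) (g • c • w)
      (by rw [K.π_smul, K.π_smul, π_smul_of_mem hc])
    refine ⟨d, hd, ?_, hdw ▸ K.smul_adj g h'⟩
    rintro rfl
    exact hc₁ (K.eq_one_of_smul_eq c hc w (smul_left_cancel g (by rw [← hdw, one_smul])))
  · obtain ⟨d, hd, hdu⟩ := K.exists_smul_eq u (g • w) hπ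
    exact ⟨d, hd, fun hd₁ => hne (by rw [← hdu, hd₁, one_smul]), hdu ▸ K.smul_adj g h⟩

theorem Digon.inv {x : A} (h : K.Digon x) : K.Digon x⁻¹ := by
  intro v u hu
  obtain ⟨c, hc, hc₁, hadj⟩ := h u v (by rw [hu, inv_mul_cancel_right])
  refine ⟨c⁻¹, inv_mem hc, inv_ne_one.2 hc₁, ?_⟩
  simpa only [inv_smul_smul] using (K.smul_adj c⁻¹ hadj).symm

theorem Digon.step {x : A} (h : K.Digon x) : K.Step 1 x := by
  obtain ⟨v, hv⟩ := K.π_surjective 1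
  obtain ⟨u, hu⟩ := K.π_surjective x
  obtain ⟨c, hc, -, hadj⟩ := h v u (by rw [hu, hv, one_mul])
  exact ⟨v, c • u, hv, by rw [π_smul_of_mem hc, hu], hadj⟩

theorem good_of_digon {l : List A} (hl : l ≠ []) (hnodup : l.Nodup) (hchain : l.IsChain K.Step)
    (hdigon : K.Digon ((l.getLast hl)⁻¹ * l.head hl)) : K.Good l := by
  obtain ⟨v, hv⟩ := K.π_surjective (l.head hl)
  obtain ⟨L, hL, rfl, hchainL, rfl⟩ := exists_lift hl hchain hv
  obtain ⟨c, hc, hc₁, hadj⟩ := hdigon (L.getLast hL) (L.head hL)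
    (by rw [List.getLast_map, List.head_map, mul_inv_cancel_left])
  exact ⟨hnodup, L, hL, rfl, hchainL, c, hc, hc₁, hadj⟩

end Digons

/-! ### Blocks traversed by good lists -/

section Bricks

variable (K) in
/-- The connection set of the Cayley graph on `A` over which the cover lies. -/
def steps : Set A := {s | K.Step 1 s}

theorem pathTiling_steps (hfin : K.steps.Finite) (hgen : Subgroup.closure K.steps = ⊤)
    (H : Subgroup A) : PathTiling K.steps Set.univ H :=
  pathTiling_univ hfin (fun _ hs => Step.inv hs) (by rw [hgen, sup_top_eq])

variable {B : Set A} {H : Subgroup A}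

theorem exit_of_step (h : ∀ α ∈ B, ∃ β, K.Tr B α β) {s : A} (hs : K.Step 1 s) : K.Exit B s := by
  intro α hα
  obtain ⟨β, hβ⟩ := h α hα
  exact ⟨β, hβ, β, hβ.mem_right, by simpa only [mul_comm β] using step_mul_right hs β⟩

theorem hasTwoWayPath_of_subgroup_tiling [Infinite A] (hfin : K.steps.Finite)
    (hgen : Subgroup.closure K.steps = ⊤) (hB : B.Finite) (h : ∀ α ∈ B, ∃ β, K.Tr B α β)
    (hH : PathTiling {g | K.Exit B g} H B) : HasTwoWayPath K.graph :=
  hasTwoWayPath_of_pathTiling hB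
    (((pathTiling_steps hfin hgen H).mono fun _ => exit_of_step h).trans hH)

theorem hasTwoWayPath_of_good_subgroup [Infinite A] (hfin : K.steps.Finite)
    (hgen : Subgroup.closure K.steps = ⊤) {l : List A} (hl : K.Good l) (hH : {x | x ∈ l} = H) :
    HasTwoWayPath K.graph :=
  hasTwoWayPath_of_subgroup_tiling hfin hgen (H := H) l.finite_toSet (fun _ => hl.exists_tr)
    (hH ▸ .refl _ _)

theorem Tr.exists_of_mem_coset {F : Subgroup A} (hB : ∀ f ∈ F, ∀ x, f * x ∈ B ↔ x ∈ B)
    {α x y : A} (h : K.Tr B x y) (hα : x⁻¹ * α ∈ F) : ∃ β, y⁻¹ * β ∈ F ∧ K.Tr B α β := by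
  refine ⟨x⁻¹ * α * y, by rwa [mul_comm _ y, inv_mul_cancel_left], ?_⟩
  simpa only [inv_mul_cancel_comm] using h.mul_left (x⁻¹ * α) fun y => hB _ hα y

theorem hasTwoWayPath_of_two_cosets [Infinite A] (hfin : K.steps.Finite)
    (hgen : Subgroup.closure K.steps = ⊤) {F : Subgroup A} [Finite F] {z : A} (hz : K.Step 1 z)
    (hzF : ∀ n : ℤ, z ^ n ∈ F → n = 0) (hB : B = {x | x ∈ F ∨ z⁻¹ * x ∈ F})
    (h₀₀ : ∃ x ∈ F, ∃ y ∈ F, K.Tr B x y) (h₀₁ : ∃ x ∈ F, ∃ y ∈ F, K.Tr B x (z * y))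
    (h₁₁ : ∃ x ∈ F, ∃ y ∈ F, K.Tr B (z * x) (z * y)) : HasTwoWayPath K.graph := by
  obtain ⟨x₀, hx₀, y₀, hy₀, h₀₀⟩ := h₀₀
  obtain ⟨x₁, hx₁, y₁, hy₁, h₀₁⟩ := h₀₁
  obtain ⟨x₂, hx₂, y₂, hy₂, h₁₁⟩ := h₁₁
  have hmem : ∀ x, x ∈ B ↔ x ∈ F ∨ z⁻¹ * x ∈ F := fun x => by rw [hB, Set.mem_ofPred_eq]
  have hinv : ∀ f ∈ F, ∀ x, f * x ∈ B ↔ x ∈ B := fun f hf x => by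
    rw [hmem, hmem, mul_left_comm, F.mul_mem_cancel_left hf, F.mul_mem_cancel_left hf]
  have hmove : ∀ {x y : A}, x ∈ F → (x⁻¹ * y ∈ F ↔ y ∈ F) := fun hx =>
    F.mul_mem_cancel_left (F.inv_mem hx)
  have hmove' : ∀ {x y : A}, x ∈ F → ((z * x)⁻¹ * y ∈ F ↔ z⁻¹ * y ∈ F) := fun hx => by
    rw [mul_inv_rev, mul_assoc, hmove hx]
  have hlow : ∀ α ∈ B, ∃ β ∈ F, K.Tr B α β := by
    intro α hα
    rcases (hmem α).1 hα with hα | hα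
    · exact (h₀₀.exists_of_mem_coset hinv ((hmove hx₀).2 hα)).imp fun β => .imp_left (hmove hy₀).1
    · exact (h₀₁.symm.exists_of_mem_coset hinv ((hmove' hy₁).2 hα)).imp fun β =>
        .imp_left (hmove hx₁).1
  have hhigh : ∀ α ∈ B, ∃ β, z⁻¹ * β ∈ F ∧ K.Tr B α β := by
    intro α hα
    rcases (hmem α).1 hα with hα | hα
    · exact (h₀₁.exists_of_mem_coset hinv ((hmove hx₁).2 hα)).imp fun β => .imp_left (hmove' hy₁).1
    · exact (h₁₁.exists_of_mem_coset hinv ((hmove' hx₂).2 hα)).imp fun β =>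
        .imp_left (hmove' hy₂).1
  refine hasTwoWayPath_of_subgroup_tiling (H := F ⊔ Subgroup.zpowers z) (B := B) hfin hgen ?_
    (fun α hα => (hlow α hα).imp fun _ => And.right) ((hB ▸ pathTiling_two_cosets hzF).mono ?_)
  · rw [hB]
    exact (Set.toFinite F).union ((Set.toFinite F).preimage (mul_right_injective z⁻¹).injOn)
  · rintro x (rfl | rfl) α hα
    · obtain ⟨β, hβ, htr⟩ := hhigh α hα
      refine ⟨β, htr, z⁻¹ * β, (hmem _).2 (Or.inl hβ), ?_⟩
      rw [pow_two, mul_assoc, mul_inv_cancel_left, mul_comm]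
      exact step_mul_right hz β
    · obtain ⟨β, hβ, htr⟩ := hlow α hα
      refine ⟨β, htr, z * β, (hmem _).2 (Or.inr (by rwa [inv_mul_cancel_left])), ?_⟩
      rw [pow_two, mul_inv, mul_assoc, inv_mul_cancel_left, mul_comm]
      exact step_mul_right hz.inv β

theorem exit_sq {x x' y y' s : A} (hs : K.Step 1 s) (hB : B ⊆ {x, x', y, y'})
    (hx : x * s = x') (hy : y * s = y') (hxx : K.Tr B x x') (hyy : K.Tr B y y')
    (hxy : K.Tr B x' y') : K.Exit B (s ^ 2) := by
  have hx' : K.Step x' (s ^ 2 * x) := by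
    rw [pow_two, mul_assoc, mul_comm s x, hx, mul_comm]
    exact step_mul_right hs x'
  have hy' : K.Step y' (s ^ 2 * y) := by
    rw [pow_two, mul_assoc, mul_comm s y, hy, mul_comm]
    exact step_mul_right hs y'
  intro α hα
  rcases hB hα with rfl | rfl | rfl | rfl
  · exact ⟨x', hxx, _, hxx.mem_left, hx'⟩
  · exact ⟨y', hxy, y, hyy.mem_left, hy'⟩
  · exact ⟨y', hyy, _, hyy.mem_left, hy'⟩
  · exact ⟨x', hxy.symm, x, hxx.mem_left, hx'⟩

theorem hasTwoWayPath_of_square [Infinite A] (hfin : K.steps.Finite)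
    (hgen : Subgroup.closure K.steps = ⊤) {a b : A} (ha : K.Step 1 a) (hb : K.Step 1 b)
    (hab : ∀ m n : ℤ, a ^ m * b ^ n = 1 → m = 0 ∧ n = 0) (hl : K.Good [1, a, a * b, b]) :
    HasTwoWayPath K.graph := by
  set B : Set A := {x | x ∈ [1, a, a * b, b]} with hB
  have h₁ : K.Tr B 1 a := hl.tr_of_consecutive ⟨[], [a * b, b], rfl⟩
  have h₂ : K.Tr B a (a * b) := hl.tr_of_consecutive ⟨[1], [b], rfl⟩
  have h₃ : K.Tr B (a * b) b := hl.tr_of_consecutive ⟨[1, a], [], rfl⟩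
  have h₄ : K.Tr B 1 b := hl.tr_ends
  have hexit : {a ^ 2, (a ^ 2)⁻¹, b ^ 2, (b ^ 2)⁻¹} ⊆ {g | K.Exit B g} := by
    have hcases : ∀ α ∈ B, α = 1 ∨ α = a ∨ α = a * b ∨ α = b := fun α hα => by
      simpa only [hB, Set.mem_ofPred_eq, List.mem_cons, List.not_mem_nil, or_false] using hα
    rintro x (rfl | rfl | rfl | rfl)
    · exact exit_sq (x := 1) (y := b) ha (by grind) (one_mul a) (mul_comm b a) h₁ h₃.symm h₂
    · rw [← inv_pow]
      exact exit_sq (x := a) (y := a * b) ha.inv (by grind) (mul_inv_cancel a)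
        (mul_inv_cancel_comm a b) h₁.symm h₃ h₄
    · exact exit_sq (x := 1) (y := a) hb (by grind) (one_mul b) rfl h₄ h₂ h₃.symm
    · rw [← inv_pow]
      exact exit_sq (x := b) (y := a * b) hb.inv (by grind) (mul_inv_cancel b)
        (mul_inv_cancel_right a b) h₄.symm h₂.symm h₁
  exact hasTwoWayPath_of_subgroup_tiling hfin hgen (List.finite_toSet _) (fun _ => hl.exists_tr)
    ((pathTiling_square hab).mono hexit)

/-- The list `1, b, …, bᵏ⁻¹, aʲ, …, a`, which closes up to a cycle if `bᵏ = aʲ`. -/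
def hook (a b : A) (j k : ℕ) : List A :=
  (List.range k).map (b ^ ·) ++ ((List.range j).map fun i => a ^ (i + 1)).reverse

theorem mem_hook {a b x : A} {j k : ℕ} :
    x ∈ hook a b j k ↔ (∃ i < k, b ^ i = x) ∨ ∃ i < j, a ^ (i + 1) = x := by
  simp only [hook, List.mem_append, List.mem_reverse, List.mem_map, List.mem_range]

theorem length_hook (a b : A) (j k : ℕ) : (hook a b j k).length = j + k := by
  simp only [hook, List.length_append, List.length_reverse, List.length_map, List.length_range,
    add_comm]

theorem mem_hook_iff_exists_int {a b x : A} {j k : ℕ} :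
    x ∈ hook a b j k ↔ ∃ r : ℤ, -j ≤ r ∧ r < k ∧ a ^ (-r ⊔ 0) * b ^ (r ⊔ 0) = x := by
  rw [mem_hook]
  constructor
  · rintro (⟨i, hi, rfl⟩ | ⟨i, hi, rfl⟩)
    · exact ⟨i, by lia, by lia, by simp⟩
    · refine ⟨-(i + 1 : ℕ), by lia, by lia, ?_⟩
      rw [neg_neg, sup_of_le_left (by lia), sup_of_le_right (by lia), zpow_natCast, zpow_zero,
        mul_one]
  · rintro ⟨r, hr, hr', rfl⟩
    rcases lt_or_ge r 0 with hr₀ | hr₀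
    · obtain ⟨i, rfl⟩ : ∃ i : ℕ, r = -(i + 1 : ℕ) := ⟨(-r - 1).toNat, by lia⟩
      refine Or.inr ⟨i, by lia, ?_⟩
      rw [neg_neg, sup_of_le_left (by lia), sup_of_le_right (by lia), zpow_natCast, zpow_zero,
        mul_one]
    · lift r to ℕ using hr₀
      exact Or.inl ⟨r, by lia, by simp⟩

theorem pathTiling_hook {a b : A} {j k : ℕ} (hjk : 0 < j + k) (hrel : b ^ k = a ^ j)
    (hab : ∀ m n : ℤ, a ^ m * b ^ n = 1 → ∃ q : ℤ, m = -(j * q) ∧ n = k * q) :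
    PathTiling {a * b, (a * b)⁻¹} (Subgroup.zpowers a ⊔ Subgroup.zpowers b : Subgroup A)
      {x | x ∈ hook a b j k} := by
  have hmem : ∀ x (t : ℤ), ((a * b) ^ t)⁻¹ * x ∈ {x | x ∈ hook a b j k} ↔
      ∃ r : ℤ, -j ≤ r ∧ r < k ∧ a ^ (t + (-r ⊔ 0)) * b ^ (t + (r ⊔ 0)) = x := fun x t => by
    simp only [Set.mem_ofPred_eq, mem_hook_iff_exists_int, eq_inv_mul_iff_mul_eq, mul_zpow,
      zpow_add, mul_mul_mul_comm]
  refine pathTiling_of_zpow (fun x => ?_) fun x t t' ht ht' => ?_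
  · simp only [hmem, SetLike.mem_coe, Subgroup.mem_sup, Subgroup.exists_mem_zpowers]
    constructor
    · rintro ⟨m, n, rfl⟩
      obtain ⟨q, r, hr, hr', hq⟩ : ∃ q r : ℤ, -j ≤ r ∧ r < k ∧ n - m = r + (j + k) * q := by
        have hpos : (0 : ℤ) < j + k := by exact_mod_cast hjk
        refine ⟨(n - m + j) / (j + k), (n - m + j) % (j + k) - j, ?_, ?_, ?_⟩
        · linarith [Int.emod_nonneg (n - m + j) hpos.ne']
        · linarith [Int.emod_lt_of_pos (n - m + j) hpos]
        · linarith [Int.emod_add_mul_ediv (n - m + j) (j + k)]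
      have hshift : a ^ m * b ^ n = a ^ (m + j * q) * b ^ (n - k * q) := by
        rw [zpow_add, zpow_sub, zpow_mul, zpow_mul, zpow_natCast, zpow_natCast, hrel, mul_assoc,
          mul_left_comm _ (b ^ n), mul_inv_cancel, mul_one]
      refine ⟨(m + j * q) ⊓ (n - k * q), r, hr, hr', ?_⟩
      rw [hshift]
      congr 2 <;> rcases le_total r 0 with h | h <;> simp [h] <;> grind
    · rintro ⟨t, r, -, -, rfl⟩
      exact ⟨_, _, rfl⟩
  · obtain ⟨r, hr₁, hr₂, rfl⟩ := (hmem x t).1 ht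
    obtain ⟨r', hr₁', hr₂', heq⟩ := (hmem _ t').1 ht'
    obtain ⟨q, hq₁, hq₂⟩ := hab (t' + (-r' ⊔ 0) - (t + (-r ⊔ 0)))
      (t' + (r' ⊔ 0) - (t + (r ⊔ 0)))
      (by rw [zpow_sub, zpow_sub, mul_mul_mul_comm, heq, ← mul_inv, mul_inv_cancel])
    have hr : r' - r = (j + k) * q := by
      have h : ∀ s : ℤ, (s ⊔ 0) - (-s ⊔ 0) = s := fun s => by lia
      linarith [h r, h r']
    obtain rfl : q = 0 := by
      nlinarith
    lia

theorem hasTwoWayPath_of_hook [Infinite A] (hfin : K.steps.Finite)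
    (hgen : Subgroup.closure K.steps = ⊤) {a b : A} (ha : K.Step 1 a) (hb : K.Step 1 b) {j k : ℕ}
    (hj : 0 < j) (hk : 0 < k) (hjk : 3 ≤ j + k) (hrel : b ^ k = a ^ j)
    (hab : ∀ m n : ℤ, a ^ m * b ^ n = 1 → ∃ q : ℤ, m = -(j * q) ∧ n = k * q)
    (hl : K.Good (hook a b j k)) : HasTwoWayPath K.graph := by
  have hamem : ∀ i ≤ j, a ^ i ∈ hook a b j k := by
    rintro (_ | i) hi
    · exact mem_hook.2 (Or.inl ⟨0, hk, by simp only [pow_zero]⟩)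
    · exact mem_hook.2 (Or.inr ⟨i, hi, rfl⟩)
  have hbmem : ∀ i ≤ k, b ^ i ∈ hook a b j k := by
    intro i hi
    rcases hi.lt_or_eq with hi | rfl
    · exact mem_hook.2 (Or.inl ⟨i, hi, rfl⟩)
    · exact hrel ▸ hamem j le_rfl
  have hstep : ∀ {β s γ : A}, K.Step 1 s → β * s = γ → K.Step β γ := fun hs h =>
    h ▸ step_mul_right hs _
  have htr := fun γ α hα => hl.exists_tr_ne (α := α) (hjk.trans_eq (length_hook a b j k).symm) hα γ
  refine hasTwoWayPath_of_subgroup_tiling hfin hgen (List.finite_toSet _) (fun _ => hl.exists_tr)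
    ((pathTiling_hook (by lia) hrel hab).mono ?_)
  rintro x (rfl | rfl) α hα
  · obtain ⟨β, hβ, h⟩ := htr 1 α hα
    refine ⟨β, h, ?_⟩
    rcases mem_hook.1 h.mem_right with ⟨_ | i, hi, rfl⟩ | ⟨i, hi, rfl⟩
    · exact (hβ (pow_zero b)).elim
    · exact ⟨b ^ i, hbmem i (by lia), hstep ha (by rw [pow_succ', mul_right_comm, mul_comm b])⟩
    · exact ⟨a ^ i, hamem i hi.le, hstep hb (by rw [pow_succ', mul_right_comm])⟩
  · obtain ⟨β, hβ, h⟩ := htr (a ^ j) α hα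
    refine ⟨β, h, ?_⟩
    rcases mem_hook.1 h.mem_right with ⟨i, hi, rfl⟩ | ⟨i, hi, rfl⟩
    · refine ⟨b ^ (i + 1), hbmem _ hi, hstep ha.inv ?_⟩
      rw [pow_succ', mul_inv, mul_assoc, inv_mul_cancel_left, mul_comm]
    · have hi' : i + 1 ≠ j := fun h => hβ (by rw [h])
      refine ⟨a ^ (i + 2), hamem _ (by lia), hstep hb.inv ?_⟩
      rw [pow_succ' a (i + 1), mul_inv_rev, mul_assoc, inv_mul_cancel_left, mul_comm]

theorem hasTwoWayPath_of_zpow {α β g : A} (hB : ∀ x, ∃! n : ℤ, (g ^ n)⁻¹ * x ∈ B)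
    (h : K.Tr B α β) (hs : K.Step β (g * α)) : HasTwoWayPath K.graph := by
  refine hasTwoWayPath_of_blocks (B := fun n => {x | (g ^ n)⁻¹ * x ∈ B}) (α := fun n => g ^ n * α)
    (β := fun n => g ^ n * β) hB (fun n => h.mul_left _ fun y => ?_) fun n => ?_
  · rw [Set.mem_ofPred_eq, inv_mul_cancel_left]
  · rw [zpow_add_one, mul_assoc]
    exact hs.mul_left _

theorem Tr.row {x y z : A} (hy : K.Tr B x y) (hz : K.Tr B x z) {T : List A} (hT : T ≠ [])
    (hchain : T.IsChain fun s t => s⁻¹ * t ∈ K.steps) (hnodup : T.Nodup)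
    (hdisj : ∀ u, ∀ s ∈ T, ∀ t ∈ T, s⁻¹ * u ∈ B → t⁻¹ * u ∈ B → s = t) :
    K.Tr {u | ∃ t ∈ T, t⁻¹ * u ∈ B} (T.head hT * if Odd T.length then x else y)
      (T.getLast hT * z) := by
  have htranslate : ∀ {α β} (t : A), K.Tr B α β → K.Tr {u | t⁻¹ * u ∈ B} (t * α) (t * β) :=
    fun t h => h.mul_left t fun u => by rw [Set.mem_ofPred_eq, inv_mul_cancel_left]
  induction T with
  | nil => exact absurd rfl hT
  | cons t T ih =>
    rcases eq_or_ne T [] with rfl | hne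
    · simpa using htranslate t hz
    rw [List.isChain_cons] at hchain
    rw [List.nodup_cons] at hnodup
    have htail := ih hne hchain.2 hnodup.2 fun u s hs t ht =>
      hdisj u s (List.mem_cons_of_mem _ hs) t (List.mem_cons_of_mem _ ht)
    have htr : K.Tr B (if Odd (t :: T).length then x else y) (if Odd T.length then x else y) := by
      simp only [List.length_cons, Nat.odd_add_one]
      by_cases hodd : Odd T.length
      · simpa only [hodd, not_true_eq_false, if_true, if_false] using hy.symm
      · simpa only [hodd, not_false_eq_true, if_true, if_false] using hy
    generalize (if Odd T.length then x else y) = e at htr htail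
    have hstep : K.Step (t * e) (T.head hne * e) := by
      have := step_mul_right (hchain.1 _ (List.head_mem_head? hne)) (t * e)
      rwa [mul_mul_mul_comm, mul_inv_cancel, one_mul, mul_comm e] at this
    have hunion : {u | ∃ t' ∈ t :: T, t'⁻¹ * u ∈ B} =
        {u | t⁻¹ * u ∈ B} ∪ {u | ∃ t' ∈ T, t'⁻¹ * u ∈ B} := by
      ext u
      simp only [Set.mem_ofPred_eq, Set.mem_union, List.exists_mem_cons_iff]
    rw [hunion, List.head_cons, List.getLast_cons hne]
    refine (htranslate t htr).trans htail hstep (Set.disjoint_left.2 fun u hu ⟨t', ht', hu'⟩ => ?_)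
    exact hnodup.1 (hdisj u t List.mem_cons_self t' (List.mem_cons_of_mem _ ht') hu hu' ▸ ht')

theorem hasTwoWayPath_of_strip (hfin : K.steps.Finite) (hgen : Subgroup.closure K.steps = ⊤)
    {D : Subgroup A} [Finite (A ⧸ D)] {a b : A} (ha : K.Step 1 a) (haD : a ∈ D) (hBD : B ⊆ D)
    (htile : ∀ x ∈ D, ∃! n : ℤ, ((a ^ 2) ^ n)⁻¹ * x ∈ B) (h₁b : K.Tr B 1 b) (h₁a : K.Tr B 1 a)
    (hab : K.Tr B a (a * b)) : HasTwoWayPath K.graph := by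
  obtain ⟨T, hT, hchain, hnodup, hcover⟩ := (pathTiling_steps hfin hgen D).exists_transversal
  have hdisj : ∀ u, ∀ s ∈ T, ∀ t ∈ T, s⁻¹ * u ∈ D → t⁻¹ * u ∈ D → s = t :=
    fun u s hs t ht hsu htu => (hcover u).unique ⟨hs, hsu⟩ ⟨ht, htu⟩
  set R : Set A := {u | ∃ t ∈ T, t⁻¹ * u ∈ B}
  have hRtile : ∀ x, ∃! n : ℤ, ((a ^ 2) ^ n)⁻¹ * x ∈ R :=
    existsUnique_zpow_of_transversal (T := {t | t ∈ T}) hcover hBD (D.pow_mem haD 2) htile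
  have hrow : ∀ {x y z}, K.Tr B x y → K.Tr B x z →
      K.Tr R (T.head hT * if Odd T.length then x else y) (T.getLast hT * z) := fun hy hz =>
    hy.row hz hT hchain hnodup fun u s hs t ht hsu htu => hdisj u s hs t ht (hBD hsu) (hBD htu)
  have hout := hrow h₁b h₁a
  have hback := hrow hab h₁a.symm
  rw [show (if Odd T.length then a else a * b) = a * if Odd T.length then 1 else b by
    rw [mul_ite, mul_one]] at hback
  generalize (if Odd T.length then 1 else b) = e at hout hback
  have hback' := hback.symm.mul_left (a ^ 2) (B' := {u | (a ^ 2)⁻¹ * u ∈ R}) fun u => by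
    rw [Set.mem_ofPred_eq, inv_mul_cancel_left]
  refine hasTwoWayPath_of_zpow (existsUnique_zpow_sq hRtile) (hout.trans hback' ?_ ?_) ?_
  · convert step_mul_right ha _ using 1
    rw [pow_two, mul_one]
    ac_rfl
  · refine Set.disjoint_left.2 fun u hu hu' =>
      zero_ne_one ((hRtile u).unique (y₁ := 0) (y₂ := 1) ?_ ?_)
    · rwa [zpow_zero, inv_one, one_mul]
    · rwa [zpow_one]
  · convert step_mul_right ha _ using 1
    simp only [pow_two]
    ac_rfl

end Bricks

end PrimeCover

section Independence

variable {A : Type*} [CommGroup A] {a b x : A}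

theorem nodup_map_pow (a : A) : ((List.range (orderOf a)).map (a ^ ·)).Nodup :=
  List.nodup_range.map_on fun _ hi _ hj h =>
    pow_injOn_Iio_orderOf (List.mem_range.1 hi) (List.mem_range.1 hj) h

theorem mem_map_pow (ha : IsOfFinOrder a) :
    x ∈ (List.range (orderOf a)).map (a ^ ·) ↔ x ∈ Subgroup.zpowers a := by
  classical
  rw [← ha.mem_powers_iff_mem_zpowers, ha.mem_powers_iff_mem_range_orderOf, Finset.mem_image]
  simp only [List.mem_map, List.mem_range, Finset.mem_range]

theorem zpow_mem_zpowers_iff (hb : ∀ n > 0, b ^ n ∉ Subgroup.zpowers a) {n : ℤ} :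
    b ^ n ∈ Subgroup.zpowers a ↔ n = 0 := by
  refine ⟨fun h => by_contra fun hn => hb n.natAbs (Int.natAbs_pos.2 hn) ?_, fun h => ?_⟩
  · rcases Int.natAbs_eq n with h' | h' <;> rw [h'] at h
    · rwa [← zpow_natCast]
    · rwa [← zpow_natCast, ← inv_mem_iff, ← zpow_neg]
  · rw [h, zpow_zero]
    exact one_mem _

theorem pow_notMem_zpowers (ha : IsOfFinOrder a) (hb : ¬IsOfFinOrder b) (n : ℕ) (hn : n > 0) :
    b ^ n ∉ Subgroup.zpowers a := by
  rintro ⟨m, hm⟩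
  exact hb ((hm ▸ ha.zpow : IsOfFinOrder (b ^ n)).of_pow hn.ne')

theorem zpow_mul_zpow_eq_one (ha : ¬IsOfFinOrder a) (hb : ∀ n > 0, b ^ n ∉ Subgroup.zpowers a)
    {m n : ℤ} (h : a ^ m * b ^ n = 1) : m = 0 ∧ n = 0 := by
  obtain rfl : n = 0 := (zpow_mem_zpowers_iff hb).1
    ⟨-m, by rw [eq_inv_of_mul_eq_one_right h, ← zpow_neg]⟩
  rw [zpow_zero, mul_one] at h
  exact ⟨by_contra fun hm => ha (isOfFinOrder_iff_zpow_eq_one.2 ⟨m, hm, h⟩), rfl⟩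

theorem nodup_square (hab : ∀ m n : ℤ, a ^ m * b ^ n = 1 → m = 0 ∧ n = 0) :
    [1, a, a * b, b].Nodup := by
  have h₁ := hab 1 0
  have h₂ := hab 1 1
  have h₃ := hab 0 1
  have h₄ := hab 1 (-1)
  simp_all [mul_inv_eq_one, eq_comm]

theorem existsUnique_zpow_sq_pair (ha : ¬IsOfFinOrder a) (x : A) (hx : x ∈ Subgroup.zpowers a) :
    ∃! n : ℤ, ((a ^ 2) ^ n)⁻¹ * x ∈ ({1, a} : Set A) := by
  obtain ⟨m, rfl⟩ := hx
  have hmem : ∀ n : ℤ, ((a ^ 2) ^ n)⁻¹ * a ^ m ∈ ({1, a} : Set A) ↔ m = 2 * n ∨ m = 2 * n + 1 := by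
    intro n
    rw [Set.mem_insert_iff, Set.mem_singleton_iff, inv_mul_eq_one, inv_mul_eq_iff_eq_mul,
      ← zpow_natCast, ← zpow_mul, ← zpow_add_one, Nat.cast_ofNat, eq_comm,
      (injective_zpow_iff_not_isOfFinOrder.2 ha).eq_iff,
      (injective_zpow_iff_not_isOfFinOrder.2 ha).eq_iff]
  simp only [hmem]
  exact ⟨m / 2, by lia, fun n hn => by lia⟩

theorem finite_quotient_of_forall_exists_pow_mem {S : Set A} (hS : S.Finite)
    (hgen : Subgroup.closure S = ⊤) {D : Subgroup A} (h : ∀ s ∈ S, ∃ n > 0, s ^ n ∈ D) :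
    Finite (A ⧸ D) := by
  have : Group.FG A := Group.fg_iff.2 ⟨S, hgen, hS⟩
  have htorsion : ⊤ ≤ (CommGroup.torsion (A ⧸ D)).comap (QuotientGroup.mk' D) := by
    rw [← hgen, Subgroup.closure_le]
    rintro s hs
    obtain ⟨n, hn, hmem⟩ := h s hs
    exact isOfFinOrder_iff_pow_eq_one.2 ⟨n, hn, (QuotientGroup.eq_one_iff (s ^ n)).2 hmem⟩
  refine CommGroup.finite_of_fg_isMulTorsion _ fun x => ?_
  obtain ⟨y, rfl⟩ := QuotientGroup.mk_surjective x
  exact htorsion (Subgroup.mem_top y)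

end Independence

section Ladder

/-- The cycle up one side and down the other of the ladder with rungs from `t` to `a * t`. -/
def ladder {A : Type*} [Mul A] (a : A) (T : List A) : List A := T ++ (T.map (a * ·)).reverse

section Mul

variable {A : Type*} [Mul A] {a : A} {T : List A}

theorem ladder_ne_nil (hT : T ≠ []) : ladder a T ≠ [] :=
  List.append_ne_nil_of_left_ne_nil hT _

theorem head_ladder (hT : T ≠ []) :
    (ladder a T).head (ladder_ne_nil hT) = T.head hT :=
  List.head_append_of_ne_nil hT

theorem getLast_ladder (hT : T ≠ []) :
    (ladder a T).getLast (ladder_ne_nil hT) = a * T.head hT := by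
  have hmap : (T.map (a * ·)).reverse ≠ [] := by
    simpa only [ne_eq, List.reverse_eq_nil_iff, List.map_eq_nil_iff]
  simp only [ladder, List.getLast_append_of_ne_nil _ hmap, List.getLast_reverse, List.head_map]

theorem isChain_ladder {R : A → A → Prop} (hT : T ≠ []) (hR : ∀ {s t}, R s t → R (a * t) (a * s))
    (hchain : T.IsChain R) (hlast : R (T.getLast hT) (a * T.getLast hT)) :
    (ladder a T).IsChain R := by
  refine List.isChain_append.2 ⟨hchain, List.isChain_reverse.2 ((List.isChain_map _).2
    (hchain.imp fun _ _ => hR)), fun x hx y hy => ?_⟩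
  rw [List.getLast?_eq_some_getLast hT, Option.mem_some_iff] at hx
  rw [List.head?_reverse, List.getLast?_map, List.getLast?_eq_some_getLast hT, Option.map_some,
    Option.mem_some_iff] at hy
  rwa [← hx, ← hy]

end Mul

variable {A : Type*} [CommGroup A] {a x : A} {T : List A}

theorem mem_ladder :
    x ∈ ladder a T ↔ ∃ t ∈ T, t⁻¹ * x ∈ ({1, a} : Set A) := by
  simp only [ladder, List.mem_append, List.mem_reverse, List.mem_map, Set.mem_insert_iff,
    Set.mem_singleton_iff, inv_mul_eq_iff_eq_mul, and_or_left, exists_or, mul_one,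
    exists_eq_right, mul_comm a, @eq_comm _ x]

theorem setOf_mem_ladder {F : Set A} (hT : ∀ x, x ∈ T ↔ x ∈ F) :
    {x | x ∈ ladder a T} = {x | x ∈ F ∨ a⁻¹ * x ∈ F} := by
  ext x
  simp only [Set.mem_ofPred_eq, ladder, List.mem_append, List.mem_reverse, List.mem_map, hT,
    ← eq_inv_mul_iff_mul_eq, exists_eq_right]

theorem nodup_ladder (hT : T.Nodup) (h : ∀ t ∈ T, a * t ∉ T) :
    (ladder a T).Nodup := by
  refine hT.append (List.nodup_reverse.2 (hT.map (mul_right_injective a))) fun x hx hx' => ?_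
  obtain ⟨t, ht, rfl⟩ := List.mem_map.1 (List.mem_reverse.1 hx')
  exact h t ht hx

end Ladder

namespace PrimeCover

section Digons

variable {V G A : Type*} [Group G] [MulAction G V] [CommGroup A] {K : PrimeCover V G A}

theorem good_map_pow_of_digon {a : A} (ha : K.Digon a) (hfin : IsOfFinOrder a) :
    K.Good ((List.range (orderOf a)).map (a ^ ·)) := by
  have hne : (List.range (orderOf a)).map (a ^ ·) ≠ [] := by
    simpa only [ne_eq, List.map_eq_nil_iff, List.range_eq_nil] using hfin.orderOf_pos.ne'
  refine good_of_digon hne (nodup_map_pow a) ?_ ?_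
  · refine (List.isChain_map _).2 ((List.isChain_range _ _).2 fun i _ => ?_)
    rw [Nat.succ_eq_add_one, pow_succ]
    exact step_mul_right ha.step _
  · rw [List.getLast_map, List.head_map, List.getLast_range, List.head_range, pow_zero, mul_one,
      inv_eq_of_mul_eq_one_left]
    · exact ha
    · rw [mul_pow_sub_one hfin.orderOf_pos.ne', pow_orderOf_eq_one]

theorem good_square_of_digon {a b : A} (ha : K.Digon a) (hb : K.Step 1 b)
    (hnodup : [1, a, a * b, b].Nodup) : K.Good [1, a, a * b, b] := by
  refine Good.append_comm (l₁ := [a, a * b, b]) (l₂ := [1]) (good_of_digon (by simp) ?_ ?_ ?_)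
  · exact (List.nodup_rotate (n := 1)).2 hnodup
  · have h₁ := step_mul_right hb a
    have h₂ := (step_mul_right ha.step b).symm
    have h₃ := hb.symm
    simp [h₁, mul_comm a b ▸ h₂, h₃]
  · simpa using ha

theorem good_ladder_of_digon {a : A} (ha : K.Digon a) {T : List A} (hT : T ≠ [])
    (hchain : T.IsChain K.Step) (hnodup : T.Nodup) (hdisj : ∀ t ∈ T, a * t ∉ T) :
    K.Good (ladder a T) := by
  refine good_of_digon (ladder_ne_nil hT) (nodup_ladder hnodup hdisj) ?_ ?_
  · refine isChain_ladder hT (fun h => (h.mul_left a).symm) hchain ?_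
    rw [mul_comm]
    exact step_mul_right ha.step _
  · rw [getLast_ladder hT, head_ladder hT, mul_inv_rev, inv_mul_cancel_comm]
    exact ha.inv

theorem hasTwoWayPath_of_digon_of_finite (hfin : K.steps.Finite)
    (hgen : Subgroup.closure K.steps = ⊤) {a : A} (ha : K.Digon a) (hord : ¬IsOfFinOrder a)
    [Finite (A ⧸ Subgroup.zpowers a)] : HasTwoWayPath K.graph := by
  obtain ⟨T, hT, hchain, hnodup, hcover⟩ :=
    (pathTiling_steps hfin hgen (Subgroup.zpowers a)).exists_transversal
  have hdisj : ∀ t ∈ T, a * t ∉ T := by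
    intro t ht hat
    have heq : t = a * t := (hcover t).unique ⟨ht, by simp⟩ ⟨hat, by simp⟩
    exact hord (right_eq_mul.1 heq ▸ IsOfFinOrder.one)
  have hgood := good_ladder_of_digon ha hT (hchain.imp fun s t h => by
    simpa only [mul_inv_cancel_left] using step_mul_right h s) hnodup hdisj
  have htr := hgood.tr_ends
  rw [head_ladder hT, getLast_ladder hT] at htr
  refine hasTwoWayPath_of_zpow (g := a ^ 2) ?_ htr ?_
  · simp only [Set.mem_ofPred_eq, mem_ladder]
    refine existsUnique_zpow_of_transversal (T := {t | t ∈ T}) hcover ?_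
      (pow_mem (Subgroup.mem_zpowers a) 2) (existsUnique_zpow_sq_pair hord)
    rintro x (rfl | rfl)
    · exact one_mem _
    · exact Subgroup.mem_zpowers _
  · rw [pow_two, mul_assoc, mul_comm a (a * _)]
    exact step_mul_right ha.step _

theorem hasTwoWayPath_of_digon [Infinite A] (hfin : K.steps.Finite)
    (hgen : Subgroup.closure K.steps = ⊤) {a : A} (ha : K.Digon a) : HasTwoWayPath K.graph := by
  by_cases hord : IsOfFinOrder a
  · exact hasTwoWayPath_of_good_subgroup hfin hgen (good_map_pow_of_digon ha hord)
      (Set.ext fun _ => mem_map_pow hord)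
  by_cases hb : ∃ b ∈ K.steps, ∀ n > 0, b ^ n ∉ Subgroup.zpowers a
  · obtain ⟨b, hb, hind⟩ := hb
    have hab := fun m n : ℤ => zpow_mul_zpow_eq_one hord hind (m := m) (n := n)
    exact hasTwoWayPath_of_square hfin hgen ha.step hb hab
      (good_square_of_digon ha hb (nodup_square hab))
  push Not at hb
  have := finite_quotient_of_forall_exists_pow_mem hfin hgen hb
  exact hasTwoWayPath_of_digon_of_finite hfin hgen ha hord

end Digons

/-! ### Cayley graphs -/

section Cayley

variable {G A : Type*} [Group G] [CommGroup A] {φ : G →* A} {S : Set G}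

/-- The Cayley graph of a set `S` of generators of `G`, fibred over the quotient `A` of `G` with
kernel of prime order. -/
def cayley (hφ : Function.Surjective φ) (hp : (Nat.card φ.ker).Prime) (S : Set G) :
    PrimeCover G G A where
  graph := .mulCayley S
  smul_adj g _ _ h := SimpleGraph.mulCayley_adj_mul_iff_right.2 h
  φ := φ
  φ_surjective := hφ
  π := φ
  π_surjective := hφ
  π_smul := map_mul φ
  C := φ.ker
  prime_card := hp
  φ_eq_one _ := φ.mem_ker.1
  exists_smul_eq v w h := ⟨w * v⁻¹, φ.mem_ker.2 (by rw [map_mul, map_inv, h, mul_inv_cancel]),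
    inv_mul_cancel_right w v⟩
  eq_one_of_smul_eq _ _ _ := mul_eq_right.1

variable {hφ : Function.Surjective φ} {hp : (Nat.card φ.ker).Prime} {s t z : G}

theorem adj_mul (hs : s ∈ S) (hs₁ : s ≠ 1) (x : G) : (SimpleGraph.mulCayley S).Adj x (x * s) :=
  (SimpleGraph.mulCayley_adj _ _ _).2
    ⟨left_ne_mul.2 hs₁, Or.inl (by rwa [inv_mul_cancel_left])⟩

theorem adj_mul_inv (hs : s ∈ S) (hs₁ : s ≠ 1) (x : G) :
    (SimpleGraph.mulCayley S).Adj x (x * s⁻¹) := by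
  simpa only [inv_mul_cancel_right] using (adj_mul hs hs₁ (x * s⁻¹)).symm

theorem step_cayley (hs : s ∈ S) (hs₁ : s ≠ 1) : (cayley hφ hp S).Step 1 (φ s) :=
  ⟨1, s, map_one φ, rfl, one_mul s ▸ adj_mul hs hs₁ 1⟩

theorem finite_steps_cayley (hS : S.Finite) : (cayley hφ hp S).steps.Finite := by
  refine ((hS.union hS.inv).image φ).subset ?_
  rintro _ ⟨v, w, hv, rfl, hadj⟩
  have hvw : φ (v⁻¹ * w) = φ w := by rw [map_mul, map_inv, show φ v = 1 from hv, inv_one, one_mul]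
  refine ⟨v⁻¹ * w, ((SimpleGraph.mulCayley_adj _ _ _).1 hadj).2.imp_right fun h => ?_, hvw⟩
  rwa [Set.mem_inv, mul_inv_rev, inv_inv]

theorem map_closure_le_closure_steps (hφ : Function.Surjective φ) (hp : (Nat.card φ.ker).Prime)
    (S : Set G) : (Subgroup.closure S).map φ ≤ Subgroup.closure (cayley hφ hp S).steps := by
  rw [φ.map_closure, Subgroup.closure_le]
  rintro _ ⟨s, hs, rfl⟩
  rcases eq_or_ne s 1 with rfl | hs₁
  · rw [map_one]
    exact one_mem _
  · exact Subgroup.subset_closure (step_cayley hs hs₁)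

theorem closure_steps_cayley (hgen : Subgroup.closure S = ⊤) :
    Subgroup.closure (cayley hφ hp S).steps = ⊤ := by
  rw [eq_top_iff, ← φ.range_eq_top.2 hφ, φ.range_eq_map, ← hgen]
  exact map_closure_le_closure_steps hφ hp S

theorem good_cayley {L : List G} (hL : L ≠ []) (hnodup : (L.map φ).Nodup)
    (hchain : L.IsChain (SimpleGraph.mulCayley S).Adj) {c : G} (hc : φ c = 1) (hc₁ : c ≠ 1)
    (hadj : (SimpleGraph.mulCayley S).Adj (L.getLast hL) (c * L.head hL)) :
    (cayley hφ hp S).Good (L.map φ) :=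
  ⟨hnodup, L, hL, rfl, hchain, c, hc, hc₁, hadj⟩

theorem isChain_pow (hs : s ∈ S) (hs₁ : s ≠ 1) (n : ℕ) :
    ((List.range n).map (s ^ ·)).IsChain (SimpleGraph.mulCayley S).Adj :=
  (List.isChain_map _).2 ((List.isChain_range _ _).2 fun i _ => pow_succ s i ▸ adj_mul hs hs₁ _)

theorem hasTwoWayPath_of_pow_orderOf_ne_one [Infinite A] (hφ : Function.Surjective φ)
    (hp : (Nat.card φ.ker).Prime) (hS : S.Finite) (hgen : Subgroup.closure S = ⊤) (hs : s ∈ S)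
    (hord : IsOfFinOrder (φ s)) (hne : s ^ orderOf (φ s) ≠ 1) :
    HasTwoWayPath (SimpleGraph.mulCayley S) := by
  have hs₁ : s ≠ 1 := by
    rintro rfl
    exact hne (one_pow _)
  have hL : (List.range (orderOf (φ s))).map (s ^ ·) ≠ [] := by
    simpa only [ne_eq, List.map_eq_nil_iff, List.range_eq_nil] using hord.orderOf_pos.ne'
  have hmap : ((List.range (orderOf (φ s))).map (s ^ ·)).map φ =
      (List.range (orderOf (φ s))).map (φ s ^ ·) := by
    simp only [List.map_map, Function.comp_def, map_pow]
  have hgood : (cayley hφ hp S).Good ((List.range (orderOf (φ s))).map (φ s ^ ·)) := by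
    rw [← hmap]
    refine good_cayley hL (hmap ▸ nodup_map_pow _) (isChain_pow hs hs₁ _)
      (by rw [map_pow, pow_orderOf_eq_one]) hne ?_
    rw [List.getLast_map, List.head_map, List.getLast_range, List.head_range, pow_zero, mul_one,
      ← pow_sub_one_mul hord.orderOf_pos.ne']
    exact adj_mul hs hs₁ _
  exact hasTwoWayPath_of_good_subgroup (finite_steps_cayley hS) (closure_steps_cayley hgen)
    hgood (Set.ext fun _ => mem_map_pow hord)

theorem map_ladder (z : G) (T : List G) : (ladder z T).map φ = ladder (φ z) (T.map φ) := by
  simp only [ladder, List.map_append, List.map_reverse, List.map_map, Function.comp_def, map_mul]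

theorem map_ladder_pow (s z : G) (n : ℕ) (w : G) (hw : φ w = φ z) :
    (ladder w ((List.range n).map (s ^ ·))).map φ =
      ladder (φ z) ((List.range n).map (φ s ^ ·)) := by
  simp only [map_ladder, List.map_map, Function.comp_def, map_pow, hw]

/-- The second side of the ladder is lifted starting from `sⁿ * z`, so the lift closes up with the
commutator of `sⁿ` and `z`. -/
theorem good_ladder_pow {n : ℕ} (hs : s ∈ S) (hz : z ∈ S) (hsz : ¬Commute (s ^ n) z)
    (hnodup : (ladder (φ z) ((List.range (n + 1)).map (φ s ^ ·))).Nodup) :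
    (cayley hφ hp S).Good (ladder (φ z) ((List.range (n + 1)).map (φ s ^ ·))) := by
  have hs₁ : s ≠ 1 := by
    rintro rfl
    exact hsz (by rw [one_pow]; exact .one_left z)
  have hz₁ : z ≠ 1 := by
    rintro rfl
    exact hsz (Commute.one_right _)
  set w := s ^ n * z * (s ^ n)⁻¹ with hw
  have hφw : φ w = φ z := by simp only [hw, map_mul, map_inv, mul_inv_cancel_comm]
  set T := (List.range (n + 1)).map (s ^ ·) with hT
  have hT₀ : T ≠ [] := List.map_eq_nil_iff.not.2 (List.range_eq_nil.not.2 n.succ_ne_zero)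
  have hhead : T.head hT₀ = 1 := by simp only [hT, List.head_map, List.head_range, pow_zero]
  have hlast : T.getLast hT₀ = s ^ n := by
    simp only [hT, List.getLast_map, List.getLast_range, Nat.add_sub_cancel]
  rw [← map_ladder_pow s z (n + 1) w hφw] at hnodup ⊢
  refine good_cayley (ladder_ne_nil hT₀) hnodup
    (isChain_ladder hT₀ (fun h => (SimpleGraph.mulCayley_adj_mul_iff_right.2 h).symm)
      (isChain_pow hs hs₁ _) ?_) (c := w * z⁻¹) ?_ ?_ ?_
  · rw [hlast, hw, inv_mul_cancel_right]
    exact adj_mul hz hz₁ _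
  · rw [map_mul, map_inv, hφw, mul_inv_cancel]
  · rw [hw, ne_eq, mul_inv_eq_one, mul_inv_eq_iff_eq_mul]
    exact hsz
  · rw [getLast_ladder hT₀, head_ladder hT₀, hhead, mul_one, mul_one]
    exact adj_mul_inv hz hz₁ w

theorem Good.tr_ladder_pow {V : Type*} [MulAction G V] {K : PrimeCover V G A} {a b : A} {n : ℕ}
    (h : K.Good (ladder a ((List.range (n + 2)).map (b ^ ·)))) :
    K.Tr {x | x ∈ ladder a ((List.range (n + 2)).map (b ^ ·))} 1 b ∧
      K.Tr {x | x ∈ ladder a ((List.range (n + 2)).map (b ^ ·))} 1 a ∧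
      K.Tr {x | x ∈ ladder a ((List.range (n + 2)).map (b ^ ·))} a (a * b) := by
  have hcons : ∃ T, (List.range (n + 2)).map (b ^ ·) = 1 :: b :: T := by
    simp only [List.range_succ_eq_map, List.map_cons, pow_zero, pow_one]
    exact ⟨_, rfl⟩
  obtain ⟨T, hT⟩ := hcons
  have hends := h.tr_ends
  rw [hT] at h ⊢
  simp only [hT, getLast_ladder (List.cons_ne_nil _ _), head_ladder (List.cons_ne_nil _ _),
    List.head_cons, mul_one] at hends
  refine ⟨h.tr_of_consecutive ⟨[], T ++ ((1 :: b :: T).map (a * ·)).reverse, by simp [ladder]⟩,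
    hends,
    (h.tr_of_consecutive ⟨(1 :: b :: T) ++ (T.map (a * ·)).reverse, [], by simp [ladder]⟩).symm⟩

theorem hasTwoWayPath_of_torsion_of_not_torsion [Infinite A] (hφ : Function.Surjective φ)
    (hp : (Nat.card φ.ker).Prime) (hS : S.Finite) (hgen : Subgroup.closure S = ⊤) (hs : s ∈ S)
    (hz : z ∈ S) (hsz : ¬Commute s z) (hs_ord : IsOfFinOrder (φ s))
    (hz_ord : ¬IsOfFinOrder (φ z)) : HasTwoWayPath (SimpleGraph.mulCayley S) := by
  by_cases hpow : s ^ orderOf (φ s) = 1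
  swap
  · exact hasTwoWayPath_of_pow_orderOf_ne_one hφ hp hS hgen hs hs_ord hpow
  obtain ⟨n, hn⟩ : ∃ n, orderOf (φ s) = n + 2 := by
    refine Nat.exists_eq_add_of_le' (Nat.two_le_iff _ |>.2 ⟨hs_ord.orderOf_pos.ne', fun h => ?_⟩)
    rw [h, pow_one] at hpow
    exact hsz (hpow ▸ .one_left z)
  have hcomm : ¬Commute (s ^ (n + 1)) z := by
    rw [eq_inv_of_mul_eq_one_left ((pow_succ s (n + 1)).symm.trans (hn ▸ hpow))]
    rwa [Commute.inv_left_iff]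
  have hzF : ∀ m : ℤ, φ z ^ m ∈ Subgroup.zpowers (φ s) → m = 0 :=
    fun m => (zpow_mem_zpowers_iff (pow_notMem_zpowers hs_ord hz_ord)).1
  have hnodup : (ladder (φ z) ((List.range (n + 2)).map (φ s ^ ·))).Nodup := by
    rw [← hn]
    refine nodup_ladder (nodup_map_pow _) fun t ht hzt => ?_
    rw [mem_map_pow hs_ord] at ht hzt
    exact one_ne_zero (hzF 1 (by rwa [zpow_one, ← Subgroup.mul_mem_cancel_right _ ht]))
  obtain ⟨h₀₀, h₀₁, h₁₁⟩ := (good_ladder_pow (hφ := hφ) (hp := hp) hs hz hcomm hnodup).tr_ladder_pow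
  have : Finite (Subgroup.zpowers (φ s)) := hs_ord.finite_zpowers
  have hz₁ : z ≠ 1 := fun h => hsz (h ▸ .one_right s)
  refine hasTwoWayPath_of_two_cosets (K := cayley hφ hp S) (finite_steps_cayley hS)
    (closure_steps_cayley hgen) (step_cayley hz hz₁) hzF ?_ ⟨1, one_mem _, φ s, ?_, h₀₀⟩
    ⟨1, one_mem _, 1, one_mem _, ?_⟩ ⟨1, one_mem _, φ s, ?_, ?_⟩
  · exact setOf_mem_ladder fun _ => hn ▸ mem_map_pow hs_ord
  · exact Subgroup.mem_zpowers _
  · rwa [mul_one]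
  · exact Subgroup.mem_zpowers _
  · rwa [mul_one]

theorem hasTwoWayPath_of_independent [Infinite A] (hφ : Function.Surjective φ)
    (hp : (Nat.card φ.ker).Prime) (hS : S.Finite) (hgen : Subgroup.closure S = ⊤) (hs : s ∈ S)
    (ht : t ∈ S) (hst : ¬Commute s t) (hs_ord : ¬IsOfFinOrder (φ s))
    (hind : ∀ n > 0, φ t ^ n ∉ Subgroup.zpowers (φ s)) :
    HasTwoWayPath (SimpleGraph.mulCayley S) := by
  have hab := fun m n : ℤ => zpow_mul_zpow_eq_one hs_ord hind (m := m) (n := n)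
  have hladder : ladder (φ t) ((List.range 2).map (φ s ^ ·)) = [1, φ s, φ s * φ t, φ t] := by
    simp [ladder, List.range_succ, mul_comm]
  have hgood := good_ladder_pow (hφ := hφ) (hp := hp) (n := 1) hs ht (by rwa [pow_one])
    (hladder ▸ nodup_square hab)
  have hs₁ : s ≠ 1 := fun h => hst (h ▸ .one_left t)
  have ht₁ : t ≠ 1 := fun h => hst (h ▸ .one_right s)
  exact hasTwoWayPath_of_square (finite_steps_cayley hS) (closure_steps_cayley hgen)
    (step_cayley hs hs₁) (step_cayley ht ht₁) hab (hladder ▸ hgood)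

theorem eq_zero_of_natCast_sub_eq_mul {i j k : ℕ} {q : ℤ} (hi : i < k) (hj : j < k)
    (h : (i - j : ℤ) = k * q) : q = 0 := by
  have hk : (k : ℤ) ≠ 0 := by lia
  have : (i - j : ℤ) = 0 := Int.eq_zero_of_abs_lt_dvd ⟨q, h⟩ (by grind)
  simpa only [this, zero_eq_mul, hk, false_or] using h

theorem nodup_hook {a b : A} {j k : ℕ} (hj : 0 < j) (hk : 0 < k)
    (hab : ∀ m n : ℤ, a ^ m * b ^ n = 1 → ∃ q : ℤ, m = -(j * q) ∧ n = k * q) :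
    (hook a b j k).Nodup := by
  refine (List.nodup_range.map fun i i' h => ?_).append (List.nodup_reverse.2
    (List.nodup_range.map fun i i' h => ?_)) fun x hx hx' => ?_
  · obtain ⟨q, hq, hq'⟩ := hab 0 (i - i') (by simp [zpow_sub, h])
    obtain rfl : q = 0 := by simpa [hj.ne'] using hq
    lia
  · obtain ⟨q, hq, hq'⟩ := hab (i - i') 0 (by simpa [zpow_sub, pow_succ, mul_inv_eq_one] using h)
    obtain rfl : q = 0 := by simpa [hk.ne'] using hq'
    lia
  · simp only [List.mem_map, List.mem_reverse, List.mem_range] at hx hx'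
    obtain ⟨i, hi, rfl⟩ := hx
    obtain ⟨l, -, h⟩ := hx'
    obtain ⟨q, hq, hq'⟩ := hab (l + 1) (-i) (by
      rw [zpow_neg, zpow_natCast, mul_inv_eq_one]
      exact_mod_cast h)
    obtain hq₀ | hq₀ : q ≤ -1 ∨ 0 ≤ q := by lia
    all_goals nlinarith

/-- The powers of `a` are lifted to the coset through `bᵏ`, so the lift closes up with
`bᵏ * (aʲ)⁻¹`. -/
theorem good_hook {a b : G} {j k : ℕ} (ha : a ∈ S) (hb : b ∈ S) (ha₁ : a ≠ 1) (hb₁ : b ≠ 1)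
    (hj : 0 < j) (hk : 0 < k) (hrel : φ b ^ k = φ a ^ j) (hne : b ^ k ≠ a ^ j)
    (hnodup : (hook (φ a) (φ b) j k).Nodup) :
    (cayley hφ hp S).Good (hook (φ a) (φ b) j k) := by
  set c := b ^ k * (a ^ j)⁻¹ with hc
  have hφc : φ c = 1 := by rw [hc, map_mul, map_inv, map_pow, map_pow, hrel, mul_inv_cancel]
  set L := (List.range k).map (b ^ ·) ++ ((List.range j).map fun i => c * a ^ (i + 1)).reverse
    with hL
  have hmap : L.map φ = hook (φ a) (φ b) j k := by
    simp only [hL, hook, List.map_append, List.map_reverse, List.map_map, Function.comp_def,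
      map_mul, map_pow, hφc, one_mul]
  have hpow : (List.range k).map (b ^ ·) ≠ [] :=
    List.map_eq_nil_iff.not.2 (List.range_eq_nil.not.2 hk.ne')
  have hpow' : ((List.range j).map fun i => c * a ^ (i + 1)).reverse ≠ [] :=
    List.reverse_eq_nil_iff.not.2 (List.map_eq_nil_iff.not.2 (List.range_eq_nil.not.2 hj.ne'))
  have hL₀ : L ≠ [] := List.append_ne_nil_of_left_ne_nil hpow _
  rw [← hmap] at hnodup ⊢
  refine good_cayley hL₀ hnodup (List.isChain_append.2 ⟨isChain_pow hb hb₁ k,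
    List.isChain_reverse.2 ((List.isChain_map _).2 ((List.isChain_range _ _).2 fun i _ => ?_)),
    fun x hx y hy => ?_⟩) hφc (by rwa [hc, ne_eq, mul_inv_eq_one]) ?_
  · rw [Nat.succ_eq_add_one, pow_succ a (i + 1), ← mul_assoc]
    exact (adj_mul ha ha₁ _).symm
  · rw [List.getLast?_eq_some_getLast hpow, Option.mem_some_iff, List.getLast_map,
      List.getLast_range] at hx
    rw [List.head?_eq_some_head hpow', Option.mem_some_iff, List.head_reverse, List.getLast_map,
      List.getLast_range, Nat.sub_add_cancel hj, hc, inv_mul_cancel_right] at hy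
    rw [← hx, ← hy, ← pow_sub_one_mul hk.ne']
    exact adj_mul hb hb₁ _
  · simp only [hL, List.getLast_append_of_ne_nil _ hpow', List.head_append_of_ne_nil hpow,
      List.getLast_reverse, List.head_map, List.head_range, pow_zero, zero_add, pow_one, mul_one]
    simpa only [mul_inv_cancel_right] using adj_mul_inv ha ha₁ (c * a)

theorem zpow_mul_pow_mem_ladder_iff {a b : A} {i j k : ℕ} (hi : i < k)
    (hab : ∀ m n : ℤ, a ^ m * b ^ n = 1 → ∃ q : ℤ, m = -(j * q) ∧ n = k * q) {m : ℤ} :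
    a ^ m * b ^ i ∈ ladder a ((List.range k).map (b ^ ·)) ↔ m = 0 ∨ m = 1 := by
  rw [mem_ladder]
  constructor
  · rintro ⟨_, ht, h⟩
    obtain ⟨i', hi', rfl⟩ := List.mem_map.1 ht
    rw [List.mem_range] at hi'
    obtain ⟨e, he, h⟩ : ∃ e : ℤ, (e = 0 ∨ e = 1) ∧ (b ^ i')⁻¹ * (a ^ m * b ^ i) = a ^ e := by
      rcases h with h | h
      · exact ⟨0, .inl rfl, h.trans (zpow_zero a).symm⟩
      · exact ⟨1, .inr rfl, h.trans (zpow_one a).symm⟩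
    obtain ⟨q, hq, hq'⟩ := hab (m - e) (i - i') <| calc
      a ^ (m - e) * b ^ (i - i' : ℤ) = (b ^ i')⁻¹ * (a ^ m * b ^ i) * (a ^ e)⁻¹ := by
        rw [zpow_sub a, zpow_sub b, zpow_natCast, zpow_natCast]
        ac_rfl
      _ = 1 := by rw [h, mul_inv_cancel]
    obtain rfl := eq_zero_of_natCast_sub_eq_mul hi hi' hq'
    lia
  · intro h
    refine ⟨b ^ i, List.mem_map.2 ⟨i, List.mem_range.2 hi, rfl⟩, ?_⟩
    rw [mul_comm, mul_inv_cancel_right]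
    rcases h with rfl | rfl
    · exact .inl (zpow_zero a)
    · exact .inr (zpow_one a)

theorem nodup_ladder_range_pow {a b : A} {j k : ℕ} (hj : 0 < j) (hk : 0 < k)
    (hab : ∀ m n : ℤ, a ^ m * b ^ n = 1 → ∃ q : ℤ, m = -(j * q) ∧ n = k * q) :
    (ladder a ((List.range k).map (b ^ ·))).Nodup := by
  refine nodup_ladder (nodup_hook hj hk hab).of_append_left fun t ht hat => ?_
  obtain ⟨i, hi, rfl⟩ := List.mem_map.1 ht
  obtain ⟨i', hi', h⟩ := List.mem_map.1 hat
  obtain ⟨q, hq, hq'⟩ := hab 1 (i - i') (by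
    simp only [zpow_one, zpow_sub, zpow_natCast, h, ← mul_assoc, mul_inv_cancel])
  obtain rfl := eq_zero_of_natCast_sub_eq_mul (List.mem_range.1 hi) (List.mem_range.1 hi') hq'
  rw [mul_zero, neg_zero] at hq
  exact one_ne_zero hq

theorem existsUnique_zpow_sq_ladder {a b : A} {j k : ℕ} (hk : 0 < k) (hrel : b ^ k = a ^ j)
    (hab : ∀ m n : ℤ, a ^ m * b ^ n = 1 → ∃ q : ℤ, m = -(j * q) ∧ n = k * q) {x : A}
    (hx : x ∈ Subgroup.zpowers a ⊔ Subgroup.zpowers b) :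
    ∃! n : ℤ, ((a ^ 2) ^ n)⁻¹ * x ∈ {x | x ∈ ladder a ((List.range k).map (b ^ ·))} := by
  obtain ⟨m, i, hi, rfl⟩ : ∃ (m : ℤ) (i : ℕ), i < k ∧ x = a ^ m * b ^ i := by
    obtain ⟨_, ⟨m, rfl⟩, _, ⟨l, rfl⟩, rfl⟩ := Subgroup.mem_sup.1 hx
    have hk' : (0 : ℤ) < k := by exact_mod_cast hk
    refine ⟨m + j * (l / k), (l % k).toNat, by have := l.emod_lt_of_pos hk'; lia, ?_⟩
    dsimp only
    rw [← zpow_natCast b, Int.toNat_of_nonneg (l.emod_nonneg hk'.ne'), zpow_add, zpow_mul a,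
      zpow_natCast a, ← hrel, ← zpow_natCast, ← zpow_mul, mul_assoc, ← zpow_add,
      Int.mul_ediv_add_emod]
  have hmem (n : ℤ) : ((a ^ 2) ^ n)⁻¹ * (a ^ m * b ^ i) ∈
      {x | x ∈ ladder a ((List.range k).map (b ^ ·))} ↔ m - 2 * n = 0 ∨ m - 2 * n = 1 := by
    have hn : ((a ^ 2) ^ n)⁻¹ * (a ^ m * b ^ i) = a ^ (m - 2 * n) * b ^ i := by
      rw [← zpow_natCast a 2, ← zpow_mul, ← mul_assoc, sub_eq_neg_add, zpow_add, zpow_neg]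
      rfl
    rw [Set.mem_ofPred_eq, hn, zpow_mul_pow_mem_ladder_iff hi hab]
  simp only [hmem]
  exact ⟨m / 2, by dsimp only; lia, fun n hn => by lia⟩

theorem hasTwoWayPath_of_pow_eq_pow (hφ : Function.Surjective φ)
    (hp : (Nat.card φ.ker).Prime) (hS : S.Finite) (hgen : Subgroup.closure S = ⊤) {a b : G}
    (ha : a ∈ S) (hb : b ∈ S) (hab : ¬Commute a b)
    (hfin : ∀ s ∈ S, ∃ n > 0, φ s ^ n ∈ Subgroup.zpowers (φ a)) {j k : ℕ} (hj : 0 < j) (hk : 0 < k)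
    (hrel : b ^ k = a ^ j)
    (hrel' : ∀ m n : ℤ, φ a ^ m * φ b ^ n = 1 → ∃ q : ℤ, m = -(j * q) ∧ n = k * q) :
    HasTwoWayPath (SimpleGraph.mulCayley S) := by
  have ha₁ : a ≠ 1 := fun h => hab (h ▸ .one_left b)
  obtain ⟨n, rfl⟩ : ∃ n, k = n + 2 := by
    refine Nat.exists_eq_add_of_le' (Nat.two_le_iff _ |>.2 ⟨hk.ne', ?_⟩)
    rintro rfl
    rw [pow_one] at hrel
    exact hab (hrel ▸ .self_pow a j)
  have hcomm : ¬Commute (b ^ (n + 1)) a := fun h => hab <| by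
    have hb : b = (b ^ (n + 1))⁻¹ * a ^ j := by
      rw [← hrel, pow_succ b (n + 1), inv_mul_cancel_left]
    rw [hb]
    exact h.symm.inv_right.mul_right (.self_pow a j)
  obtain ⟨h₁b, h₁a, h_ab⟩ :=
    (good_ladder_pow (hφ := hφ) (hp := hp) hb ha hcomm
      (nodup_ladder_range_pow hj hk hrel')).tr_ladder_pow
  set D := Subgroup.zpowers (φ a) ⊔ Subgroup.zpowers (φ b)
  have hDa : Subgroup.zpowers (φ a) ≤ D := le_sup_left
  have hDb : Subgroup.zpowers (φ b) ≤ D := le_sup_right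
  have : Finite (A ⧸ D) := by
    refine finite_quotient_of_forall_exists_pow_mem (S := φ '' S) (hS.image φ) ?_ ?_
    · rw [← φ.map_closure, hgen, ← φ.range_eq_map, φ.range_eq_top.2 hφ]
    · rintro _ ⟨s, hs, rfl⟩
      obtain ⟨n, hn, h⟩ := hfin s hs
      exact ⟨n, hn, hDa h⟩
  have hrelφ : φ b ^ (n + 2) = φ a ^ j := by rw [← map_pow, hrel, map_pow]
  refine hasTwoWayPath_of_strip (finite_steps_cayley hS) (closure_steps_cayley hgen)
    (step_cayley ha ha₁) (hDa (Subgroup.mem_zpowers _)) (fun x hx => ?_)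
    (fun x hx => existsUnique_zpow_sq_ladder hk hrelφ hrel' hx) h₁b h₁a h_ab
  obtain ⟨t, ht, h⟩ := mem_ladder.1 hx
  obtain ⟨i, -, rfl⟩ := List.mem_map.1 ht
  rw [SetLike.mem_coe, ← D.mul_mem_cancel_left (inv_mem (hDb (pow_mem (Subgroup.mem_zpowers _) i)))]
  rcases h with h | h
  · exact h ▸ one_mem _
  · exact h ▸ hDa (Subgroup.mem_zpowers _)

theorem hasTwoWayPath_of_relation [Infinite A] (hφ : Function.Surjective φ)
    (hp : (Nat.card φ.ker).Prime) (hS : S.Finite) (hgen : Subgroup.closure S = ⊤) {a b : G}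
    (ha : a ∈ S) (hb : b ∈ S) (hab : ¬Commute a b)
    (hfin : ∀ s ∈ S, ∃ n > 0, φ s ^ n ∈ Subgroup.zpowers (φ a)) {j k : ℕ} (hj : 0 < j) (hk : 0 < k)
    (hjk : 3 ≤ j + k) (hrel : φ b ^ k = φ a ^ j)
    (hrel' : ∀ m n : ℤ, φ a ^ m * φ b ^ n = 1 → ∃ q : ℤ, m = -(j * q) ∧ n = k * q) :
    HasTwoWayPath (SimpleGraph.mulCayley S) := by
  by_cases hne : b ^ k = a ^ j
  · exact hasTwoWayPath_of_pow_eq_pow hφ hp hS hgen ha hb hab hfin hj hk hne hrel'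
  have ha₁ : a ≠ 1 := fun h => hab (h ▸ .one_left b)
  have hb₁ : b ≠ 1 := fun h => hab (h ▸ .one_right a)
  exact hasTwoWayPath_of_hook (K := cayley hφ hp S) (finite_steps_cayley hS)
    (closure_steps_cayley hgen) (step_cayley ha ha₁) (step_cayley hb hb₁) hj hk hjk hrel hrel'
    (good_hook ha hb ha₁ hb₁ hj hk hrel hne (nodup_hook hj hk hrel'))

end Cayley

section Lift

variable {V G A : Type*} [Group G] [MulAction G V] [CommGroup A] {K : PrimeCover V G A}

theorem exists_lift_of_traceable {J : Type*} {I : SimpleGraph J} {r : J → A} (hI : Traceable I)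
    (hr : ∀ i j, I.Adj i j → K.Step (r i) (r j)) :
    ∃ b : J → V, (∀ j, K.π (b j) = r j) ∧ Traceable (K.graph.comap b) := by
  classical
  rcases hI with ⟨l, hl, hnodup, hmem, hchain⟩ | ⟨f, hf, hadj⟩
  · have hl' : l.map r ≠ [] := List.map_eq_nil_iff.not.2 hl
    obtain ⟨v, hv⟩ := K.π_surjective ((l.map r).head hl')
    obtain ⟨L, -, hL, hLchain, -⟩ :=
      exists_lift hl' ((List.isChain_map r).2 (hchain.imp hr)) hv
    have hlen : L.length = l.length := by simpa only [List.length_map] using congrArg List.length hL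
    have hidx (j : J) : l.idxOf j < L.length := hlen ▸ List.idxOf_lt_length_iff.2 (hmem j)
    refine ⟨fun j => L[l.idxOf j]'(hidx j), fun j => ?_, Or.inl ⟨l, hl, hnodup, hmem, ?_⟩⟩
    · rw [← List.getElem_map K.π (h := by simpa only [List.length_map] using hidx j)]
      simp only [hL, List.getElem_map, List.getElem_idxOf]
    · refine List.isChain_iff_getElem.2 fun i hi => ?_
      simp only [SimpleGraph.comap_adj, hnodup.idxOf_getElem]
      exact List.isChain_iff_getElem.1 hLchain i (hlen ▸ hi)
  · obtain ⟨g, hg⟩ := exists_int_seq (P := fun i v => K.π v = r (f i))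
      (R := fun _ v w => K.graph.Adj v w) (K.π_surjective _)
      (fun i v hv => (hr _ _ (hadj i)).exists_adj hv)
      fun i w hw => ((hr _ _ (hadj i)).symm.exists_adj hw).imp fun _ h => ⟨h.1, h.2.symm⟩
    let e := Equiv.ofBijective f hf
    refine ⟨fun j => g (e.symm j), fun j => ?_, Or.inr ⟨f, hf, fun i => ?_⟩⟩
    · rw [(hg _).1]
      exact congrArg r (e.apply_symm_apply j)
    · rw [SimpleGraph.comap_adj, show f i = e i from rfl, show f (i + 1) = e (i + 1) from rfl,
        e.symm_apply_apply, e.symm_apply_apply]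
      exact (hg i).2

end Lift

section Cayley

open scoped commutatorElement

variable {G A : Type*} [Group G] [CommGroup A] {φ : G →* A} {S : Set G} {s t a b : G}

theorem hasTwoWayPath_of_commute [Infinite G] (hφ : Function.Surjective φ)
    (hp : (Nat.card φ.ker).Prime) {H : Subgroup G} (hker : φ.ker ≤ H) {M : Set H} {T : Set G}
    (hT : T.Finite) (hgen : H ⊔ Subgroup.closure T = ⊤)
    (hcomm : ∀ t ∈ T, ∀ x ∈ H, Commute t x)
    (h : HasTwoWayPath (SimpleGraph.mulCayley M)) :
    HasTwoWayPath (SimpleGraph.mulCayley ((↑) '' M ∪ T)) := by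
  obtain ⟨J, I, r, hI, hr, hmem, huniq⟩ : PathTiling (cayley hφ hp T).steps Set.univ (H.map φ) := by
    refine pathTiling_univ (finite_steps_cayley hT) (fun _ hs => Step.inv hs) (top_unique ?_)
    rw [← φ.range_eq_top.2 hφ, φ.range_eq_map, ← hgen, Subgroup.map_sup]
    exact sup_le_sup_left (map_closure_le_closure_steps hφ hp T) _
  obtain ⟨b, hb, hbI⟩ := exists_lift_of_traceable (K := cayley hφ hp T) hI fun i j hij => by
    simpa only [mul_one, mul_inv_cancel_left] using Step.mul_left (hr i j hij) (r i)
  have hbH (i : J) (g : G) : (b i)⁻¹ * g ∈ H ↔ (r i)⁻¹ * φ g ∈ H.map φ := by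
    rw [← hb i, show (cayley hφ hp T).π = φ from rfl, ← map_inv, ← map_mul, ← Subgroup.mem_comap,
      Subgroup.comap_map_eq_self hker]
  have hadj : ∀ x y : H × J, (SimpleGraph.mulCayley M □
      (SimpleGraph.mulCayley T).comap b).Adj x y →
      (SimpleGraph.mulCayley ((↑) '' M ∪ T)).Adj (b x.2 * x.1) (b y.2 * y.1) := by
    simp only [SimpleGraph.boxProd_adj, SimpleGraph.comap_adj, SimpleGraph.mulCayley_adj]
    rintro ⟨x, i⟩ ⟨y, j⟩ (⟨⟨hxy, hM⟩, rfl : i = j⟩ | ⟨⟨hij, hT⟩, rfl : x = y⟩)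
    · refine ⟨fun h => hxy (Subtype.ext (mul_left_cancel h)), hM.imp ?_ ?_⟩
      all_goals exact fun h => .inl ⟨_, h, by simp [mul_assoc]⟩
    · have hconj (u v : G) (huv : u⁻¹ * v ∈ T) : (u * (x : G))⁻¹ * (v * x) ∈ T := by
        rwa [mul_inv_rev, mul_assoc, ← mul_assoc u⁻¹, (hcomm _ huv x x.2).eq, inv_mul_cancel_left]
      refine ⟨fun h => hij (mul_right_cancel h), hT.imp (fun h => ?_) fun h => ?_⟩
      all_goals exact .inr (hconj _ _ h)
  have hX : Traceable (SimpleGraph.mulCayley M) := .inr h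
  refine (hX.boxProd hbI |>.map ⟨_, hadj _ _⟩ ⟨?_, fun g => ?_⟩).hasTwoWayPath
  · rintro ⟨x, i⟩ ⟨y, j⟩ (hxy : b i * x = b j * y)
    obtain rfl : i = j := by
      refine huniq (φ (b i * x)) i j ((hbH _ _).1 ?_) ((hbH _ _).1 ?_)
      · rw [inv_mul_cancel_left]
        exact x.2
      · rw [hxy, inv_mul_cancel_left]
        exact y.2
    rw [Subtype.ext (mul_left_cancel hxy)]
  · obtain ⟨j, hj⟩ := (hmem (φ g)).1 (Set.mem_univ _)
    exact ⟨(⟨(b j)⁻¹ * g, (hbH j g).2 hj⟩, j), mul_inv_cancel_left _ _⟩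

theorem exists_minimal_relation {a b : A} (ha : ¬IsOfFinOrder a)
    (h : ∃ n > 0, b ^ n ∈ Subgroup.zpowers a) : ∃ k : ℕ, k > 0 ∧ ∃ j : ℤ, b ^ k = a ^ j ∧
      ∀ m n : ℤ, a ^ m * b ^ n = 1 → ∃ q : ℤ, m = -(j * q) ∧ n = k * q := by
  classical
  obtain ⟨hk, j, hj : a ^ j = b ^ Nat.find h⟩ := Nat.find_spec h
  set k := Nat.find h
  have hk' : (0 : ℤ) < k := by exact_mod_cast hk
  refine ⟨k, hk, j, hj.symm, fun m n hmn => ?_⟩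
  have hdiv : b ^ (n % k) = a ^ (-(m + j * (n / k))) := by
    rw [Int.emod_def, zpow_sub, zpow_mul b, zpow_natCast, ← hj, ← zpow_mul,
      eq_inv_of_mul_eq_one_right hmn, zpow_neg, zpow_add, mul_inv]
  have hmod : n % k = 0 := by
    by_contra hne
    have := n.emod_nonneg hk'.ne'
    have := n.emod_lt_of_pos hk'
    refine Nat.find_min h (m := (n % k).toNat) (by lia) ⟨by lia, -(m + j * (n / k)), ?_⟩
    change a ^ _ = _
    rw [← zpow_natCast b, Int.toNat_of_nonneg (n.emod_nonneg hk'.ne'), hdiv]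
  refine ⟨n / k, ?_, by rw [Int.mul_ediv_cancel' (Int.dvd_of_emod_eq_zero hmod)]⟩
  rw [hmod, zpow_zero] at hdiv
  have := injective_zpow_iff_not_isOfFinOrder.2 ha (hdiv.symm.trans (zpow_zero a).symm)
  lia

theorem hasTwoWayPath_of_commensurable [Infinite A] (hφ : Function.Surjective φ)
    (hp : (Nat.card φ.ker).Prime) (hS : S.Finite) (hgen : Subgroup.closure S = ⊤)
    (hinv : ∀ s ∈ S, s⁻¹ ∈ S) (hinj : Set.InjOn φ S) (ha : a ∈ S) (hb : b ∈ S)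
    (hab : ¬Commute a b) (ha_ord : ¬IsOfFinOrder (φ a)) (hb_ord : ¬IsOfFinOrder (φ b))
    (hfin : ∀ s ∈ S, ∃ n > 0, φ s ^ n ∈ Subgroup.zpowers (φ a)) :
    HasTwoWayPath (SimpleGraph.mulCayley S) := by
  obtain ⟨k, hk, j, hrel, hlattice⟩ := exists_minimal_relation ha_ord (hfin b hb)
  have hj : j ≠ 0 := by
    rintro rfl
    exact hb_ord (isOfFinOrder_iff_pow_eq_one.2 ⟨k, hk, hrel.trans (zpow_zero _)⟩)
  obtain ⟨c, hc, hcb, hzpowers, l, hl, hrel, hlattice⟩ : ∃ c ∈ S, ¬Commute c b ∧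
      Subgroup.zpowers (φ c) = Subgroup.zpowers (φ a) ∧ ∃ l : ℕ, l > 0 ∧ φ b ^ k = φ c ^ l ∧
      ∀ m n : ℤ, φ c ^ m * φ b ^ n = 1 → ∃ q : ℤ, m = -(l * q) ∧ n = k * q := by
    obtain ⟨l, rfl | rfl⟩ := j.eq_nat_or_neg
    · exact ⟨a, ha, hab, rfl, l, by lia, by rwa [← zpow_natCast (φ a)], hlattice⟩
    · refine ⟨a⁻¹, hinv a ha, by rwa [Commute.inv_left_iff], ?_, l, by lia, ?_, fun m n h => ?_⟩
      · rw [map_inv, Subgroup.zpowers_inv]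
      · rw [hrel, map_inv, zpow_neg, zpow_natCast, inv_pow]
      · obtain ⟨q, hq, hq'⟩ := hlattice (-m) n (by rwa [zpow_neg, ← inv_zpow, ← map_inv])
        exact ⟨q, by lia, hq'⟩
  refine hasTwoWayPath_of_relation hφ hp hS hgen hc hb hcb (hzpowers ▸ hfin) hl hk ?_ hrel hlattice
  by_contra hlk
  obtain ⟨rfl, rfl⟩ : l = 1 ∧ k = 1 := by lia
  rw [pow_one, pow_one] at hrel
  exact hcb (hinj hb hc hrel ▸ Commute.refl b)

theorem ker_le_of_mem_of_ne_one (hp : (Nat.card φ.ker).Prime) {H : Subgroup G} {c : G}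
    (hc : φ c = 1) (hc₁ : c ≠ 1) (hcH : c ∈ H) : φ.ker ≤ H := by
  have : Fact (Nat.card φ.ker).Prime := ⟨hp⟩
  intro x hx
  obtain ⟨n, hn⟩ := mem_zpowers_of_prime_card rfl (g := (⟨c, hc⟩ : φ.ker)) (g' := ⟨x, hx⟩)
    fun h => hc₁ (congrArg Subtype.val h)
  have hcx : c ^ n = x := congrArg Subtype.val hn
  exact hcx ▸ zpow_mem hcH n

theorem hasTwoWayPath_closure_of_commensurable (hp : (Nat.card φ.ker).Prime) (hS : S.Finite)
    (hinv : ∀ s ∈ S, s⁻¹ ∈ S) (hinj : Set.InjOn φ S) (ha : a ∈ S) (hb : b ∈ S)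
    (hab : ¬Commute a b) (ha_ord : ¬IsOfFinOrder (φ a)) (hb_ord : ¬IsOfFinOrder (φ b))
    (hfin : ∀ s ∈ S, ∃ n > 0, φ s ^ n ∈ Subgroup.zpowers (φ a))
    (hker : φ.ker ≤ Subgroup.closure S) :
    HasTwoWayPath (SimpleGraph.mulCayley ((↑) ⁻¹' S : Set (Subgroup.closure S))) := by
  set H := Subgroup.closure S
  let ψ := φ.subgroupMap H
  let a' : H := ⟨a, Subgroup.subset_closure ha⟩
  let b' : H := ⟨b, Subgroup.subset_closure hb⟩
  have hord {x : H} (hx : ¬IsOfFinOrder (φ x)) : ¬IsOfFinOrder (ψ x) :=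
    fun h => hx ((H.map φ).subtype.isOfFinOrder h)
  have : Infinite (H.map φ) :=
    .of_injective _ (injective_zpow_iff_not_isOfFinOrder.2 (hord (x := a') ha_ord))
  have hcard : (Nat.card ψ.ker).Prime := by
    rwa [H.ker_subgroupMap φ, Nat.card_congr (Subgroup.subgroupOfEquivOfLe hker).toEquiv]
  refine hasTwoWayPath_of_commensurable (a := a') (b := b') (φ.subgroupMap_surjective H) hcard
    (hS.preimage Subtype.val_injective.injOn) Subgroup.closure_closure_coe_preimage
    (fun s hs => hinv s hs) (fun x hx y hy h => Subtype.ext (hinj hx hy (congrArg Subtype.val h)))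
    ha hb (fun h => hab (congrArg Subtype.val h.eq)) (hord ha_ord) (hord hb_ord) fun s hs => ?_
  obtain ⟨n, hn, m, hm⟩ := hfin s hs
  exact ⟨n, hn, m, Subtype.ext hm⟩

theorem hasTwoWayPath_of_dependent_of_independent [Infinite A] (hφ : Function.Surjective φ)
    (hp : (Nat.card φ.ker).Prime) (hS : S.Finite) (hgen : Subgroup.closure S = ⊤) (hs : s ∈ S)
    (ht : t ∈ S) (hst : ¬Commute s t) {α : A} {n : ℕ} (hn : n > 0)
    (hdep : φ s ^ n ∈ Subgroup.zpowers α) (hind : ∀ k > 0, φ t ^ k ∉ Subgroup.zpowers α) :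
    HasTwoWayPath (SimpleGraph.mulCayley S) := by
  by_cases hs_ord : IsOfFinOrder (φ s)
  · refine hasTwoWayPath_of_torsion_of_not_torsion hφ hp hS hgen hs ht hst hs_ord fun ht_ord => ?_
    exact hind _ ht_ord.orderOf_pos (pow_orderOf_eq_one (φ t) ▸ one_mem _)
  · refine hasTwoWayPath_of_independent hφ hp hS hgen hs ht hst hs_ord ?_
    rintro k hk ⟨m, hm : φ s ^ m = φ t ^ k⟩
    refine hind (k * n) (Nat.mul_pos hk hn) ?_
    rw [pow_mul, ← hm, ← zpow_natCast, zpow_comm, zpow_natCast]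
    exact zpow_mem hdep m

/-- The generators commensurable with `a` generate a subgroup which is centralised by all other
generators, unless one of the earlier cases applies. -/
theorem hasTwoWayPath_of_dependent [Infinite A] (hφ : Function.Surjective φ)
    (hp : (Nat.card φ.ker).Prime) (hS : S.Finite) (hgen : Subgroup.closure S = ⊤)
    (hinv : ∀ s ∈ S, s⁻¹ ∈ S) (hinj : Set.InjOn φ S) (ha : a ∈ S) (hb : b ∈ S)
    (hab : ¬Commute a b) (ha_ord : ¬IsOfFinOrder (φ a)) (hb_ord : ¬IsOfFinOrder (φ b))
    (hdep : ∃ n > 0, φ b ^ n ∈ Subgroup.zpowers (φ a)) :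
    HasTwoWayPath (SimpleGraph.mulCayley S) := by
  set M := {s ∈ S | ∃ n > 0, φ s ^ n ∈ Subgroup.zpowers (φ a)}
  have hMS : M ⊆ S := Set.sep_subset _ _
  have haM : a ∈ M := ⟨ha, 1, one_pos, by simp⟩
  have hbM : b ∈ M := ⟨hb, hdep⟩
  by_cases hcomm : ∀ t ∈ S \ M, ∀ m ∈ M, Commute t m
  swap
  · push Not at hcomm
    obtain ⟨t, ⟨ht, htM⟩, s, ⟨hs, n, hn, hsn⟩, hts⟩ := hcomm
    exact hasTwoWayPath_of_dependent_of_independent hφ hp hS hgen hs ht (mt Commute.symm hts) hn hsn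
      fun k hk h => htM ⟨ht, k, hk, h⟩
  have hker : φ.ker ≤ Subgroup.closure M := by
    have ha' := Subgroup.subset_closure haM
    have hb' := Subgroup.subset_closure hbM
    refine ker_le_of_mem_of_ne_one hp (c := ⁅a, b⁆) ?_
      (mt commutatorElement_eq_one_iff_commute.1 hab) ?_
    · rw [map_commutatorElement, commutatorElement_eq_one_iff_commute]
      exact .all _ _
    · exact mul_mem (mul_mem (mul_mem ha' hb') (inv_mem ha')) (inv_mem hb')
  have := Infinite.of_surjective φ hφ
  have hpath := hasTwoWayPath_of_commute hφ hp hker (hS.subset Set.sdiff_subset) (T := S \ M) ?_ ?_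
    (hasTwoWayPath_closure_of_commensurable hp (hS.subset hMS) ?_ (hinj.mono hMS) haM hbM hab ha_ord
      hb_ord (fun s hs => hs.2) hker)
  · rwa [Set.image_preimage_eq_of_subset (Subtype.range_coe ▸ Subgroup.subset_closure),
      Set.union_sdiff_cancel hMS] at hpath
  · rw [← Subgroup.closure_union, Set.union_sdiff_cancel hMS, hgen]
  · intro t ht
    have hle : Subgroup.closure M ≤ Subgroup.centralizer {t} := by
      refine (Subgroup.closure_le _).2 fun m hm => ?_
      exact Subgroup.mem_centralizer_singleton_iff.2 (hcomm t ht m hm).eq.symm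
    exact fun x hx => (Subgroup.mem_centralizer_singleton_iff.1 (hle hx)).symm
  · rintro s ⟨hs, n, hn, h⟩
    exact ⟨hinv s hs, n, hn, by simpa using h⟩

end Cayley

/-! ### Two torsion generators -/

section Torsion

variable {G A : Type*} [Group G] [CommGroup A] {φ : G →* A} {S : Set G} {s t z : G} {p q : List A}
  {hφ : Function.Surjective φ} {hp : (Nat.card φ.ker).Prime}

theorem exists_lift_isChain_ladder (hz : z ∈ S) (hz₁ : z ≠ 1) {T : Set G} (hTS : T ⊆ S)
    (hT : ∀ t ∈ T, Commute t z) {u : G} (hu : Commute u z)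
    (hchain : (φ u :: p).IsChain (cayley hφ hp T).Step) :
    ∃ P : List G, P.map φ = p ∧ (ladder z (u :: P)).IsChain (SimpleGraph.mulCayley S).Adj := by
  obtain ⟨_ | ⟨v, P⟩, hP, hmap, hP', hvu⟩ :=
    exists_lift (List.cons_ne_nil _ _) hchain (v := u) rfl
  · exact absurd rfl hP
  obtain rfl : v = u := hvu
  have hcomm : ∀ x ∈ v :: P, Commute x z := by
    refine hP'.induction _ _ (fun x y hxy hx => ?_) fun _ => hu
    have hxy' : Commute (x⁻¹ * y) z := ((SimpleGraph.mulCayley_adj _ _ _).1 hxy).2.elim (hT _)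
      fun h => by simpa using (hT _ h).inv_left
    simpa using hx.mul_left hxy'
  refine ⟨P, (List.cons.inj hmap).2, isChain_ladder hP
    (fun h => (SimpleGraph.mulCayley_adj_mul_iff_right.2 h).symm)
    (hP'.imp (SimpleGraph.mulCayley_mono hTS)) ?_⟩
  rw [← (hcomm _ (List.getLast_mem hP)).eq]
  exact adj_mul hz hz₁ _

/-- The cycle up and down over the path `t :: q`, through `s * t` and `s`, and up and down over the
path `1 :: p`. -/
def prism (z s t : A) (p q : List A) : List A :=
  ladder z (t :: q) ++ ([z * (s * t), s * t, s, z * s] ++ (ladder z (1 :: p)).reverse)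

theorem prism_perm (z s t : A) (p q : List A) :
    (prism z s t p q).Perm (ladder z ((1 :: p) ++ ([s, s * t] ++ (t :: q)))) := by
  classical
  refine List.perm_iff_count.2 fun x => ?_
  simp only [prism, ladder, List.count_append, List.count_cons, List.count_reverse, List.count_nil,
    List.map_append, List.map_cons, List.map_nil, List.reverse_append, List.reverse_reverse]
  ring

theorem good_prism (hs : s ∈ S) (ht : t ∈ S) (hz : z ∈ S) (hz₁ : z ≠ 1)
    (hst : ¬Commute s t) (hsz : Commute s z) (htz : Commute t z)
    (hp₁ : (1 :: p).IsChain (cayley hφ hp {s, t}).Step)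
    (hq : (φ t :: q).IsChain (cayley hφ hp {s, t}).Step)
    (hnodup : (prism (φ z) (φ s) (φ t) p q).Nodup) :
    (cayley hφ hp S).Good (prism (φ z) (φ s) (φ t) p q) := by
  have hs₁ : s ≠ 1 := fun h => hst (h ▸ .one_left t)
  have ht₁ : t ≠ 1 := fun h => hst (h ▸ .one_right s)
  have hTS : {s, t} ⊆ S := Set.pair_subset hs ht
  have hT : ∀ x ∈ ({s, t} : Set G), Commute x z := by
    rintro x (rfl | rfl) <;> assumption
  obtain ⟨P, rfl, hP⟩ := exists_lift_isChain_ladder hz hz₁ hTS hT (.one_left z) (φ.map_one ▸ hp₁)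
  obtain ⟨Q, rfl, hQ⟩ := exists_lift_isChain_ladder hz hz₁ hTS hT htz hq
  set c := t * s * t⁻¹ * s⁻¹ with hc
  have hφc : φ c = 1 := by
    simp only [hc, map_mul, map_inv, mul_inv_cancel_comm, mul_inv_cancel]
  have hcs : c * s = t * s * t⁻¹ := inv_mul_cancel_right _ _
  have hcsz : Commute (c * s) z := hcs ▸ (htz.mul_left hsz).mul_left htz.inv_left
  have hcz : Commute c z := mul_inv_cancel_right c s ▸ hcsz.mul_left hsz.inv_left
  set L := ladder z (t :: Q) ++
    ([z * (t * s), t * s, c * s, z * (c * s)] ++ ((ladder z (1 :: P)).map (c * ·)).reverse)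
  have hL : L.map φ = prism (φ z) (φ s) (φ t) (P.map φ) (Q.map φ) := by
    simp [L, prism, map_ladder, Function.comp_def, hφc, mul_comm (φ t)]
  rw [← hL] at hnodup ⊢
  refine good_cayley (c := c) (by simp [L]) hnodup ?_ hφc ?_ ?_
  · rw [List.isChain_append, List.isChain_append]
    refine ⟨hQ, ⟨?_, List.isChain_reverse.2 ((List.isChain_map _).2 (hP.imp fun _ _ h =>
      (SimpleGraph.mulCayley_adj_mul_iff_right.2 h).symm)), ?_⟩, ?_⟩
    · have h₁ := (adj_mul hz hz₁ (t * s)).symm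
      have h₂ := adj_mul_inv ht ht₁ (t * s)
      have h₃ := adj_mul hz hz₁ (c * s)
      rw [(htz.mul_left hsz).eq] at h₁
      rw [← hcs] at h₂
      rw [hcsz.eq] at h₃
      simp [h₁, h₂, h₃]
    · have hadj := (adj_mul hs hs₁ (z * c)).symm
      rw [mul_assoc, ← hcz.eq] at hadj
      simpa [ladder] using hadj
    · have hne : t :: Q ≠ [] := List.cons_ne_nil _ _
      simpa [List.getLast?_eq_some_getLast (ladder_ne_nil hne), getLast_ladder hne,
        -SimpleGraph.mulCayley_adj_mul_iff_right, mul_assoc] using adj_mul hs hs₁ (z * t)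
  · rw [hc, ne_eq, mul_inv_eq_one, mul_inv_eq_iff_eq_mul]
    exact mt Eq.symm hst
  · simpa [L, ladder] using adj_mul ht ht₁ c

theorem hasTwoWayPath_of_prism [Infinite A] (hφ : Function.Surjective φ)
    (hp : (Nat.card φ.ker).Prime) (hS : S.Finite) (hgen : Subgroup.closure S = ⊤) (hs : s ∈ S)
    (ht : t ∈ S) (hz : z ∈ S) (hst : ¬Commute s t) (hsz : Commute s z) (htz : Commute t z)
    {F : Subgroup A} (hz_ord : ¬IsOfFinOrder (φ z))
    (hp₁ : (1 :: p).IsChain (cayley hφ hp {s, t}).Step)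
    (hq : (φ t :: q).IsChain (cayley hφ hp {s, t}).Step)
    (hnodup : ((1 :: p) ++ ([φ s, φ s * φ t] ++ (φ t :: q))).Nodup)
    (hF : ∀ x, x ∈ (1 :: p) ++ ([φ s, φ s * φ t] ++ (φ t :: q)) ↔ x ∈ F) :
    HasTwoWayPath (SimpleGraph.mulCayley S) := by
  have hfin : Finite F :=
    ((List.finite_toSet _).subset fun x hx => (hF x).2 hx : (F : Set A).Finite)
  have hzF : ∀ n : ℤ, φ z ^ n ∈ F → n = 0 := by
    intro n hn
    obtain ⟨k, hk, hzk⟩ := isOfFinOrder_iff_zpow_eq_one.1 <|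
      F.subtype.isOfFinOrder (isOfFinOrder_of_finite ⟨φ z ^ n, hn⟩)
    by_contra hn₀
    exact hz_ord (isOfFinOrder_iff_zpow_eq_one.2
      ⟨n * k, mul_ne_zero hn₀ hk, (zpow_mul _ _ _).trans hzk⟩)
  have hzF' : φ z ∉ F := fun h => one_ne_zero (hzF 1 (by rwa [zpow_one]))
  have hz₁ : z ≠ 1 := by
    rintro rfl
    exact hzF' (φ.map_one ▸ one_mem F)
  have hsF : φ s ∈ F := (hF _).1 (by simp)
  have htF : φ t ∈ F := (hF _).1 (by simp)
  have hperm := prism_perm (φ z) (φ s) (φ t) p q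
  have hgood := good_prism hs ht hz hz₁ hst hsz htz hp₁ hq <| hperm.nodup_iff.2 <|
    nodup_ladder hnodup fun x hx hzx => by
      rw [hF] at hx hzx
      exact hzF' ((F.mul_mem_cancel_right hx).1 hzx)
  have hset : {x | x ∈ prism (φ z) (φ s) (φ t) p q} = {x | x ∈ F ∨ (φ z)⁻¹ * x ∈ F} :=
    (Set.ext fun _ => hperm.mem_iff).trans (setOf_mem_ladder hF)
  refine hasTwoWayPath_of_two_cosets (K := cayley hφ hp S) (finite_steps_cayley hS)
    (closure_steps_cayley hgen) (step_cayley hz hz₁) hzF hset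
    ⟨φ t, htF, 1, one_mem _, ?_⟩ ⟨φ s * φ t, mul_mem hsF htF, φ s * φ t, mul_mem hsF htF, ?_⟩
    ⟨φ s, hsF, 1, one_mem _, ?_⟩
  · simpa [prism, ladder] using hgood.tr_ends
  · exact (hgood.tr_of_consecutive ⟨ladder (φ z) (φ t :: q),
      [φ s, φ z * φ s] ++ (ladder (φ z) (1 :: p)).reverse, by simp [prism]⟩).symm
  · exact hgood.tr_of_consecutive ⟨ladder (φ z) (φ t :: q) ++ [φ z * (φ s * φ t), φ s * φ t, φ s],
      p.map (φ z * ·) ++ (1 :: p).reverse, by simp [prism, ladder]⟩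

section Spiral

variable {a u : A}

/-- The enumeration of the cosets `u ^ r * ⟨a⟩`, for `r = 0, 1, …`, one after the other and each
along powers of `a⁻¹`, where `n` stands for the order of `a`. -/
def spiral (a u : A) (n N : ℕ) : A := u ^ (N / n) * a⁻¹ ^ N

theorem spiral_succ (n N : ℕ) :
    spiral a u n (N + 1) = spiral a u n N * a⁻¹ ∨
      spiral a u n (N + 1) = spiral a u n N * (a⁻¹ * u) := by
  simp only [spiral, Nat.succ_div, pow_succ]
  split_ifs
  · right
    rw [pow_succ]
    ac_rfl
  · exact .inl (mul_assoc _ _ _).symm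

theorem mk_spiral (n N : ℕ) :
    ((spiral a u n N : A) : A ⧸ Subgroup.zpowers a) = (u : A ⧸ Subgroup.zpowers a) ^ (N / n) := by
  have ha : (a⁻¹ : A) ^ N ∈ Subgroup.zpowers a := pow_mem (inv_mem (Subgroup.mem_zpowers a)) N
  rw [spiral, QuotientGroup.mk_mul_of_mem _ ha, QuotientGroup.mk_pow]

theorem injOn_spiral :
    Set.InjOn (spiral a u (orderOf a))
      (Set.Iio (orderOf (u : A ⧸ Subgroup.zpowers a) * orderOf a)) := by
  intro M hM N hN h
  have hdiv : M / orderOf a = N / orderOf a := by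
    refine pow_injOn_Iio_orderOf (Nat.div_lt_of_lt_mul (mul_comm (orderOf a) _ ▸ hM))
      (Nat.div_lt_of_lt_mul (mul_comm (orderOf a) _ ▸ hN)) ?_
    simpa only [mk_spiral] using congrArg (QuotientGroup.mk (s := Subgroup.zpowers a)) h
  have hmod : M % orderOf a = N % orderOf a := by
    rwa [spiral, spiral, hdiv, mul_right_inj, pow_inj_mod, orderOf_inv] at h
  rw [← Nat.div_add_mod M (orderOf a), hdiv, hmod, Nat.div_add_mod]

theorem mem_map_spiral (ha : IsOfFinOrder a) (hu : IsOfFinOrder (u : A ⧸ Subgroup.zpowers a))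
    {x : A} :
    x ∈ (List.range (orderOf (u : A ⧸ Subgroup.zpowers a) * orderOf a)).map
        (spiral a u (orderOf a)) ↔
      x ∈ (Subgroup.zpowers (u : A ⧸ Subgroup.zpowers a)).comap (QuotientGroup.mk' _) := by
  rw [Subgroup.mem_comap, QuotientGroup.mk'_apply, ← mem_map_pow hu, List.mem_map, List.mem_map]
  constructor
  · rintro ⟨N, hN, rfl⟩
    exact ⟨N / orderOf a, List.mem_range.2 (Nat.div_lt_of_lt_mul
      (mul_comm (orderOf a) _ ▸ List.mem_range.1 hN)), (mk_spiral _ N).symm⟩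
  · rintro ⟨r, hr, hx⟩
    obtain ⟨i, hi, hix⟩ := List.mem_map.1 ((mem_map_pow ha.inv).2
      (Subgroup.zpowers_inv (g := a) ▸ QuotientGroup.eq.1 hx))
    rw [orderOf_inv, List.mem_range] at hi
    refine ⟨i + orderOf a * r, List.mem_range.2 ?_, ?_⟩
    · have := Nat.mul_le_mul_left (orderOf a) (Nat.succ_le_of_lt (List.mem_range.1 hr))
      lia
    · rw [spiral, Nat.add_mul_div_left _ _ ha.orderOf_pos, Nat.div_eq_of_lt hi, zero_add, pow_add,
        pow_mul, inv_pow a (orderOf a), pow_orderOf_eq_one, inv_one, one_pow, mul_one, hix]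
      exact mul_inv_cancel_left _ _

theorem map_spiral {b : A} {m : ℕ} (ha : orderOf a = m + 2) (r : ℕ) :
    (List.range ((m + 1) + (2 + (r + 1)))).map (spiral a (a * b) (orderOf a)) =
      (1 :: (List.range m).map fun N => spiral a (a * b) (orderOf a) (N + 1)) ++
        ([a, a * b] ++ (b :: (List.range r).map fun N => spiral a (a * b) (orderOf a)
          (m + 4 + N))) := by
  have ha₁ : a⁻¹ ^ (m + 2) = 1 := by rw [inv_pow, ← ha, pow_orderOf_eq_one, inv_one]
  have h₀ : spiral a (a * b) (orderOf a) 0 = 1 := by simp [spiral]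
  have h₁ : spiral a (a * b) (orderOf a) (m + 1) = a := by
    rw [spiral, ha, Nat.div_eq_of_lt (Nat.lt_succ_self _), pow_zero, one_mul,
      eq_inv_of_mul_eq_one_left ((pow_succ _ _).symm.trans ha₁), inv_inv]
  have h₂ : spiral a (a * b) (orderOf a) (m + 2) = a * b := by
    rw [spiral, ha, Nat.div_self m.succ.succ_pos, pow_one, ha₁, mul_one]
  have h₃ : spiral a (a * b) (orderOf a) (m + 3) = b := by
    have hdiv : (m + 3) / (m + 2) = 1 := Nat.div_eq_of_lt_le (by lia) (by lia)
    rw [spiral, ha, hdiv, pow_one, pow_succ, ha₁, one_mul, mul_comm a, mul_inv_cancel_right]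
  rw [List.range_add, List.range_succ_eq_map, List.range_add, List.range_succ_eq_map (n := r)]
  simp [List.range_succ, h₀, h₁, h₂, h₃, Function.comp_def, ← add_assoc, add_right_comm]

end Spiral

theorem hasTwoWayPath_of_notMem_zpowers [Infinite A] (hφ : Function.Surjective φ)
    (hp : (Nat.card φ.ker).Prime) (hS : S.Finite) (hgen : Subgroup.closure S = ⊤) (hs : s ∈ S)
    (ht : t ∈ S) (hz : z ∈ S) (hst : ¬Commute s t) (hsz : Commute s z) (htz : Commute t z)
    (hs_ord : IsOfFinOrder (φ s)) (ht_ord : IsOfFinOrder (φ t)) (hz_ord : ¬IsOfFinOrder (φ z))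
    (hs₁ : φ s ≠ 1) (hmem : φ t ∉ Subgroup.zpowers (φ s)) :
    HasTwoWayPath (SimpleGraph.mulCayley S) := by
  have hu : IsOfFinOrder ((φ s * φ t : A) : A ⧸ Subgroup.zpowers (φ s)) :=
    (QuotientGroup.mk' _).isOfFinOrder (hs_ord.mul ht_ord)
  have hu₁ : ((φ s * φ t : A) : A ⧸ Subgroup.zpowers (φ s)) ≠ 1 := by
    rwa [ne_eq, QuotientGroup.eq_one_iff, Subgroup.mul_mem_cancel_left _ (Subgroup.mem_zpowers _)]
  have hmem_F := @mem_map_spiral _ _ _ _ hs_ord hu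
  have hnodup := List.nodup_range.map_on fun M hM N hN h =>
    @injOn_spiral _ _ (φ s) (φ s * φ t) M (List.mem_range.1 hM) N (List.mem_range.1 hN) h
  set w := spiral (φ s) (φ s * φ t) (orderOf (φ s)) with hw
  have hs' : s ∈ ({s, t} : Set G) := .inl rfl
  have ht' : t ∈ ({s, t} : Set G) := .inr rfl
  have hstep : ∀ N, (cayley hφ hp {s, t}).Step (w N) (w (N + 1)) := by
    intro N
    obtain h | h := spiral_succ (a := φ s) (u := φ s * φ t) (orderOf (φ s)) N <;> rw [hw, h]
    · exact step_mul_right (step_cayley hs' fun h => hs₁ (h ▸ φ.map_one)).inv _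
    · rw [inv_mul_cancel_left]
      exact step_mul_right (step_cayley ht' fun h => hmem (h ▸ φ.map_one ▸ one_mem _)) _
  have hchain (n : ℕ) : ((List.range n).map w).IsChain (cayley hφ hp {s, t}).Step :=
    (List.isChain_map _).2 ((List.isChain_range _ _).2 fun N _ => hstep N)
  obtain ⟨m, hm⟩ : ∃ m, orderOf (φ s) = m + 2 := Nat.exists_eq_add_of_le' <|
    (Nat.two_le_iff _).2 ⟨hs_ord.orderOf_pos.ne', mt orderOf_eq_one_iff.1 hs₁⟩
  obtain ⟨k, hk⟩ : ∃ k, orderOf ((φ s * φ t : A) : A ⧸ Subgroup.zpowers (φ s)) = k + 2 :=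
    Nat.exists_eq_add_of_le' <|
      (Nat.two_le_iff _).2 ⟨hu.orderOf_pos.ne', mt orderOf_eq_one_iff.1 hu₁⟩
  obtain ⟨r, hr⟩ : ∃ r, orderOf ((φ s * φ t : A) : A ⧸ Subgroup.zpowers (φ s)) * orderOf (φ s) =
      (m + 1) + (2 + (r + 1)) := ⟨k * (m + 2) + m, by rw [hk, hm]; ring⟩
  have hw_chain := hchain ((m + 1) + (2 + (r + 1)))
  rw [hr, hw, map_spiral hm] at hnodup hmem_F
  rw [hw, map_spiral hm] at hw_chain
  exact hasTwoWayPath_of_prism hφ hp hS hgen hs ht hz hst hsz htz hz_ord hw_chain.left_of_append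
    hw_chain.right_of_append.right_of_append hnodup fun _ => hmem_F

section Detour

/-- The exponents `j + 2, j + 1, …, 2` followed by `j + 4, j + 5, …, j + m + 3`: as powers of an
element `a` of order `j + 4 + m`, they form a path that starts at `a ^ (j + 2)`, uses the step
`a ^ (j + 2)` once, and leaves out exactly `1`, `a` and `a ^ (j + 3)`. -/
def detour (j m : ℕ) : List ℕ :=
  ((List.range (j + 1)).map (2 + ·)).reverse ++ (List.range m).map (j + 4 + ·)

theorem perm_detour (j m : ℕ) :
    ([0, 1, j + 3] ++ detour j m).Perm (List.range (j + 4 + m)) := by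
  have hrange : List.range (j + 4 + m) =
      ([0, 1] ++ (List.range (j + 1)).map (2 + ·) ++ [j + 3]) ++
        (List.range m).map (j + 4 + ·) := by
    rw [List.range_add, show j + 4 = 2 + (j + 1) + 1 by ring, List.range_succ, List.range_add]
    simp [List.range_succ, add_comm 2]
  refine List.perm_iff_count.2 fun x => ?_
  simp only [hrange, detour, List.count_append, List.count_cons, List.count_reverse,
    List.count_nil]
  ring

theorem isChain_detour {V : Type*} [MulAction G V] {K : PrimeCover V G A} {a : A} {j m : ℕ}
    (ha : K.Step 1 a) (hb : K.Step 1 (a ^ (j + 2))) :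
    ((detour j m).map (a ^ ·)).IsChain K.Step := by
  have hpow (i : ℕ) : K.Step (a ^ i) (a ^ (i + 1)) := pow_succ a i ▸ step_mul_right ha _
  rw [List.isChain_map, detour, List.isChain_append, List.isChain_reverse]
  refine ⟨(List.isChain_map _).2 ((List.isChain_range _ _).2 fun i _ => (hpow _).symm),
    (List.isChain_map _).2 ((List.isChain_range _ _).2 fun i _ => hpow _), ?_⟩
  rintro _ hx _ hy
  obtain _ | m := m
  · simp at hy
  · have hjump := step_mul_right hb (a ^ 2)
    simp only [List.range_succ_eq_map, List.map_cons, List.getLast?_reverse, List.head?_cons,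
      Option.mem_some_iff, add_zero] at hx hy
    rwa [← hx, ← hy, show j + 4 = 2 + (j + 2) by ring, pow_add]

end Detour

theorem hasTwoWayPath_of_mem_zpowers [Infinite A] (hφ : Function.Surjective φ)
    (hp : (Nat.card φ.ker).Prime) (hS : S.Finite) (hgen : Subgroup.closure S = ⊤) (hs : s ∈ S)
    (ht : t ∈ S) (hz : z ∈ S) (hst : ¬Commute s t) (hsz : Commute s z) (htz : Commute t z)
    (hs_ord : IsOfFinOrder (φ s)) (hz_ord : ¬IsOfFinOrder (φ z))
    (ht₁ : φ t ≠ 1) (ht_s : φ t ≠ φ s) (ht_inv : φ t ≠ (φ s)⁻¹)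
    (hmem : φ t ∈ Subgroup.zpowers (φ s)) :
    HasTwoWayPath (SimpleGraph.mulCayley S) := by
  obtain ⟨j, m, hj, hord⟩ : ∃ j m, φ t = φ s ^ (j + 2) ∧ orderOf (φ s) = j + 4 + m := by
    obtain ⟨i, hi, hti⟩ := List.mem_map.1 ((mem_map_pow hs_ord).2 hmem)
    rw [List.mem_range] at hi
    have hi₀ : i ≠ 0 := fun h => ht₁ (by rw [← hti, h, pow_zero])
    have hi₁ : i ≠ 1 := fun h => ht_s (by rw [← hti, h, pow_one])
    have hi₂ : i + 1 ≠ orderOf (φ s) := fun h => ht_inv <| by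
      rw [← hti, ← mul_eq_one_iff_eq_inv, ← pow_succ, h, pow_orderOf_eq_one]
    exact ⟨i - 2, orderOf (φ s) - i - 2, by rw [← hti]; congr; lia, by lia⟩
  obtain ⟨I, hI⟩ : ∃ I, detour j m = (j + 2) :: I :=
    ⟨((List.range j).map (2 + ·)).reverse ++ (List.range m).map (j + 4 + ·), by
      simp [detour, List.range_succ, add_comm 2 j]⟩
  have hmap : [1] ++ ([φ s, φ s * φ t] ++ (φ t :: I.map (φ s ^ ·))) =
      ([0, 1, j + 3] ++ detour j m).map (φ s ^ ·) := by
    simp [hI, hj, pow_succ']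
  have hq : (φ t :: I.map (φ s ^ ·)).IsChain (cayley hφ hp {s, t}).Step := by
    have hs' : s ∈ ({s, t} : Set G) := .inl rfl
    have ht' : t ∈ ({s, t} : Set G) := .inr rfl
    have hdetour := isChain_detour (K := cayley hφ hp {s, t}) (m := m)
      (step_cayley hs' fun h => hst (h ▸ .one_left t))
      (hj ▸ step_cayley ht' fun h => ht₁ (h ▸ φ.map_one))
    rwa [hI, List.map_cons, ← hj] at hdetour
  have hperm := (hord ▸ perm_detour j m).map (φ s ^ ·)
  refine hasTwoWayPath_of_prism hφ hp hS hgen hs ht hz hst hsz htz hz_ord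
    (List.isChain_singleton 1) hq (F := Subgroup.zpowers (φ s)) ?_ fun x => ?_
  · rw [hmap, hperm.nodup_iff]
    exact nodup_map_pow _
  · rw [hmap, hperm.mem_iff]
    exact mem_map_pow hs_ord

theorem hasTwoWayPath_of_torsion [Infinite A] (hφ : Function.Surjective φ)
    (hp : (Nat.card φ.ker).Prime) (hS : S.Finite) (hgen : Subgroup.closure S = ⊤)
    (hinv : ∀ s ∈ S, s⁻¹ ∈ S) (hinj : Set.InjOn φ (insert 1 S)) (hs : s ∈ S) (ht : t ∈ S)
    (hst : ¬Commute s t) (hs_ord : IsOfFinOrder (φ s)) (ht_ord : IsOfFinOrder (φ t)) :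
    HasTwoWayPath (SimpleGraph.mulCayley S) := by
  obtain ⟨z, hz, hz_ord⟩ : ∃ z ∈ S, ¬IsOfFinOrder (φ z) := by
    by_contra! htorsion
    have hgen' : Subgroup.closure (φ '' S) = ⊤ := by
      rw [← φ.map_closure, hgen, ← φ.range_eq_map, φ.range_eq_top.2 hφ]
    have : Finite (A ⧸ (⊥ : Subgroup A)) := by
      refine finite_quotient_of_forall_exists_pow_mem (hS.image φ) hgen' ?_
      rintro _ ⟨s, hs, rfl⟩
      obtain ⟨n, hn, hsn⟩ := isOfFinOrder_iff_pow_eq_one.1 (htorsion s hs)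
      exact ⟨n, hn, Subgroup.mem_bot.2 hsn⟩
    exact not_finite_iff_infinite.2 ‹_› (.of_equiv _ (QuotientGroup.quotientBot (G := A)).toEquiv)
  by_cases hsz : Commute s z
  swap
  · exact hasTwoWayPath_of_torsion_of_not_torsion hφ hp hS hgen hs hz hsz hs_ord hz_ord
  by_cases htz : Commute t z
  swap
  · exact hasTwoWayPath_of_torsion_of_not_torsion hφ hp hS hgen ht hz htz ht_ord hz_ord
  have hs' := Set.mem_insert_of_mem 1 hs
  have ht' := Set.mem_insert_of_mem 1 ht
  have hs₁ : φ s ≠ 1 := fun h =>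
    hst (hinj hs' (Set.mem_insert 1 S) (h.trans φ.map_one.symm) ▸ .one_left t)
  have ht₁ : φ t ≠ 1 := fun h =>
    hst (hinj ht' (Set.mem_insert 1 S) (h.trans φ.map_one.symm) ▸ .one_right s)
  by_cases hmem : φ t ∈ Subgroup.zpowers (φ s)
  · refine hasTwoWayPath_of_mem_zpowers hφ hp hS hgen hs ht hz hst hsz htz hs_ord hz_ord ht₁
      (fun h => hst (hinj ht' hs' h ▸ .refl _)) (fun h => hst ?_) hmem
    rw [← map_inv] at h
    exact hinj ht' (Set.mem_insert_of_mem 1 (hinv s hs)) h ▸ (Commute.refl s).inv_right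
  · exact hasTwoWayPath_of_notMem_zpowers hφ hp hS hgen hs ht hz hst hsz htz hs_ord ht_ord hz_ord
      hs₁ hmem

end Torsion

theorem hasTwoWayPath_mulCayley {G A : Type*} [Group G] [CommGroup A] [Infinite A] {φ : G →* A}
    {S : Set G} {s t : G} (hφ : Function.Surjective φ)
    (hp : (Nat.card φ.ker).Prime) (hS : S.Finite) (hgen : Subgroup.closure S = ⊤)
    (hinv : ∀ s ∈ S, s⁻¹ ∈ S) (hinj : Set.InjOn φ (insert 1 S)) (hs : s ∈ S) (ht : t ∈ S)
    (hst : ¬Commute s t) : HasTwoWayPath (SimpleGraph.mulCayley S) := by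
  by_cases hs_ord : IsOfFinOrder (φ s) <;> by_cases ht_ord : IsOfFinOrder (φ t)
  · exact hasTwoWayPath_of_torsion hφ hp hS hgen hinv hinj hs ht hst hs_ord ht_ord
  · exact hasTwoWayPath_of_torsion_of_not_torsion hφ hp hS hgen hs ht hst hs_ord ht_ord
  · exact hasTwoWayPath_of_torsion_of_not_torsion hφ hp hS hgen ht hs (mt .symm hst) ht_ord hs_ord
  by_cases hdep : ∃ n > 0, φ t ^ n ∈ Subgroup.zpowers (φ s)
  · exact hasTwoWayPath_of_dependent hφ hp hS hgen hinv (hinj.mono (Set.subset_insert 1 S)) hs ht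
      hst hs_ord ht_ord hdep
  · push Not at hdep
    exact hasTwoWayPath_of_independent hφ hp hS hgen hs ht hst hs_ord hdep

end PrimeCover

/-! ### Vertex-transitive graphs -/

theorem forall_of_connected {V : Type*} {X : SimpleGraph V} (hX : X.Connected) {P : V → Prop}
    {v : V} (hv : P v) (hP : ∀ u w, X.Adj u w → P u → P w) (w : V) : P w := by
  induction (SimpleGraph.reachable_iff_reflTransGen v w).1 (hX v w) with
  | refl => exact hv
  | tail _ hadj ih => exact hP _ _ hadj ih

section Connection

variable {V G : Type*} [Group G] [MulAction G V] {X : SimpleGraph V} {v : V}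

variable (G) in
/-- The generators of the Cayley graph of `G` that maps to `X` by the orbit map of `v`. -/
def connectionSet (X : SimpleGraph V) (v : V) : Set G := {g | X.Adj v (g • v)}

theorem inv_mem_connectionSet (hX : ∀ (g : G) {u w : V}, X.Adj u w → X.Adj (g • u) (g • w)) {g : G}
    (hg : g ∈ connectionSet G X v) : g⁻¹ ∈ connectionSet G X v := by
  have hadj := (hX g⁻¹ hg).symm
  rwa [inv_smul_smul] at hadj

/-- The orbit map of `v`, as a map from a Cayley graph of `G` to `X`. -/
def orbitHom (hX : ∀ (g : G) {u w : V}, X.Adj u w → X.Adj (g • u) (g • w)) (v : V) :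
    SimpleGraph.mulCayley (connectionSet G X v) →g X where
  toFun g := g • v
  map_rel' {g h} hgh := by
    rcases ((SimpleGraph.mulCayley_adj _ _ _).1 hgh).2 with hadj | hadj
    · simpa only [smul_smul, mul_inv_cancel_left] using hX g hadj
    · simpa only [smul_smul, mul_inv_cancel_left] using (hX h hadj).symm

theorem closure_connectionSet (hX : ∀ (g : G) {u w : V}, X.Adj u w → X.Adj (g • u) (g • w))
    (hconn : X.Connected) (hv : Function.Bijective fun g : G => g • v) :
    Subgroup.closure (connectionSet G X v) = ⊤ := by
  refine (Subgroup.eq_top_iff' _).2 fun g => ?_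
  refine forall_of_connected hconn (P := fun w => ∀ g : G, g • v = w → g ∈ Subgroup.closure _)
    (v := v) (fun g hg => ?_) (fun u w hadj hu g hg => ?_) (g • v) g rfl
  · exact hv.1 (hg.trans (one_smul G v).symm) ▸ one_mem _
  · obtain ⟨h, rfl⟩ := hv.2 u
    have hhg : h⁻¹ * g ∈ connectionSet G X v := by
      have hadj' := hX h⁻¹ hadj
      rwa [inv_smul_smul, ← hg, smul_smul] at hadj'
    simpa only [mul_inv_cancel_left] using mul_mem (hu h rfl) (Subgroup.subset_closure hhg)

end Connection

theorem exists_not_commute {G : Type*} [Group G] {S : Set G} (hgen : Subgroup.closure S = ⊤)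
    (hG : commutator G ≠ ⊥) : ∃ s ∈ S, ∃ t ∈ S, ¬Commute s t := by
  by_contra! hcomm
  have := Subgroup.isMulCommutative_closure hcomm
  rw [hgen] at this
  exact hG (Subgroup.commutator_self_eq_bot_iff.2 this)

namespace PrimeCover

variable {V G A : Type*} [Group G] [MulAction G V] [CommGroup A] {K : PrimeCover V G A}

theorem infinite_base (K : PrimeCover V G A) [Infinite V] : Infinite A := by
  have : Finite K.C := Nat.finite_of_card_ne_zero K.prime_card.ne_zero
  by_contra hA
  rw [not_infinite_iff_finite] at hA
  choose σ hσ using K.π_surjective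
  refine not_finite_iff_infinite.2 ‹Infinite V›
    (Finite.of_surjective (fun x : A × K.C => (x.2 : G) • σ x.1) fun v => ?_)
  obtain ⟨c, hc, hcv⟩ := K.exists_smul_eq (σ (K.π v)) v (hσ _)
  exact ⟨(K.π v, ⟨c, hc⟩), hcv⟩

theorem finite_steps (v : V) (hlf : (K.graph.neighborSet v).Finite) : K.steps.Finite := by
  refine (hlf.image fun w => (K.π v)⁻¹ * K.π w).subset fun s hs => ?_
  obtain ⟨w, hw, hadj⟩ := (step_mul_right hs (K.π v)).exists_adj rfl
  exact ⟨w, hadj, inv_mul_eq_of_eq_mul hw⟩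

theorem closure_steps (hconn : K.graph.Connected) : Subgroup.closure K.steps = ⊤ := by
  obtain ⟨v, hv⟩ := K.π_surjective 1
  refine (Subgroup.eq_top_iff' _).2 fun α => ?_
  obtain ⟨w, rfl⟩ := K.π_surjective α
  refine forall_of_connected hconn (P := fun w => K.π w ∈ Subgroup.closure K.steps) (v := v)
    (hv ▸ one_mem _) (fun u w hadj hu => ?_) w
  have hstep : K.Step 1 ((K.π u)⁻¹ * K.π w) := by
    rw [← inv_mul_cancel (K.π u)]
    exact Step.mul_left ⟨u, w, rfl, rfl, hadj⟩ _
  simpa only [mul_inv_cancel_left] using mul_mem hu (Subgroup.subset_closure hstep)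

theorem hasTwoWayPath_of_loop [Infinite A] (hfin : K.steps.Finite)
    (hgen : Subgroup.closure K.steps = ⊤) {v w : V} (hadj : K.graph.Adj v w)
    (hvw : K.π v = K.π w) : HasTwoWayPath K.graph := by
  obtain ⟨u, hu⟩ := K.π_surjective 1
  obtain ⟨g, rfl⟩ := exists_smul_eq_vertex K v u
  obtain ⟨c, hc, hcw⟩ := K.exists_smul_eq (g • v) (g • w) (by rw [K.π_smul, K.π_smul, hvw])
  have hgadj := hcw ▸ K.smul_adj g hadj
  have hc₁ : c ≠ 1 := by
    rintro rfl
    exact hgadj.ne (one_smul G _).symm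
  have hgood : K.Good [1] := ⟨List.nodup_singleton 1, [g • v], List.cons_ne_nil _ _,
    by rw [List.map_singleton, hu], .singleton _, c, hc, hc₁, hgadj⟩
  exact hasTwoWayPath_of_good_subgroup hfin hgen (H := ⊥) hgood (by simp)

theorem hasTwoWayPath_of_not_injOn [Infinite A] (hfin : K.steps.Finite)
    (hgen : Subgroup.closure K.steps = ⊤) {v : V}
    (hinj : ¬Set.InjOn K.π (insert v (K.graph.neighborSet v))) : HasTwoWayPath K.graph := by
  rw [Set.injOn_insert (SimpleGraph.notMem_neighborSet_self _), not_and_or, not_not] at hinj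
  rcases hinj with hinj | ⟨w, hadj, hw⟩
  · simp only [Set.InjOn, not_forall] at hinj
    obtain ⟨u, hu, w, hw, huw, hne⟩ := hinj
    obtain ⟨c, hc, rfl⟩ := K.exists_smul_eq u w huw
    exact hasTwoWayPath_of_digon hfin hgen (digon_of_adj hc (fun hc₁ => hne (by
      rw [hc₁, one_smul])) hu hw)
  · exact hasTwoWayPath_of_loop hfin hgen hadj hw.symm

theorem eq_one_of_smul_eq_of_injOn [FaithfulSMul G V] (hconn : K.graph.Connected)
    (hinj : ∀ v, Set.InjOn K.π (insert v (K.graph.neighborSet v))) {g : G} {v : V}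
    (hg : g • v = v) : g = 1 := by
  have hφ : K.φ g = 1 := right_eq_mul.1 (hg ▸ K.π_smul g v)
  refine FaithfulSMul.eq_of_smul_eq_smul (α := V) fun w => (one_smul G w).symm ▸
    forall_of_connected hconn (P := fun w => g • w = w) hg (fun u w hadj hu => ?_) w
  have hgadj := K.smul_adj g hadj
  rw [hu] at hgadj
  exact hinj u (.inr hgadj) (.inr hadj) (by rw [K.π_smul, hφ, one_mul])

theorem hasTwoWayPath_of_injOn [FaithfulSMul G V] [Infinite A] (hconn : K.graph.Connected)
    (hlf : ∀ v, (K.graph.neighborSet v).Finite) (hG : commutator G ≠ ⊥)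
    (hinj : ∀ v, Set.InjOn K.π (insert v (K.graph.neighborSet v))) : HasTwoWayPath K.graph := by
  obtain ⟨v, hv⟩ := K.π_surjective 1
  have hπ (g : G) : K.π (g • v) = K.φ g := by rw [K.π_smul, hv, mul_one]
  have hbij : Function.Bijective fun g : G => g • v :=
    ⟨fun g h hgh => inv_mul_eq_one.1 (eq_one_of_smul_eq_of_injOn hconn hinj
      ((mul_smul _ _ v).trans (inv_smul_eq_iff.2 hgh.symm))), K.exists_smul_eq_vertex v⟩
  have hker : K.φ.ker = K.C := by
    refine le_antisymm (fun g hg => ?_) K.φ_eq_one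
    obtain ⟨c, hc, hcg⟩ := K.exists_smul_eq v (g • v) (by rw [hπ, hv, hg])
    exact hbij.1 hcg ▸ hc
  have hgen := closure_connectionSet K.smul_adj hconn hbij
  obtain ⟨s, hs, t, ht, hst⟩ := exists_not_commute hgen hG
  have hφ_inj : Set.InjOn K.φ (insert 1 (connectionSet G K.graph v)) := by
    have hmem : ∀ g ∈ insert 1 (connectionSet G K.graph v),
        g • v ∈ insert v (K.graph.neighborSet v) := by
      rintro g (rfl | hg)
      exacts [.inl (one_smul G v), .inr hg]
    intro g hg h hh hgh
    exact hbij.1 (hinj v (hmem g hg) (hmem h hh) (by rw [hπ, hπ, hgh]))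
  have hpath : HasTwoWayPath (SimpleGraph.mulCayley (connectionSet G K.graph v)) :=
    hasTwoWayPath_mulCayley K.φ_surjective (hker ▸ K.prime_card)
      ((hlf v).preimage hbij.1.injOn) hgen (fun _ => inv_mem_connectionSet K.smul_adj) hφ_inj
      hs ht hst
  exact hpath.map (orbitHom K.smul_adj v) hbij

theorem hasTwoWayPath [Infinite V] [FaithfulSMul G V] (hconn : K.graph.Connected)
    (hlf : ∀ v, (K.graph.neighborSet v).Finite) (hG : commutator G ≠ ⊥) :
    HasTwoWayPath K.graph := by
  have := infinite_base K
  by_cases hinj : ∀ v, Set.InjOn K.π (insert v (K.graph.neighborSet v))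
  · exact hasTwoWayPath_of_injOn hconn hlf hG hinj
  · push Not at hinj
    obtain ⟨v, hinj⟩ := hinj
    exact hasTwoWayPath_of_not_injOn (finite_steps v (hlf v)) (closure_steps hconn) hinj

end PrimeCover

section Quotient

variable {V G : Type*} [Group G] [MulAction G V]

theorem eq_one_of_smul_eq_of_prime_card [FaithfulSMul G V] [MulAction.IsPretransitive G V]
    {N : Subgroup G} [N.Normal] (hN : (Nat.card N).Prime) {c : G} (hc : c ∈ N) {v : V}
    (hcv : c • v = v) : c = 1 := by
  have : Fact (Nat.card N).Prime := ⟨hN⟩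
  rcases ((MulAction.stabilizer G v).subgroupOf N).eq_bot_or_eq_top_of_prime_card with hbot | htop
  · have hmem : (⟨c, hc⟩ : N) ∈ (MulAction.stabilizer G v).subgroupOf N := hcv
    rw [hbot, Subgroup.mem_bot] at hmem
    exact congrArg Subtype.val hmem
  · have hfix : v ∈ MulAction.fixedPoints N V := fun n => Subgroup.subgroupOf_eq_top.1 htop n.2
    refine FaithfulSMul.eq_of_smul_eq_smul (α := V) fun w => ?_
    obtain ⟨g, rfl⟩ := MulAction.exists_smul_eq G v w
    rw [one_smul]
    exact smul_mem_fixedPoints_of_normal g hfix ⟨c, hc⟩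

variable (G) in
/-- The projection onto the largest abelian quotient of `G` in which the stabiliser of `v`
vanishes. -/
def orbitProjection (v : V) :
    G →* Abelianization G ⧸ (MulAction.stabilizer G v).map Abelianization.of :=
  (QuotientGroup.mk' _).comp Abelianization.of

theorem orbitProjection_surjective (v : V) : Function.Surjective (orbitProjection G v) :=
  (QuotientGroup.mk'_surjective _).comp QuotientGroup.mk_surjective

theorem orbitProjection_eq_iff {v : V} {g h : G} :
    orbitProjection G v g = orbitProjection G v h ↔ ∃ c ∈ commutator G, c • g • v = h • v := by
  refine QuotientGroup.eq.trans ⟨?_, ?_⟩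
  · rintro ⟨x, hx, hxgh⟩
    have hc : x⁻¹ * (g⁻¹ * h) ∈ commutator G := QuotientGroup.eq.1 hxgh
    refine ⟨_, Subgroup.Normal.conj_mem inferInstance _ hc (g * x), ?_⟩
    rw [smul_smul, show g * x * (x⁻¹ * (g⁻¹ * h)) * (g * x)⁻¹ * g = h * x⁻¹ by group, mul_smul,
      inv_smul_eq_iff.2 (MulAction.mem_stabilizer_iff.1 hx).symm]
  · rintro ⟨c, hc, hcg⟩
    refine ⟨g⁻¹ * c⁻¹ * h, ?_, ?_⟩
    · rw [SetLike.mem_coe, MulAction.mem_stabilizer_iff, mul_smul, mul_smul, ← hcg,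
        inv_smul_smul, inv_smul_smul]
    · have hφ : Abelianization.of c = 1 := Abelianization.commutator_subset_ker _ hc
      rw [map_mul, map_mul, map_inv, map_inv, hφ, inv_one, mul_one]

/-- The orbits of the commutator subgroup of `G`, if it has prime order, fibre the graph `X`. -/
noncomputable def commutatorCover [FaithfulSMul G V] [MulAction.IsPretransitive G V]
    (X : SimpleGraph V) (hX : ∀ (g : G) {u w : V}, X.Adj u w → X.Adj (g • u) (g • w))
    (hG : (Nat.card (commutator G)).Prime) (v : V) :
    PrimeCover V G (Abelianization G ⧸ (MulAction.stabilizer G v).map Abelianization.of) where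
  graph := X
  smul_adj := hX
  φ := orbitProjection G v
  φ_surjective := orbitProjection_surjective v
  π w := orbitProjection G v (MulAction.exists_smul_eq G v w).choose
  π_surjective x := by
    obtain ⟨g, rfl⟩ := orbitProjection_surjective v x
    exact ⟨g • v, orbitProjection_eq_iff.2
      ⟨1, one_mem _, (one_smul G _).trans (MulAction.exists_smul_eq G v (g • v)).choose_spec⟩⟩
  π_smul g w := by
    rw [← map_mul, orbitProjection_eq_iff]
    exact ⟨1, one_mem _, by rw [one_smul, mul_smul, (MulAction.exists_smul_eq G v w).choose_spec,
      (MulAction.exists_smul_eq G v (g • w)).choose_spec]⟩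
  C := commutator G
  prime_card := hG
  φ_eq_one _ hc := Abelianization.commutator_subset_ker _ hc
  exists_smul_eq u w h := by
    simpa only [(MulAction.exists_smul_eq G v _).choose_spec] using orbitProjection_eq_iff.1 h
  eq_one_of_smul_eq c hc v := eq_one_of_smul_eq_of_prime_card hG hc

end Quotient

end TwoWayHamiltonian

/-- Let `X` be a connected, infinite, locally finite simple graph and
`G` a group acting faithfully and transitively on the vertices of `X` by graph
automorphisms. If the commutator subgroup of `G` is cyclic of prime order `p`, then
`X` has a two-way hamiltonian path. -/
theorem transitive_graph_two_way_hamiltonian_of_commutator_prime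
    {V : Type*} [Infinite V] (X : SimpleGraph V) (hconn : X.Connected)
    (hlf : ∀ v : V, (X.neighborSet v).Finite)
    (G : Type*) [Group G] [MulAction G V]
    (hauto : ∀ (g : G) (u w : V), X.Adj u w → X.Adj (g • u) (g • w))
    (hfaithful : ∀ g : G, (∀ v : V, g • v = v) → g = 1)
    (htrans : ∀ u w : V, ∃ g : G, g • u = w)
    (p : ℕ) (hp : p.Prime) (hcomm : Nat.card (commutator G) = p) :
    ∃ v : ℤ → V, Function.Bijective v ∧ ∀ i : ℤ, X.Adj (v i) (v (i + 1)) := by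
  have : FaithfulSMul G V := faithfulSMul_iff.2 hfaithful
  have : MulAction.IsPretransitive G V := ⟨htrans⟩
  obtain ⟨v⟩ := hconn.nonempty
  have hprime : (Nat.card (commutator G)).Prime := hcomm ▸ hp
  have hne : commutator G ≠ ⊥ := fun h => hprime.ne_one (h ▸ Subgroup.card_bot)
  exact (TwoWayHamiltonian.commutatorCover X (fun g _ _ => hauto g _ _) hprime v).hasTwoWayPath
    hconn hlf hne
end

section
/- Let G be an infinite abelian group generated by a finite subset S with 1 ∉ S and S = S⁻¹. Then the Cayley graph Cay(G;S) has a two-way hamiltonian path; that is, there exists a bijection v : ℤ → G such that v(i)⁻¹·v(i+1) ∈ S for every i ∈ ℤ. -/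
/-!
A finitely generated torsion abelian group is finite, so some `s₀ ∈ S` has infinite order and its
powers are a two-way hamiltonian path of `⟨s₀⟩`. Any two-way hamiltonian path of a subgroup `H`
extends to one of `H⟨s⟩` for `s ∈ S`: the cosets of `H` in `H⟨s⟩` are those of the powers `s ^ j`,
where `j` runs through `{0, …, n - 1}` or `ℤ` according to the order of `s` modulo `H`, so the grid
`ℤ × {0, …, n - 1}` or `ℤ × ℤ` spans the Cayley graph of `H⟨s⟩`, and such a grid has a two-way
hamiltonian path, which winds through its columns or through nested U-shapes. Hence a maximal
subgroup that has such a path contains `S`, and there is one because finitely generated abelian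
groups are noetherian.
-/

open SimpleGraph Function

theorem exists_int_add_one_eq_add {A : Type*} [AddCommGroup A] (c : ℤ → A) :
    ∃ s : ℤ → A, ∀ k, s (k + 1) = s k + c k := by
  refine ⟨fun
    | .ofNat n => ∑ i ∈ Finset.range n, c i
    | .negSucc n => -∑ i ∈ Finset.range (n + 1), c (.negSucc i), ?_⟩
  rintro (n | n | n)
  · exact Finset.sum_range_succ _ n
  · simp
  · change -_ = -_ + _
    rw [Finset.sum_range_succ _ (n + 1), neg_add, neg_add_cancel_right]

/-- A graph has a two-way hamiltonian path if its vertices can be listed, each exactly once, as a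
two-way infinite sequence whose consecutive terms are adjacent. -/
def HasTwoWayHamiltonianPath {V : Type*} (X : SimpleGraph V) : Prop :=
  ∃ v : ℤ → V, Bijective v ∧ ∀ i, X.Adj (v i) (v (i + 1))

namespace HasTwoWayHamiltonianPath

variable {V W : Type*} {X : SimpleGraph V} {Y : SimpleGraph W}

theorem map (hX : HasTwoWayHamiltonianPath X) (f : X →g Y) (hf : Bijective f) :
    HasTwoWayHamiltonianPath Y :=
  let ⟨v, hv, hadj⟩ := hX
  ⟨f ∘ v, hf.comp hv, fun i => f.map_adj (hadj i)⟩

theorem boxProd (hX : HasTwoWayHamiltonianPath X) (hY : HasTwoWayHamiltonianPath (hasse ℤ □ Y)) :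
    HasTwoWayHamiltonianPath (X □ Y) := by
  obtain ⟨v, hv, hadj⟩ := hX
  have hadj' : ∀ {i j : ℤ}, (hasse ℤ).Adj i j → X.Adj (v i) (v j) := by
    intro i j hij
    rcases hasse_adj.1 hij with h | h
    · exact Order.covBy_iff_add_one_eq.1 h ▸ hadj i
    · exact Order.covBy_iff_add_one_eq.1 h ▸ (hadj j).symm
  refine hY.map ⟨Prod.map v id, fun {p q} hpq => ?_⟩ (hv.prodMap bijective_id)
  rw [boxProd_adj] at hpq ⊢
  exact hpq.imp (And.imp_left hadj') (And.imp_right (congrArg v))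

theorem of_index (idx : V → ℤ) (hinj : Injective idx) (hbelow : ∀ z, ∃ a, idx a ≤ z)
    (hsucc : ∀ a, ∃ b, X.Adj a b ∧ idx b = idx a + 1) : HasTwoWayHamiltonianPath X := by
  have hsurj : Surjective idx := by
    intro z
    obtain ⟨a, ha⟩ := hbelow z
    induction z, ha using Int.leInduction with
    | base => exact ⟨a, rfl⟩
    | succ z _ ih =>
      obtain ⟨b, rfl⟩ := ih
      exact (hsucc b).imp fun _ => And.right
  let e := Equiv.ofBijective idx ⟨hinj, hsurj⟩
  refine ⟨e.symm, e.symm.bijective, fun i => ?_⟩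
  obtain ⟨b, hadj, hb⟩ := hsucc (e.symm i)
  have : e.symm (i + 1) = b := by
    rw [Equiv.symm_apply_eq]
    exact (hb.trans (congrArg (· + 1) (e.apply_symm_apply i))).symm
  rwa [this]

theorem of_concat (len : ℤ → ℕ) (p : ∀ k, Fin (len k + 1) → V)
    (hp : Bijective fun q : Σ k, Fin (len k + 1) => p q.1 q.2)
    (hstep : ∀ k (j : Fin (len k)), X.Adj (p k j.castSucc) (p k j.succ))
    (hjoin : ∀ k, X.Adj (p k (Fin.last _)) (p (k + 1) 0)) : HasTwoWayHamiltonianPath X := by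
  obtain ⟨start, hstart⟩ := exists_int_add_one_eq_add fun k => (len k + 1 : ℤ)
  have hmono : StrictMono start := strictMono_int_of_lt_succ fun k => by
    have := hstart k
    omega
  suffices HasTwoWayHamiltonianPath (X.comap fun q : Σ k, Fin (len k + 1) => p q.1 q.2) from
    this.map ⟨_, id⟩ hp
  refine of_index (fun q => start q.1 + (q.2 : ℕ)) ?_ ?_ ?_
  · have fst_le : ∀ {k l} {i : Fin (len k + 1)} {j : Fin (len l + 1)},
        start k + (i : ℕ) = start l + (j : ℕ) → k ≤ l := fun {k l i j} h =>
      Int.lt_add_one_iff.1 (hmono.lt_iff_lt.1 (by have := hstart l; omega))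
    rintro ⟨k, i⟩ ⟨l, j⟩ h
    obtain rfl := (fst_le h).antisymm (fst_le h.symm)
    obtain rfl : i = j := by simpa [Fin.val_inj] using h
    rfl
  · intro z
    obtain ⟨_, ⟨k, rfl⟩, hk⟩ :=
      not_bddBelow_iff.1 hmono.not_bddBelow_range_of_isPredArchimedean z
    exact ⟨⟨k, 0⟩, by simpa using hk.le⟩
  · rintro ⟨k, j⟩
    cases j using Fin.lastCases with
    | last => exact ⟨⟨k + 1, 0⟩, hjoin k, by simp [hstart, add_assoc]⟩
    | cast j => exact ⟨⟨k, j.succ⟩, hstep k j, by simp [add_assoc]⟩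

theorem of_snake (len : ℤ → ℕ) (p : ∀ k, Fin (len k + 1) → V)
    (hp : Bijective fun q : Σ k, Fin (len k + 1) => p q.1 q.2)
    (hstep : ∀ k (j : Fin (len k)), X.Adj (p k j.castSucc) (p k j.succ))
    (hfirst : ∀ k, X.Adj (p k 0) (p (k + 1) 0))
    (hlast : ∀ k, X.Adj (p k (Fin.last _)) (p (k + 1) (Fin.last _))) :
    HasTwoWayHamiltonianPath X := by
  -- Traversing every other path backwards makes each path end where the next one starts.
  let σ : ∀ k, Equiv.Perm (Fin (len k + 1)) := fun k => if Even k then 1 else Fin.revPerm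
  refine of_concat len (fun k => p k ∘ σ k) (hp.comp (Equiv.sigmaCongrRight σ).bijective) ?_ ?_
  · intro k j
    by_cases hk : Even k
    · simpa [σ, hk] using hstep k j
    · simpa [σ, hk, Fin.rev_castSucc, Fin.rev_succ] using (hstep k j.rev).symm
  · intro k
    rcases Int.even_or_odd k with hk | hk
    · simpa [σ, hk, Int.not_even_iff_odd.2 hk.add_one] using hlast k
    · simpa [σ, Int.not_even_iff_odd.2 hk, hk.add_one] using hfirst k

end HasTwoWayHamiltonianPath

theorem hasse_int_adj_iff {i j : ℤ} : (hasse ℤ).Adj i j ↔ j = i + 1 ∨ j = i - 1 := by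
  rw [hasse_adj, Order.covBy_iff_add_one_eq, Order.covBy_iff_add_one_eq]
  omega

theorem hasTwoWayHamiltonianPath_strip (n : ℕ) [NeZero n] :
    HasTwoWayHamiltonianPath (hasse ℤ □ pathGraph n) := by
  obtain ⟨n, rfl⟩ := Nat.exists_eq_succ_of_ne_zero (NeZero.ne n)
  refine .of_snake (fun _ => n) Prod.mk (Equiv.sigmaEquivProd ℤ (Fin (n + 1))).bijective ?_ ?_ ?_
  all_goals simp [boxProd_adj, pathGraph_adj]

/-- The radius of the U-shape number `k`, see `uPoint`. -/
def uRadius (k : ℤ) : ℕ := (max k (-1 - k)).toNat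

/-- The plane is the disjoint union of U-shapes: for `0 ≤ k` the U-shape number `k` consists of the
`(x, y)` with `0 ≤ y` and `max |x| y = k`, and the reflection `y ↦ -1 - y` maps it to the U-shape
number `-1 - k`. Its points are `uPoint k t` for `|t| ≤ 2 * uRadius k`, with feet at
`t = ±2 * uRadius k` in the row `y = 0` or `y = -1`. -/
def uPoint (k t : ℤ) : ℤ × ℤ :=
  (max (-uRadius k) (min t (uRadius k)),
    if 0 ≤ k then min k (2 * k - |t|) else max k (2 * k + 1 + |t|))

/-- The number of the U-shape through a point, see `uPoint`. -/
def uLevel (p : ℤ × ℤ) : ℤ := if 0 ≤ p.2 then max p.2 |p.1| else min p.2 (-1 - |p.1|)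

/-- The parameter of a point on its U-shape, see `uPoint`. -/
def uParam (p : ℤ × ℤ) : ℤ :=
  if 0 ≤ p.1 then p.1 + |uLevel p - p.2| else p.1 - |uLevel p - p.2|

theorem uLevel_uPoint {k t : ℤ} (ht : |t| ≤ 2 * uRadius k) : uLevel (uPoint k t) = k := by
  simp only [uLevel, uPoint, uRadius, abs_eq_max_neg] at *
  omega

theorem uParam_uPoint {k t : ℤ} (ht : |t| ≤ 2 * uRadius k) : uParam (uPoint k t) = t := by
  rw [uParam, uLevel_uPoint ht]
  simp only [uPoint, uRadius, abs_eq_max_neg] at *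
  omega

theorem uPoint_uLevel_uParam (p : ℤ × ℤ) : uPoint (uLevel p) (uParam p) = p := by
  obtain ⟨x, y⟩ := p
  obtain ⟨k, hk⟩ : ∃ k, uLevel (x, y) = k := ⟨_, rfl⟩
  ext <;> simp only [uParam, hk] <;>
    simp only [uPoint, uLevel, uRadius, abs_eq_max_neg] at * <;> omega

theorem abs_uParam_le (p : ℤ × ℤ) : |uParam p| ≤ 2 * uRadius (uLevel p) := by
  simp only [uParam, uLevel, uRadius, abs_eq_max_neg]
  omega

theorem uPoint_adj_uPoint {k t : ℤ} (ht : |t| ≤ 2 * uRadius k) (ht' : |t + 1| ≤ 2 * uRadius k) :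
    (hasse ℤ □ hasse ℤ).Adj (uPoint k t) (uPoint k (t + 1)) := by
  simp only [boxProd_adj, hasse_int_adj_iff, uPoint]
  rcases (by omega : 0 ≤ t ∨ t + 1 ≤ 0) with h | h
  · rw [abs_of_nonneg (by omega : 0 ≤ t + 1)] at *
    rw [abs_of_nonneg h]
    unfold uRadius at *
    omega
  · rw [abs_of_nonpos (by omega : t ≤ 0)] at *
    rw [abs_of_nonpos h]
    unfold uRadius at *
    omega

theorem uPoint_left_foot (k : ℤ) :
    uPoint k (-(2 * uRadius k)) = (-(uRadius k : ℤ), if 0 ≤ k then 0 else -1) := by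
  ext <;> simp only [uPoint, uRadius, abs_eq_max_neg] at * <;> omega

theorem uPoint_right_foot (k : ℤ) :
    uPoint k (2 * uRadius k) = ((uRadius k : ℤ), if 0 ≤ k then 0 else -1) := by
  ext <;> simp only [uPoint, uRadius, abs_eq_max_neg] at * <;> omega

theorem hasTwoWayHamiltonianPath_plane : HasTwoWayHamiltonianPath (hasse ℤ □ hasse ℤ) := by
  have hparam : ∀ k (j : Fin (4 * uRadius k + 1)), |(j : ℤ) - 2 * uRadius k| ≤ 2 * uRadius k :=
    fun k j => abs_le.2 (by omega)
  refine .of_snake (fun k => 4 * uRadius k) (fun k j => uPoint k (j - 2 * uRadius k)) ⟨?_, ?_⟩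
    ?_ ?_ ?_
  · rintro ⟨k, i⟩ ⟨l, j⟩ h
    obtain rfl : k = l := by
      simpa only [uLevel_uPoint (hparam _ _)] using congrArg uLevel h
    have := congrArg uParam h
    simp only [uParam_uPoint (hparam _ _)] at this
    obtain rfl : i = j := by omega
    rfl
  · intro p
    have := abs_le.1 (abs_uParam_le p)
    refine ⟨⟨uLevel p, ⟨(uParam p + 2 * uRadius (uLevel p)).toNat, by omega⟩⟩, ?_⟩
    simp only
    rw [Int.toNat_of_nonneg (by omega), add_sub_cancel_right, uPoint_uLevel_uParam]
  · intro k j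
    have := uPoint_adj_uPoint (hparam k j.castSucc)
      (by simpa [sub_add_eq_add_sub] using hparam k j.succ)
    simpa [sub_add_eq_add_sub] using this
  · intro k
    simp only [Fin.val_zero, Nat.cast_zero, zero_sub, uPoint_left_foot]
    simp only [boxProd_adj, hasse_int_adj_iff, uRadius]
    omega
  · intro k
    have : ∀ l, ((4 * uRadius l : ℕ) : ℤ) - 2 * uRadius l = 2 * uRadius l := by omega
    simp only [Fin.val_last, this, uPoint_right_foot]
    simp only [boxProd_adj, hasse_int_adj_iff, uRadius]
    omega

section Group

variable {G : Type*} [Group G] {S : Set G} {s : G}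

theorem mulCayley_adj_zpow_zpow (hs : s ∈ S) {a b : ℤ} (hab : (hasse ℤ).Adj a b)
    (hne : s ^ a ≠ s ^ b) : (mulCayley S).Adj (s ^ a) (s ^ b) := by
  refine (mulCayley_adj S _ _).2 ⟨hne, ?_⟩
  rcases hasse_int_adj_iff.1 hab with rfl | rfl
  · exact .inl (by rwa [zpow_add_one, inv_mul_cancel_left])
  · exact .inr (by rwa [zpow_sub_one, mul_inv_rev, inv_inv, inv_mul_cancel_right])

theorem hasTwoWayHamiltonianPath_zpowers (hs : s ∈ S) (hinf : ¬IsOfFinOrder s) :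
    HasTwoWayHamiltonianPath ((mulCayley S).comap ((↑) : Subgroup.zpowers s → G)) := by
  have hinj := injective_zpow_iff_not_isOfFinOrder.2 hinf
  refine ⟨fun i => ⟨s ^ i, i, rfl⟩, ⟨fun i j h => hinj (congrArg Subtype.val h), ?_⟩, fun i => ?_⟩
  · rintro ⟨_, i, rfl⟩
    exact ⟨i, rfl⟩
  · exact mulCayley_adj_zpow_zpow hs (hasse_int_adj_iff.2 (.inl rfl)) (hinj.ne (by omega))

end Group

section CommGroup

variable {G : Type*} [CommGroup G] {S : Set G} {H : Subgroup G} {s : G}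

theorem hasTwoWayHamiltonianPath_sup_zpowers_of_hom {J : Type*} {K : SimpleGraph J} (hs : s ∈ S)
    (c : K →g hasse ℤ) (hinj : Injective fun j => (s : G ⧸ H) ^ c j)
    (hrange : ∀ a : ℤ, ∃ j, (s : G ⧸ H) ^ c j = (s : G ⧸ H) ^ a)
    (hK : HasTwoWayHamiltonianPath (hasse ℤ □ K))
    (hH : HasTwoWayHamiltonianPath ((mulCayley S).comap ((↑) : H → G))) :
    HasTwoWayHamiltonianPath
      ((mulCayley S).comap ((↑) : ↥(H ⊔ Subgroup.zpowers s) → G)) := by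
  let f : H × J → ↥(H ⊔ Subgroup.zpowers s) := fun q =>
    ⟨q.1 * s ^ c q.2, Subgroup.mul_mem_sup q.1.2 (Subgroup.zpow_mem_zpowers s _)⟩
  have hadj : ∀ {q r}, (((mulCayley S).comap ((↑) : H → G)) □ K).Adj q r →
      (mulCayley S).Adj (q.1 * s ^ c q.2) (r.1 * s ^ c r.2) := by
    rintro ⟨h, i⟩ ⟨l, j⟩ hqr
    rcases boxProd_adj.1 hqr with ⟨hhl, rfl : i = j⟩ | ⟨hij, rfl : h = l⟩
    · simpa only [mul_comm _ (s ^ c i), mulCayley_adj_mul_iff_right, comap_adj] using hhl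
    · rw [mulCayley_adj_mul_iff_right]
      refine mulCayley_adj_zpow_zpow hs (c.map_adj hij) fun heq => hij.ne (hinj ?_)
      exact congrArg ((↑) : G → G ⧸ H) heq
  refine (hH.boxProd hK).map ⟨f, hadj⟩ ⟨?_, ?_⟩
  · rintro ⟨h, i⟩ ⟨l, j⟩ heq
    have hval : (h : G) * s ^ c i = l * s ^ c j := congrArg Subtype.val heq
    obtain rfl : i = j := hinj <| by
      simpa [(QuotientGroup.eq_one_iff _).2 h.2, (QuotientGroup.eq_one_iff _).2 l.2] using
        congrArg ((↑) : G → G ⧸ H) hval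
    obtain rfl : h = l := Subtype.ext (mul_right_cancel hval)
    rfl
  · rintro ⟨g, hg⟩
    obtain ⟨h, hh, _, ⟨a, rfl⟩, rfl⟩ := Subgroup.mem_sup.1 hg
    obtain ⟨j, hj⟩ := hrange a
    have hmem : (s ^ c j)⁻¹ * s ^ a ∈ H := QuotientGroup.eq.1 hj
    refine ⟨(⟨h, hh⟩ * ⟨_, hmem⟩, j), Subtype.ext ?_⟩
    change h * ((s ^ c j)⁻¹ * s ^ a) * s ^ c j = h * s ^ a
    rw [mul_assoc, inv_mul_eq_div, div_mul_cancel]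

theorem hasTwoWayHamiltonianPath_sup_zpowers (hs : s ∈ S)
    (hH : HasTwoWayHamiltonianPath ((mulCayley S).comap ((↑) : H → G))) :
    HasTwoWayHamiltonianPath
      ((mulCayley S).comap ((↑) : ↥(H ⊔ Subgroup.zpowers s) → G)) := by
  by_cases hfin : IsOfFinOrder (s : G ⧸ H)
  · have : NeZero (orderOf (s : G ⧸ H)) := ⟨hfin.orderOf_pos.ne'⟩
    let c : pathGraph (orderOf (s : G ⧸ H)) →g hasse ℤ :=
      ⟨fun j => (j : ℕ), fun {i j} hij => by
        have := pathGraph_adj.1 hij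
        rw [hasse_int_adj_iff]
        omega⟩
    have hc : ∀ j, (s : G ⧸ H) ^ c j = finEquivZPowers hfin j := fun j => by
      simp [c, finEquivZPowers_apply]
    refine hasTwoWayHamiltonianPath_sup_zpowers_of_hom hs c ?_ ?_
      (hasTwoWayHamiltonianPath_strip _) hH
    · simpa only [hc] using! Subtype.val_injective.comp (finEquivZPowers hfin).injective
    · intro a
      obtain ⟨j, hj⟩ := (finEquivZPowers hfin).surjective ⟨_, Subgroup.zpow_mem_zpowers _ a⟩
      exact ⟨j, (hc j).trans (congrArg Subtype.val hj)⟩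
  · exact hasTwoWayHamiltonianPath_sup_zpowers_of_hom hs Hom.id
      (injective_zpow_iff_not_isOfFinOrder.2 hfin) (fun a => ⟨a, rfl⟩)
      hasTwoWayHamiltonianPath_plane hH

theorem exists_not_isOfFinOrder_of_closure_eq_top [Infinite G] [Group.FG G]
    (hgen : Subgroup.closure S = ⊤) : ∃ s ∈ S, ¬IsOfFinOrder s := by
  by_contra! htors
  have hle : Subgroup.closure S ≤ CommGroup.torsion G := (Subgroup.closure_le _).2 htors
  have htorG : IsMulTorsion G := fun g => hle (hgen ▸ Subgroup.mem_top g)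
  have := CommGroup.finite_of_fg_isMulTorsion G htorG
  exact not_finite G

instance [Group.FG G] : WellFoundedGT (Subgroup G) := by
  have : Module.Finite ℤ (Additive G) := Module.Finite.iff_addGroup_fg.2 inferInstance
  let e : Subgroup G ≃o Submodule ℤ (Additive G) :=
    Subgroup.toAddSubgroup.trans AddSubgroup.toIntSubmodule
  exact e.toOrderEmbedding.wellFoundedGT

end CommGroup

theorem cayley_two_way_hamiltonian_of_infinite_abelian_general {G : Type*} [CommGroup G]
    [Infinite G] [Group.FG G] (S : Set G) (hgen : Subgroup.closure S = ⊤) :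
    HasTwoWayHamiltonianPath (mulCayley S) := by
  obtain ⟨s₀, hs₀, hinf⟩ := exists_not_isOfFinOrder_of_closure_eq_top hgen
  obtain ⟨H, hH, hmax⟩ := exists_maximal_of_wellFoundedGT
    (fun H : Subgroup G => HasTwoWayHamiltonianPath ((mulCayley S).comap ((↑) : H → G)))
    ⟨_, hasTwoWayHamiltonianPath_zpowers hs₀ hinf⟩
  have hSH : S ⊆ H := fun s hs => Subgroup.zpowers_le.1 <|
    le_sup_right.trans (hmax (hasTwoWayHamiltonianPath_sup_zpowers hs hH) le_sup_left)
  obtain rfl : H = ⊤ := top_le_iff.1 (hgen ▸ (Subgroup.closure_le H).2 hSH)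
  exact hH.map ⟨(↑), id⟩ Subgroup.topEquiv.bijective

/-- every Cayley graph of an infinite finitely generated abelian group
has a two-way hamiltonian path. -/
theorem cayley_two_way_hamiltonian_of_infinite_abelian
    {G : Type*} [CommGroup G] [Infinite G] (S : Set G) (hSfin : S.Finite)
    (h1 : (1 : G) ∉ S) (hS : S⁻¹ = S) (hgen : Subgroup.closure S = ⊤) :
    ∃ v : ℤ → G, Function.Bijective v ∧
      ∀ i : ℤ, (v i)⁻¹ * v (i + 1) ∈ S := by
  have : Group.FG G := Group.fg_iff.2 ⟨S, hgen, hSfin⟩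
  obtain ⟨v, hv, hadj⟩ := cayley_two_way_hamiltonian_of_infinite_abelian_general S hgen
  refine ⟨v, hv, fun i => ((mulCayley_adj S _ _).1 (hadj i)).2.elim id fun h => ?_⟩
  rwa [← hS, Set.mem_inv, mul_inv_rev, inv_inv]
end

section
/- Let X be a simple graph with countably infinite vertex set and let G be a group acting faithfully and transitively on X by automorphisms, whose commutator subgroup G' is cyclic of finite order n. Suppose v : ℤ → V(X) satisfies: v(i) is adjacent to v(i+1) for all i ∈ ℤ, and the map i ↦ G'·v(i) is a two-way hamiltonian path of the quotient graph X/G' (it is injective, its image is the set of all G'-orbits, and consecutive orbits G'·v(i), G'·v(i+1) are distinct). Then the map G' × ℤ → V(X) given by (g,i) ↦ g·v(i) is a bijection; in particular, the n translated paths i ↦ g·v(i) for g ∈ G' are pairwise vertex-disjoint two-way paths in X whose vertex sets partition V(X). -/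
/-!
Every subgroup of a cyclic normal subgroup `N` of `G` is normal in `G`; in particular the stabilizer
in `N` of a vertex is. A normal subgroup of a transitive group that fixes one point fixes all of
them, so by faithfulness these stabilizers are trivial: `N` acts freely. The translates of a family
of points representing each `N`-orbit exactly once then cover every point exactly once.
-/

open MulAction

theorem characteristic_of_isCyclic {C : Type*} [Group C] [IsCyclic C] (K : Subgroup C) :
    K.Characteristic := by
  refine Subgroup.characteristic_iff_le_comap.2 fun φ c hc ↦ ?_
  obtain ⟨m, hm⟩ := MonoidHom.map_cyclic φ.toMonoidHom
  rw [Subgroup.mem_comap, hm]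
  exact K.zpow_mem hc m

section Action

variable {G V : Type*} [Group G] [MulAction G V]

theorem normalCore_stabilizer_eq_ker_toPermHom [IsPretransitive G V] (x : V) :
    (stabilizer G x).normalCore = (toPermHom G V).ker := by
  apply le_antisymm
  · intro g hg
    refine Equiv.ext fun y ↦ ?_
    obtain ⟨h, rfl⟩ := exists_smul_eq G x y
    have hfix : (h⁻¹ * g * h⁻¹⁻¹) • x = x := hg h⁻¹
    rwa [inv_inv, mul_smul, mul_smul, inv_smul_eq_iff] at hfix
  · exact Subgroup.normal_le_normalCore.2 fun g hg ↦ Equiv.congr_fun hg x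

theorem isCancelSMul_of_isCyclic_of_normal [IsPretransitive G V] (N : Subgroup G) [N.Normal]
    [IsCyclic N] [FaithfulSMul N V] : IsCancelSMul N V := by
  refine isCancelSMul_iff_stabilizer_eq_bot.2 fun x ↦ (Subgroup.eq_bot_iff_forall _).2 fun g hg ↦ ?_
  have := characteristic_of_isCyclic (stabilizer N x)
  have hle : (stabilizer N x).map N.subtype ≤ (toPermHom G V).ker := by
    rw [← normalCore_stabilizer_eq_ker_toPermHom x, Subgroup.normal_le_normalCore]
    exact Subgroup.map_le_iff_le_comap.2 fun _ h ↦ h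
  have hker : toPermHom G V g = 1 := hle (Subgroup.mem_map_of_mem N.subtype hg)
  refine eq_of_smul_eq_smul fun y : V ↦ ?_
  rw [one_smul]
  exact Equiv.congr_fun hker y

theorem bijective_smul_of_orbit_representatives [IsCancelSMul G V] {ι : Type*} {v : ι → V}
    (hinj : Function.Injective fun i ↦ orbit G (v i)) (hsurj : ∀ w, ∃ i, w ∈ orbit G (v i)) :
    Function.Bijective fun q : G × ι ↦ q.1 • v q.2 := by
  constructor
  · rintro ⟨g, i⟩ ⟨k, j⟩ (h : g • v i = k • v j)
    obtain rfl : i = j := hinj <| by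
      calc orbit G (v i) = orbit G (g • v i) := (orbit_smul g (v i)).symm
        _ = orbit G (k • v j) := by rw [h]
        _ = orbit G (v j) := orbit_smul k (v j)
    rw [IsCancelSMul.right_cancel g k (v i) h]
  · intro w
    obtain ⟨i, g, hg⟩ := hsurj w
    exact ⟨(g, i), hg⟩

end Action

/-- The successor map `s = (· + 1)` on `ℤ`, `ℕ` or `ZMod m` makes `v` a two-way path, a one-way path
or a closed walk, respectively. -/
theorem lifts_of_quotient_hamiltonian_path_partition_general
    {V G ι : Type*} [Group G] [MulAction G V] [IsPretransitive G V] (X : SimpleGraph V)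
    (N : Subgroup G) [N.Normal] [IsCyclic N] [FaithfulSMul N V]
    (hauto : ∀ (g : N) (u w : V), X.Adj u w → X.Adj (g • u) (g • w))
    (s : ι → ι) (v : ι → V) (hadj : ∀ i, X.Adj (v i) (v (s i)))
    (hinj : Function.Injective fun i ↦ orbit N (v i)) (hsurj : ∀ w, ∃ i, w ∈ orbit N (v i)) :
    Function.Bijective (fun q : N × ι ↦ q.1 • v q.2) ∧
      ∀ (g : N) (i : ι), X.Adj (g • v i) (g • v (s i)) :=
  have := isCancelSMul_of_isCyclic_of_normal (V := V) N
  ⟨bijective_smul_of_orbit_representatives hinj hsurj, fun g i ↦ hauto g _ _ (hadj i)⟩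

/-- Let `X` be a simple graph on a countably infinite vertex set and
`G` a group acting faithfully and transitively on `X` by graph automorphisms whose
commutator subgroup `G'` is cyclic of finite order `n`. If `v : ℤ → V` traces a
path in `X` that projects to a two-way hamiltonian path of the quotient `X/G'`
(the orbit map `i ↦ G'·v(i)` is injective and hits every `G'`-orbit), then
`(g, i) ↦ g • v(i)` is a bijection `G' × ℤ → V`; in particular the `n` translates
of the path are pairwise disjoint two-way paths partitioning `V`. -/
theorem lifts_of_quotient_hamiltonian_path_partition
    {V : Type*} [Countable V] [Infinite V] (X : SimpleGraph V)
    (G : Type*) [Group G] [MulAction G V]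
    (hauto : ∀ (g : G) (u w : V), X.Adj u w → X.Adj (g • u) (g • w))
    (hfaithful : ∀ g : G, (∀ x : V, g • x = x) → g = 1)
    (htrans : ∀ u w : V, ∃ g : G, g • u = w)
    (n : ℕ) (hn : 0 < n) (hcyc : IsCyclic (commutator G))
    (hcard : Nat.card (commutator G) = n)
    (v : ℤ → V)
    (hadj : ∀ i : ℤ, X.Adj (v i) (v (i + 1)))
    (hinj : ∀ i j : ℤ,
      MulAction.orbit (commutator G) (v i) = MulAction.orbit (commutator G) (v j) → i = j)
    (hsurj : ∀ w : V, ∃ i : ℤ, w ∈ MulAction.orbit (commutator G) (v i))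
    (hconsec : ∀ i : ℤ,
      MulAction.orbit (commutator G) (v i) ≠ MulAction.orbit (commutator G) (v (i + 1))) :
    Function.Bijective (fun q : commutator G × ℤ => (q.1 : G) • v q.2) ∧
      ∀ (g : commutator G) (i : ℤ), X.Adj ((g : G) • v i) ((g : G) • v (i + 1)) := by
  have : IsPretransitive G V := ⟨htrans⟩
  have : FaithfulSMul G V := faithfulSMul_iff.2 hfaithful
  exact lifts_of_quotient_hamiltonian_path_partition_general X (commutator G)
    (fun g ↦ hauto g) (· + 1) v hadj (fun i j ↦ hinj i j) hsurj
end
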